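/- arXiv:1608.02792 — 7 statements merged into one kernel-verified Lean document; each statement's English description precedes it below -/
import Mathlib

section
/- Consider the Kronecker-structured dictionary learning problem with N i.i.d. observations y_n = D x_n + η_n, where the true dictionary D lies in X(D₀,r) for a fixed reference dictionary D₀ in the Kronecker dictionary class, and the coefficient vectors x_n are i.i.d. with mean zero and covariance matrix Σ_x. Then for every t with 0 < t < 1 and every c₁ with 0 < c₁ < (1−t)/(8 log 2), the minimax risk satisfies ε* ≥ (t/4) · min{ p, r²/(2K), (σ²/(4 N K ‖Σ_x‖₂)) · ( c₁ · (Σ_{k=1}^K (m_k − 1) p_k) − (K/2) log₂(2K) − 2 ) }. -/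
open MeasureTheory ProbabilityTheory Matrix Real
open scoped NNReal ENNReal

noncomputable section

def frobNormSq {m n : Type*} [Fintype m] [Fintype n] (A : Matrix m n ℝ) : ℝ :=
  ∑ i, ∑ j, A i j ^ 2

def frobNorm {m n : Type*} [Fintype m] [Fintype n] (A : Matrix m n ℝ) : ℝ :=
  Real.sqrt (frobNormSq A)

def kronFamily {K : ℕ} {m p : Fin K → ℕ} (D : ∀ k, Matrix (Fin (m k)) (Fin (p k)) ℝ) :
    Matrix (∀ k, Fin (m k)) (∀ k, Fin (p k)) ℝ :=
  Matrix.of fun i j => ∏ k, D k (i k) (j k)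

def hasUnitColumns {m n : Type*} [Fintype m] (A : Matrix m n ℝ) : Prop :=
  ∀ j, ∑ i, A i j ^ 2 = 1

def ksClass (K : ℕ) (m p : Fin K → ℕ) : Set (Matrix (∀ k, Fin (m k)) (∀ k, Fin (p k)) ℝ) :=
  {D | ∃ Dk : ∀ k, Matrix (Fin (m k)) (Fin (p k)) ℝ,
    (∀ k, hasUnitColumns (Dk k)) ∧ D = kronFamily Dk}

def ksBall (K : ℕ) (m p : Fin K → ℕ)
    (D0 : Matrix (∀ k, Fin (m k)) (∀ k, Fin (p k)) ℝ) (r : ℝ) :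
    Set (Matrix (∀ k, Fin (m k)) (∀ k, Fin (p k)) ℝ) :=
  {D ∈ ksClass K m p | frobNorm (D - D0) < r}

def specNorm {m n : Type*} [Fintype m] [Fintype n] [DecidableEq n] (A : Matrix m n ℝ) : ℝ :=
  ‖LinearMap.toContinuousLinearMap (Matrix.toEuclideanLin A)‖

def sampleLaw {idxM idxP : Type*} [Fintype idxM] [Fintype idxP]
    (D : Matrix idxM idxP ℝ) (ν : Measure (idxP → ℝ)) (σ : ℝ≥0) : Measure (idxM → ℝ) :=
  Measure.map (fun z : (idxP → ℝ) × (idxM → ℝ) => D.mulVec z.1 + z.2)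
    (ν.prod (Measure.pi fun _ : idxM => gaussianReal 0 (σ ^ 2)))

def obsLaw {idxM idxP : Type*} [Fintype idxM] [Fintype idxP] (N : ℕ)
    (D : Matrix idxM idxP ℝ) (ν : Measure (idxP → ℝ)) (σ : ℝ≥0) :
    Measure (Fin N → idxM → ℝ) :=
  Measure.pi fun _ : Fin N => sampleLaw D ν σ

instance matrixMeasurableSpace {m n α : Type*} [MeasurableSpace α] :
    MeasurableSpace (Matrix m n α) :=
  (inferInstance : MeasurableSpace (m → n → α))

def minimaxRisk {idxM idxP : Type*} [Fintype idxM] [Fintype idxP] (N : ℕ)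
    (ν : Measure (idxP → ℝ)) (σ : ℝ≥0) (𝒟 : Set (Matrix idxM idxP ℝ)) : ℝ≥0∞ :=
  ⨅ (est : (Fin N → idxM → ℝ) → Matrix idxM idxP ℝ) (_ : Measurable est),
    ⨆ D ∈ 𝒟, ∫⁻ Y, ENNReal.ofReal (frobNormSq (est Y - D)) ∂ obsLaw N D ν σ

lemma pi_withDensity_aux {ι : Type*} [Fintype ι] {X : ι → Type*} [∀ i, MeasurableSpace (X i)]
    (μ : ∀ i, Measure (X i)) [∀ i, IsProbabilityMeasure (μ i)] (f : ∀ i, X i → ℝ≥0∞)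
    (hf : ∀ i, Measurable (f i)) [∀ i, SigmaFinite ((μ i).withDensity (f i))] :
    Measure.pi (fun i => (μ i).withDensity (f i)) =
      (Measure.pi μ).withDensity (fun x => ∏ i, f i (x i)) := by
  refine Measure.pi_eq fun s hs => ?_
  rw [withDensity_apply _ (MeasurableSet.univ_pi hs), ← lintegral_indicator (MeasurableSet.univ_pi hs)]
  have h1 : ∀ x : ∀ i, X i, (Set.univ.pi s).indicator (fun x => ∏ i, f i (x i)) x =
      ∏ i, ((s i).indicator (f i)) (x i) := by
    intro x
    classical
    by_cases hx : x ∈ Set.univ.pi s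
    · rw [Set.indicator_of_mem hx]
      refine Finset.prod_congr rfl fun i _ => ?_
      rw [Set.indicator_of_mem (hx i (Set.mem_univ i))]
    · rw [Set.indicator_of_notMem hx]
      simp only [Set.mem_pi, Set.mem_univ, true_implies, not_forall] at hx
      obtain ⟨i, hi⟩ := hx
      symm
      exact Finset.prod_eq_zero (Finset.mem_univ i) (Set.indicator_of_notMem hi _)
  simp_rw [h1]
  have hm : ∀ i, Measurable ((s i).indicator (f i)) := fun i => (hf i).indicator (hs i)
  rw [lintegral_prod_eq_prod_lintegral_of_indepFun Finset.univ
    (fun i (x : ∀ i, X i) => ((s i).indicator (f i)) (x i))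
    (iIndepFun_pi fun i => (hm i).aemeasurable) (fun i => (hm i).comp (measurable_pi_apply i))]
  refine Finset.prod_congr rfl fun i _ => ?_
  rw [withDensity_apply _ (hs i), ← lintegral_indicator (hs i),
    ← (measurePreserving_eval μ i).lintegral_comp (hm i)]

lemma gauss_density (a c : ℝ) (v : ℝ≥0) (hv : v ≠ 0) :
    gaussianReal a v = (gaussianReal c v).withDensity
      (fun x => ENNReal.ofReal (Real.exp ((a - c) * (2 * x - a - c) / (2 * v)))) := by
  rw [gaussianReal_of_var_ne_zero _ hv, gaussianReal_of_var_ne_zero _ hv,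
    ← withDensity_mul _ (measurable_gaussianPDF _ _) (by fun_prop)]
  congr 1
  ext x
  have hv' : (v : ℝ) ≠ 0 := by exact_mod_cast hv
  rw [Pi.mul_apply, gaussianPDF, gaussianPDF, ← ENNReal.ofReal_mul (gaussianPDFReal_nonneg _ _ _)]
  congr 1
  rw [gaussianPDFReal, gaussianPDFReal, mul_assoc (√(2 * π * (v : ℝ)))⁻¹, ← Real.exp_add]
  congr 2
  field_simp
  ring

def gpi (N : ℕ) {M : Type*} [Fintype M] (v : ℝ≥0) (a : Fin N → M → ℝ) : Measure (Fin N → M → ℝ) :=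
  Measure.pi fun n => Measure.pi fun i => gaussianReal (a n i) v

lemma gpi_density (N : ℕ) {M : Type*} [Fintype M] (v : ℝ≥0) (hv : v ≠ 0) (a c : Fin N → M → ℝ) :
    gpi N v a = (gpi N v c).withDensity (fun y => ENNReal.ofReal
      (Real.exp (∑ n, ∑ i, (a n i - c n i) * (2 * y n i - a n i - c n i) / (2 * v)))) := by
  have h1 : ∀ n, (Measure.pi fun i => gaussianReal (a n i) v) =
      (Measure.pi fun i => gaussianReal (c n i) v).withDensity
        (fun y => ∏ i, ENNReal.ofReal
          (Real.exp ((a n i - c n i) * (2 * y i - a n i - c n i) / (2 * v)))) := by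
    intro n
    have : ∀ i, SigmaFinite ((gaussianReal (c n i) v).withDensity
      (fun x => ENNReal.ofReal (Real.exp ((a n i - c n i) * (2 * x - a n i - c n i) / (2 * v))))) := by
      intro i; rw [← gauss_density _ _ _ hv]; infer_instance
    rw [← pi_withDensity_aux (fun i => gaussianReal (c n i) v)
      (fun i x => ENNReal.ofReal (Real.exp ((a n i - c n i) * (2 * x - a n i - c n i) / (2 * v))))
      (fun i => by fun_prop)]
    congr 1
    ext1 i
    exact gauss_density _ _ _ hv
  unfold gpi
  have : ∀ n, SigmaFinite ((Measure.pi fun i => gaussianReal (c n i) v).withDensity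
        (fun y => ∏ i, ENNReal.ofReal
          (Real.exp ((a n i - c n i) * (2 * y i - a n i - c n i) / (2 * v))))) := by
    intro n; rw [← h1 n]; infer_instance
  simp_rw [h1]
  rw [pi_withDensity_aux _ _ (fun n => by fun_prop)]
  congr 1
  ext y
  rw [Real.exp_sum, ENNReal.ofReal_prod_of_nonneg (fun _ _ => (Real.exp_pos _).le)]
  refine Finset.prod_congr rfl fun n _ => ?_
  rw [Real.exp_sum, ENNReal.ofReal_prod_of_nonneg (fun _ _ => (Real.exp_pos _).le)]

instance gpi_prob (N : ℕ) {M : Type*} [Fintype M] (v : ℝ≥0) (a : Fin N → M → ℝ) :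
    IsProbabilityMeasure (gpi N v a) := by
  unfold gpi; infer_instance

lemma two_point_pointwise (x y w : ℝ) :
    4 * (1 + (x + y) / 2) ≤ (w - 1) ^ 2 * Real.exp x + (w + 1) ^ 2 * Real.exp y
      + Real.exp x + Real.exp y := by
  set p := Real.exp (x / 2)
  set q := Real.exp (y / 2)
  have hp : Real.exp x = p ^ 2 := by rw [← Real.exp_nat_mul]; congr 1; push_cast; ring
  have hq : Real.exp y = q ^ 2 := by rw [← Real.exp_nat_mul]; congr 1; push_cast; ring
  have h : 1 + (x + y) / 2 ≤ p * q := by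
    rw [← Real.exp_add]
    have := Real.add_one_le_exp (x / 2 + y / 2)
    linarith
  rw [hp, hq]
  nlinarith [sq_nonneg (p - q), sq_nonneg (w * (p+q) - (p - q)), sq_nonneg (w * p - (p - q)), sq_nonneg (w * p - p + w * q + q), sq_nonneg (w*p - w*q), sq_nonneg (w*p+w*q)]

lemma two_point (N : ℕ) {M : Type*} [Fintype M] (v : ℝ≥0) (hv : v ≠ 0) (a b : Fin N → M → ℝ)
    (w : (Fin N → M → ℝ) → ℝ) (hw : Measurable w) :
    4 ≤ ∫⁻ y, ENNReal.ofReal ((w y - 1) ^ 2) ∂ gpi N v a +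
      ∫⁻ y, ENNReal.ofReal ((w y + 1) ^ 2) ∂ gpi N v b + 2 +
      ENNReal.ofReal (∑ n, ∑ i, (a n i - b n i) ^ 2 / (2 * v)) := by
  have hv' : (v : ℝ) ≠ 0 := by exact_mod_cast hv
  set c : Fin N → M → ℝ := fun n i => (a n i + b n i) / 2 with hc
  set S := ∑ n, ∑ i, (a n i - b n i) ^ 2 / (2 * (v : ℝ)) with hS
  have hS0 : 0 ≤ S := Finset.sum_nonneg fun n _ => Finset.sum_nonneg fun i _ => by positivity
  set ea : (Fin N → M → ℝ) → ℝ := fun y =>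
    ∑ n, ∑ i, (a n i - c n i) * (2 * y n i - a n i - c n i) / (2 * v) with hea
  set eb : (Fin N → M → ℝ) → ℝ := fun y =>
    ∑ n, ∑ i, (b n i - c n i) * (2 * y n i - b n i - c n i) / (2 * v) with heb
  have hma : Measurable ea := by rw [hea]; fun_prop
  have hmb : Measurable eb := by rw [heb]; fun_prop
  have hda : gpi N v a = (gpi N v c).withDensity (fun y => ENNReal.ofReal (Real.exp (ea y))) :=
    gpi_density N v hv a c
  have hdb : gpi N v b = (gpi N v c).withDensity (fun y => ENNReal.ofReal (Real.exp (eb y))) :=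
    gpi_density N v hv b c
  have hsum : ∀ y, ea y + eb y = - (S / 2) := by
    intro y
    rw [hea, heb, hS]
    simp only
    rw [Finset.sum_div, ← Finset.sum_neg_distrib, ← Finset.sum_add_distrib]
    refine Finset.sum_congr rfl fun n _ => ?_
    rw [Finset.sum_div, ← Finset.sum_neg_distrib, ← Finset.sum_add_distrib]
    refine Finset.sum_congr rfl fun i _ => ?_
    simp only [hc]
    field_simp
    ring
  have h1a : ∫⁻ y, ENNReal.ofReal (Real.exp (ea y)) ∂ gpi N v c = 1 := by
    have := measure_univ (μ := gpi N v a)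
    rw [hda, withDensity_apply _ MeasurableSet.univ, Measure.restrict_univ] at this
    exact this
  have h1b : ∫⁻ y, ENNReal.ofReal (Real.exp (eb y)) ∂ gpi N v c = 1 := by
    have := measure_univ (μ := gpi N v b)
    rw [hdb, withDensity_apply _ MeasurableSet.univ, Measure.restrict_univ] at this
    exact this
  have key : ∫⁻ _y, 4 ∂ gpi N v c ≤ ∫⁻ y, (ENNReal.ofReal (Real.exp (ea y)) * ENNReal.ofReal ((w y - 1) ^ 2)
      + ENNReal.ofReal (Real.exp (eb y)) * ENNReal.ofReal ((w y + 1) ^ 2)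
      + (ENNReal.ofReal (Real.exp (ea y)) + ENNReal.ofReal (Real.exp (eb y)))
      + ENNReal.ofReal S) ∂ gpi N v c := by
    refine lintegral_mono fun y => ?_
    rw [← ENNReal.ofReal_mul (Real.exp_pos _).le, ← ENNReal.ofReal_mul (Real.exp_pos _).le,
      ← ENNReal.ofReal_add (by positivity) (by positivity),
      ← ENNReal.ofReal_add (by positivity) (by positivity),
      ← ENNReal.ofReal_add (by positivity) (by positivity),
      ← ENNReal.ofReal_add (by positivity) (by positivity)]
    rw [show (4 : ℝ≥0∞) = ENNReal.ofReal 4 by norm_num]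
    apply ENNReal.ofReal_le_ofReal
    have := two_point_pointwise (ea y) (eb y) (w y)
    rw [hsum y] at this
    linarith
  rw [lintegral_const, measure_univ, mul_one, lintegral_add_left (by fun_prop),
    lintegral_add_left (by fun_prop), lintegral_add_left (by fun_prop),
    lintegral_add_left (by fun_prop), lintegral_const, measure_univ, mul_one, h1a, h1b] at key
  rw [hda, hdb, lintegral_withDensity_eq_lintegral_mul _ (by fun_prop) (by fun_prop),
    lintegral_withDensity_eq_lintegral_mul _ (by fun_prop) (by fun_prop)]
  simp only [Pi.mul_apply]
  rw [one_add_one_eq_two] at key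
  exact key

lemma gpi_shift (N : ℕ) {M : Type*} [Fintype M] (v : ℝ≥0) (a : Fin N → M → ℝ) :
    (Measure.pi fun _ : Fin N => Measure.pi fun _ : M => gaussianReal 0 v).map
      (fun e n => a n + e n) = gpi N v a := by
  unfold gpi
  have h : ∀ n, (Measure.pi fun _ : M => gaussianReal 0 v).map (fun e => a n + e) =
      Measure.pi fun i => gaussianReal (a n i) v := by
    intro n
    have h2 : ∀ i, (gaussianReal 0 v).map (fun e => a n i + e) = gaussianReal (a n i) v := by
      intro i
      rw [gaussianReal_map_const_add, zero_add]
    have : ∀ i, SigmaFinite ((gaussianReal 0 v).map (fun e => a n i + e)) := by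
      intro i; rw [h2]; infer_instance
    have h3 := Measure.pi_map_pi (μ := fun _ : M => gaussianReal 0 v)
      (f := fun i e => a n i + e) (fun i => by fun_prop)
    simp_rw [h2] at h3
    exact h3
  have : ∀ n, SigmaFinite ((Measure.pi fun _ : M => gaussianReal 0 v).map (fun e => a n + e)) := by
    intro n; rw [h]; infer_instance
  have h3 := Measure.pi_map_pi (μ := fun _ : Fin N => Measure.pi fun _ : M => gaussianReal 0 v)
      (f := fun n e => a n + e) (fun i => by fun_prop)
  simp_rw [h] at h3
  exact h3

lemma measurable_mulVec_aux {M P : Type*} [Fintype M] [Fintype P] (D : Matrix M P ℝ) :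
    Measurable (fun x : P → ℝ => D.mulVec x) := by
  refine measurable_pi_lambda _ fun i => ?_
  simp only [Matrix.mulVec, dotProduct]
  fun_prop

lemma obs_lintegral (N : ℕ) {M P : Type*} [Fintype M] [Fintype P] (D : Matrix M P ℝ)
    (ν : Measure (P → ℝ)) [IsProbabilityMeasure ν] (σ : ℝ≥0)
    (F : (Fin N → M → ℝ) → ℝ≥0∞) (hF : Measurable F) :
    ∫⁻ Y, F Y ∂ obsLaw N D ν σ =
      ∫⁻ X, ∫⁻ Y, F Y ∂ gpi N (σ ^ 2) (fun n => D.mulVec (X n)) ∂ (Measure.pi fun _ : Fin N => ν) := by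
  unfold obsLaw sampleLaw
  have hD := measurable_mulVec_aux D
  have hg : Measurable (fun z : (P → ℝ) × (M → ℝ) => D.mulVec z.1 + z.2) :=
    (hD.comp measurable_fst).add measurable_snd
  have : IsProbabilityMeasure (Measure.map (fun z : (P → ℝ) × (M → ℝ) => D.mulVec z.1 + z.2)
    (ν.prod (Measure.pi fun _ : M => gaussianReal 0 (σ ^ 2)))) :=
    Measure.isProbabilityMeasure_map hg.aemeasurable
  have hmap := Measure.pi_map_pi
    (μ := fun _ : Fin N => ν.prod (Measure.pi fun _ : M => gaussianReal 0 (σ ^ 2)))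
    (f := fun _ z => D.mulVec z.1 + z.2) (fun i => hg.aemeasurable)
  rw [← hmap, lintegral_map hF (by fun_prop)]
  have hmp := measurePreserving_arrowProdEquivProdArrow (P → ℝ) (M → ℝ) (Fin N) (fun _ => ν)
    (fun _ => Measure.pi fun _ : M => gaussianReal 0 (σ ^ 2))
  have hG : Measurable (fun z : (Fin N → P → ℝ) × (Fin N → M → ℝ) =>
      F (fun n => D.mulVec (z.1 n) + z.2 n)) := by
    refine hF.comp (measurable_pi_lambda _ fun n => ?_)
    exact (hD.comp ((measurable_pi_apply n).comp measurable_fst)).add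
      ((measurable_pi_apply n).comp measurable_snd)
  have h2 := hmp.lintegral_comp hG
  rw [lintegral_prod _ hG.aemeasurable] at h2
  refine h2.trans ?_
  refine lintegral_congr fun X => ?_
  rw [← gpi_shift, lintegral_map hF (by fun_prop)]

lemma measurable_inner_aux (N : ℕ) {M P : Type*} [Fintype M] [Fintype P] (D : Matrix M P ℝ)
    (v : ℝ≥0) (F : (Fin N → M → ℝ) → ℝ≥0∞) (hF : Measurable F) :
    Measurable (fun X : Fin N → P → ℝ => ∫⁻ Y, F Y ∂ gpi N v (fun n => D.mulVec (X n))) := by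
  have hD := measurable_mulVec_aux D
  have hG : Measurable (fun z : (Fin N → P → ℝ) × (Fin N → M → ℝ) =>
      F (fun n => D.mulVec (z.1 n) + z.2 n)) := by
    refine hF.comp (measurable_pi_lambda _ fun n => ?_)
    exact (hD.comp ((measurable_pi_apply n).comp measurable_fst)).add
      ((measurable_pi_apply n).comp measurable_snd)
  have h := hG.lintegral_prod_right'
    (ν := Measure.pi fun _ : Fin N => Measure.pi fun _ : M => gaussianReal 0 v)
  convert h using 2 with X
  rw [← gpi_shift, lintegral_map hF (by fun_prop)]

lemma second_moment {M P : Type*} [Fintype M] [Fintype P] [DecidableEq P] (E : Matrix M P ℝ)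
    (ν : Measure (P → ℝ)) (Sigx : Matrix P P ℝ)
    (hint2 : ∀ i j, Integrable (fun x : P → ℝ => x i * x j) ν)
    (hcov : ∀ i j, ∫ x, x i * x j ∂ν = Sigx i j) (v : ℝ) (hv : 0 ≤ v) :
    ∫⁻ x, ENNReal.ofReal (∑ i, (E.mulVec x i) ^ 2 / v) ∂ν ≤
      ENNReal.ofReal (specNorm Sigx * frobNormSq E / v) := by
  have hexp : ∀ x : P → ℝ, ∑ i, (E.mulVec x i) ^ 2 / v =
      ∑ i, ∑ j, ∑ j', E i j * E i j' / v * (x j * x j') := by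
    intro x
    refine Finset.sum_congr rfl fun i _ => ?_
    simp only [Matrix.mulVec, dotProduct]
    rw [sq, Finset.sum_mul_sum, Finset.sum_div]
    refine Finset.sum_congr rfl fun j _ => ?_
    rw [Finset.sum_div]
    refine Finset.sum_congr rfl fun j' _ => ?_
    ring
  have hI : Integrable (fun x : P → ℝ => ∑ i, (E.mulVec x i) ^ 2 / v) ν := by
    simp_rw [hexp]
    exact integrable_finsetSum _ fun i _ => integrable_finsetSum _ fun j _ =>
      integrable_finsetSum _ fun j' _ => (hint2 j j').const_mul _
  rw [← ofReal_integral_eq_lintegral_ofReal hI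
    (Filter.Eventually.of_forall fun x => Finset.sum_nonneg fun i _ => by positivity)]
  apply ENNReal.ofReal_le_ofReal
  simp_rw [hexp]
  rw [integral_finsetSum _ fun i _ => integrable_finsetSum _ fun j _ =>
      integrable_finsetSum _ fun j' _ => (hint2 j j').const_mul _]
  rw [frobNormSq, Finset.mul_sum, Finset.sum_div]
  refine Finset.sum_le_sum fun i _ => ?_
  rw [integral_finsetSum _ fun j _ =>
      integrable_finsetSum _ fun j' _ => (hint2 j j').const_mul _]
  have h1 : ∀ j, ∫ x, ∑ j', E i j * E i j' / v * (x j * x j') ∂ν =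
      ∑ j', E i j * E i j' / v * Sigx j j' := by
    intro j
    rw [integral_finsetSum _ fun j' _ => (hint2 j j').const_mul _]
    refine Finset.sum_congr rfl fun j' _ => ?_
    rw [integral_const_mul, hcov]
  simp_rw [h1]
  set e : EuclideanSpace ℝ P := WithLp.toLp 2 (E i) with he
  have h2 : ∑ j, ∑ j', E i j * E i j' / v * Sigx j j' =
      inner ℝ e (Matrix.toEuclideanLin Sigx e) / v := by
    rw [PiLp.inner_apply, Finset.sum_div]
    refine Finset.sum_congr rfl fun j _ => ?_
    simp only [Matrix.toEuclideanLin, he]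
    simp [Matrix.mulVec, dotProduct, Finset.sum_mul, Finset.sum_div]
    refine Finset.sum_congr rfl fun j' _ => ?_
    ring
  rw [h2]
  apply div_le_div_of_nonneg_right _ hv
  have h3 := real_inner_le_norm e (Matrix.toEuclideanLin Sigx e)
  have h4 := (LinearMap.toContinuousLinearMap (Matrix.toEuclideanLin Sigx)).le_opNorm e
  have h5 : ∑ j, E i j ^ 2 = ‖e‖ ^ 2 := by
    rw [EuclideanSpace.real_norm_sq_eq]
  rw [h5]
  change ‖Matrix.toEuclideanLin Sigx e‖ ≤ specNorm Sigx * ‖e‖ at h4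
  nlinarith [norm_nonneg e]

lemma pair_bound (N : ℕ) {M P : Type*} [Fintype M] [Fintype P] [DecidableEq P]
    (D D' : Matrix M P ℝ) (ν : Measure (P → ℝ)) [IsProbabilityMeasure ν] (Sigx : Matrix P P ℝ)
    (hint2 : ∀ i j, Integrable (fun x : P → ℝ => x i * x j) ν)
    (hcov : ∀ i j, ∫ x, x i * x j ∂ν = Sigx i j) (σ : ℝ≥0) (hσ : 0 < σ)
    (hsmall : N * (specNorm Sigx * frobNormSq (D - D') / (2 * (σ : ℝ) ^ 2)) ≤ 1)
    (w : (Fin N → M → ℝ) → ℝ) (hw : Measurable w) :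
    1 ≤ ∫⁻ y, ENNReal.ofReal ((w y - 1) ^ 2) ∂ obsLaw N D ν σ +
      ∫⁻ y, ENNReal.ofReal ((w y + 1) ^ 2) ∂ obsLaw N D' ν σ := by
  rw [obs_lintegral _ _ _ _ _ (by fun_prop), obs_lintegral _ _ _ _ _ (by fun_prop)]
  set μ := (Measure.pi fun _ : Fin N => ν)
  have hv : σ ^ 2 ≠ 0 := by positivity
  set A : (Fin N → P → ℝ) → ℝ≥0∞ := fun X =>
    ∫⁻ y, ENNReal.ofReal ((w y - 1) ^ 2) ∂ gpi N (σ ^ 2) (fun n => D.mulVec (X n))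
  set B : (Fin N → P → ℝ) → ℝ≥0∞ := fun X =>
    ∫⁻ y, ENNReal.ofReal ((w y + 1) ^ 2) ∂ gpi N (σ ^ 2) (fun n => D'.mulVec (X n))
  set Q : (Fin N → P → ℝ) → ℝ≥0∞ := fun X => ∑ n, ENNReal.ofReal
    (∑ i, ((D - D').mulVec (X n) i) ^ 2 / (2 * (σ : ℝ) ^ 2))
  have hDD := measurable_mulVec_aux (D - D')
  have hq : Measurable (fun x : P → ℝ => ENNReal.ofReal
    (∑ i, ((D - D').mulVec x i) ^ 2 / (2 * (σ : ℝ) ^ 2))) := by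
    refine ENNReal.measurable_ofReal.comp (Finset.measurable_sum _ fun i _ => ?_)
    exact (((measurable_pi_apply i).comp hDD).pow_const 2).div_const _
  have hQm : Measurable Q :=
    Finset.measurable_sum _ fun n _ => hq.comp (measurable_pi_apply n)
  have hQ : ∫⁻ X, Q X ∂μ ≤ 1 := by
    change ∫⁻ X, ∑ n, ENNReal.ofReal
      (∑ i, ((D - D').mulVec (X n) i) ^ 2 / (2 * (σ : ℝ) ^ 2)) ∂μ ≤ 1
    rw [lintegral_finsetSum Finset.univ (f := fun n (X : Fin N → P → ℝ) => ENNReal.ofReal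
      (∑ i, ((D - D').mulVec (X n) i) ^ 2 / (2 * (σ : ℝ) ^ 2)))
      fun n _ => hq.comp (measurable_pi_apply n)]
    have : ∀ n : Fin N, ∫⁻ X, ENNReal.ofReal
        (∑ i, ((D - D').mulVec (X n) i) ^ 2 / (2 * (σ : ℝ) ^ 2)) ∂μ ≤
        ENNReal.ofReal (specNorm Sigx * frobNormSq (D - D') / (2 * (σ : ℝ) ^ 2)) := by
      intro n
      rw [(measurePreserving_eval (fun _ : Fin N => ν) n).lintegral_comp hq]
      exact second_moment _ ν Sigx hint2 hcov _ (by positivity)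
    refine (Finset.sum_le_sum fun n _ => this n).trans ?_
    rw [Finset.sum_const, Finset.card_univ, Fintype.card_fin, nsmul_eq_mul,
      ← ENNReal.ofReal_natCast, ← ENNReal.ofReal_mul (by positivity)]
    exact ENNReal.ofReal_le_one.2 hsmall
  have key : ∫⁻ _X, 4 ∂μ ≤ ∫⁻ X, (A X + B X + (2 + Q X)) ∂μ := by
    refine lintegral_mono fun X => ?_
    have := two_point N (σ ^ 2) hv (fun n => D.mulVec (X n)) (fun n => D'.mulVec (X n)) w hw
    refine this.trans (le_of_eq ?_)
    rw [ENNReal.ofReal_sum_of_nonneg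
      (fun n _ => Finset.sum_nonneg fun i _ => by positivity), add_assoc]
    congr 2
    refine Finset.sum_congr rfl fun n _ => ?_
    simp [Matrix.sub_mulVec]
  rw [lintegral_const, measure_univ, mul_one, lintegral_add_right _ (by fun_prop),
    lintegral_add_right _ hQm, lintegral_const, measure_univ, mul_one] at key
  have hAB : ∫⁻ X, A X + B X ∂μ = ∫⁻ X, A X ∂μ + ∫⁻ X, B X ∂μ := by
    exact lintegral_add_left (measurable_inner_aux N D (σ ^ 2) _ (by fun_prop)) _
  rw [hAB] at key
  have k2 : (1 : ℝ≥0∞) + 3 ≤ (∫⁻ X, A X ∂μ + ∫⁻ X, B X ∂μ) + 3 := by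
    calc (1 : ℝ≥0∞) + 3 = 4 := by norm_num
      _ ≤ _ := key
      _ ≤ (∫⁻ X, A X ∂μ + ∫⁻ X, B X ∂μ) + (2 + 1) := by gcongr
      _ = _ := by norm_num
  exact (ENNReal.add_le_add_iff_right (by norm_num)).1 k2

def finn {M P : Type*} [Fintype M] [Fintype P] (A B : Matrix M P ℝ) : ℝ :=
  ∑ i, ∑ j, A i j * B i j

lemma finn_comm {M P : Type*} [Fintype M] [Fintype P] (A B : Matrix M P ℝ) :
    finn A B = finn B A := by
  simp only [finn, mul_comm]

lemma finn_sub_left {M P : Type*} [Fintype M] [Fintype P] (A B C : Matrix M P ℝ) :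
    finn (A - B) C = finn A C - finn B C := by
  simp only [finn, Matrix.sub_apply, sub_mul, Finset.sum_sub_distrib]

lemma finn_add_left {M P : Type*} [Fintype M] [Fintype P] (A B C : Matrix M P ℝ) :
    finn (A + B) C = finn A C + finn B C := by
  simp only [finn, Matrix.add_apply, add_mul, Finset.sum_add_distrib]

lemma finn_sum_left {M P J : Type*} [Fintype M] [Fintype P] [Fintype J] (c : J → ℝ)
    (B : J → Matrix M P ℝ) (C : Matrix M P ℝ) :
    finn (∑ j, c j • B j) C = ∑ j, c j * finn (B j) C := by
  simp only [finn, Matrix.sum_apply, Matrix.smul_apply, smul_eq_mul, Finset.sum_mul, Finset.mul_sum]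
  rw [Finset.sum_comm' (t' := Finset.univ) (s' := fun _ => Finset.univ) (by simp)]
  rw [Finset.sum_comm]
  conv_rhs => rw [Finset.sum_comm]
  refine Finset.sum_congr rfl fun i _ => ?_
  rw [Finset.sum_comm]
  refine Finset.sum_congr rfl fun i _ => Finset.sum_congr rfl fun i _ => by ring

lemma frobNormSq_eq_finn {M P : Type*} [Fintype M] [Fintype P] (A : Matrix M P ℝ) :
    frobNormSq A = finn A A := by
  simp only [frobNormSq, finn, sq]

lemma frobNormSq_nonneg {M P : Type*} [Fintype M] [Fintype P] (A : Matrix M P ℝ) :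
    0 ≤ frobNormSq A := Finset.sum_nonneg fun _ _ => Finset.sum_nonneg fun _ _ => sq_nonneg _

lemma bessel_aux {M P J : Type*} [Fintype M] [Fintype P] [Fintype J] [DecidableEq J]
    (B : J → Matrix M P ℝ) (b : ℝ) (hB : ∀ i j, finn (B i) (B j) = if i = j then b else 0)
    (G : Matrix M P ℝ) (c : J → ℝ) (hc : ∀ j, finn G (B j) = b * c j) :
    b * ∑ j, c j ^ 2 ≤ frobNormSq G := by
  set H := ∑ j, c j • B j with hH
  have h1 : finn G H = b * ∑ j, c j ^ 2 := by
    rw [finn_comm, hH, finn_sum_left, Finset.mul_sum]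
    refine Finset.sum_congr rfl fun j _ => ?_
    rw [finn_comm, hc]; ring
  have h2 : finn H H = b * ∑ j, c j ^ 2 := by
    conv_lhs => rw [hH, finn_sum_left]
    rw [Finset.mul_sum]
    refine Finset.sum_congr rfl fun j _ => ?_
    rw [finn_comm, finn_sum_left]
    simp only [hB]
    simp
    ring
  have h3 := frobNormSq_nonneg (G - H)
  rw [frobNormSq_eq_finn, finn_sub_left, finn_comm G, finn_comm H, finn_sub_left, finn_sub_left,
    finn_comm H G, h1, h2, ← frobNormSq_eq_finn] at h3
  linarith

def sgnB (b : Bool) : ℝ := if b then 1 else -1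

def cubeD {M P J : Type*} [Fintype J] (A : Matrix M P ℝ) (B : J → Matrix M P ℝ) (u : J → Bool) :
    Matrix M P ℝ := A + ∑ j, sgnB (u j) • B j

lemma cubeD_sub {M P J : Type*} [Fintype J] [DecidableEq J] (A : Matrix M P ℝ)
    (B : J → Matrix M P ℝ) (u : J → Bool) (j : J) (hu : u j = true) :
    cubeD A B u - cubeD A B (Function.update u j false) = (2 : ℝ) • B j := by
  unfold cubeD
  rw [add_sub_add_left_eq_sub, ← Finset.sum_sub_distrib, Finset.sum_eq_single j]
  · simp [hu, sgnB]; rw [← two_smul ℝ]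
  · intro i _ hi
    simp [Function.update_of_ne hi]
  · simp

lemma assouad (N : ℕ) {M P J : Type*} [Fintype M] [Fintype P] [DecidableEq P]
    [Fintype J] [DecidableEq J]
    (A : Matrix M P ℝ) (B : J → Matrix M P ℝ) (b : ℝ) (hb : 0 < b)
    (hB : ∀ i j, finn (B i) (B j) = if i = j then b else 0)
    (ν : Measure (P → ℝ)) [IsProbabilityMeasure ν] (Sigx : Matrix P P ℝ)
    (hint2 : ∀ i j, Integrable (fun x : P → ℝ => x i * x j) ν)
    (hcov : ∀ i j, ∫ x, x i * x j ∂ν = Sigx i j) (σ : ℝ≥0) (hσ : 0 < σ)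
    (hsmall : N * (specNorm Sigx * (4 * b) / (2 * (σ : ℝ) ^ 2)) ≤ 1)
    (est : (Fin N → M → ℝ) → Matrix M P ℝ) (hest : Measurable est) (R : ℝ≥0∞)
    (hR : ∀ u, ∫⁻ Y, ENNReal.ofReal (frobNormSq (est Y - cubeD A B u))
      ∂ obsLaw N (cubeD A B u) ν σ ≤ R) :
    ENNReal.ofReal (b * Fintype.card J / 2) ≤ R := by
  set w : J → (Fin N → M → ℝ) → ℝ := fun j Y => finn (est Y - A) (B j) / b with hw
  have hent : ∀ i k, Measurable (fun Y => est Y i k) := fun i k =>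
    (measurable_pi_apply k).comp ((measurable_pi_apply i).comp hest)
  have hwm : ∀ j, Measurable (w j) := by
    intro j
    simp only [hw, finn, Matrix.sub_apply]
    refine Measurable.div_const ?_ _
    refine Finset.measurable_sum _ fun i _ => Finset.measurable_sum _ fun k _ => ?_
    exact ((hent i k).sub_const _).mul_const _
  set T : J → (J → Bool) → ℝ≥0∞ := fun j u =>
    ∫⁻ Y, ENNReal.ofReal ((w j Y - sgnB (u j)) ^ 2) ∂ obsLaw N (cubeD A B u) ν σ with hT
  have hlow : ∀ u, ENNReal.ofReal b * ∑ j, T j u ≤ R := by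
    intro u
    refine le_trans ?_ (hR u)
    simp only [hT]
    rw [← lintegral_finsetSum _ (fun j _ => by have := hwm j; fun_prop),
      ← lintegral_const_mul _ (Finset.measurable_sum _ fun j _ => by have := hwm j; fun_prop)]
    refine lintegral_mono fun Y => ?_
    rw [← ENNReal.ofReal_sum_of_nonneg (fun _ _ => sq_nonneg _), ← ENNReal.ofReal_mul hb.le]
    apply ENNReal.ofReal_le_ofReal
    refine bessel_aux B b hB _ _ fun j => ?_
    have : est Y - cubeD A B u = (est Y - A) - ∑ j, sgnB (u j) • B j := by
      unfold cubeD; abel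
    rw [this, finn_sub_left, finn_sum_left]
    simp only [hB, hw]
    simp
    field_simp
  have hpair : ∀ j (u : J → Bool), u j = true →
      1 ≤ T j u + T j (Function.update u j false) := by
    intro j u hu
    have := pair_bound N (cubeD A B u) (cubeD A B (Function.update u j false)) ν Sigx hint2 hcov
      σ hσ (by
        rw [cubeD_sub A B u j hu]
        have : frobNormSq ((2 : ℝ) • B j) = 4 * b := by
          have h := hB j j
          rw [if_pos rfl] at h
          rw [← h]
          simp only [frobNormSq, finn, Finset.mul_sum, Matrix.smul_apply, smul_eq_mul]
          refine Finset.sum_congr rfl fun _ _ => Finset.sum_congr rfl fun _ _ => by ring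
        rw [this]; exact hsmall) (w j) (hwm j)
    simpa [hT, hu, sgnB] using this
  have hflip : ∀ j, (Fintype.card (J → Bool) : ℝ≥0∞) ≤ 2 * ∑ u, T j u := by
    intro j
    let e : (J → Bool) ≃ (J → Bool) := Function.Involutive.toPerm
      (fun u => Function.update u j (!u j)) (fun u => by simp)
    have h1 : ∑ u, T j (e u) = ∑ u, T j u := Equiv.sum_comp e _
    rw [two_mul]
    nth_rewrite 2 [← h1]
    rw [← Finset.sum_add_distrib]
    have : (Fintype.card (J → Bool) : ℝ≥0∞) = ∑ _u : J → Bool, 1 := by simp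
    rw [this]
    refine Finset.sum_le_sum fun u _ => ?_
    change 1 ≤ T j u + T j (Function.update u j (!u j))
    by_cases hu : u j = true
    · rw [hu]; exact hpair j u hu
    · have hu' : u j = false := by simpa using hu
      have := hpair j (Function.update u j true) (by simp)
      rw [Function.update_idem, show Function.update u j false = u by
        rw [← hu']; simp] at this
      rw [hu', add_comm]; exact this
  have htot : (Fintype.card (J → Bool) : ℝ≥0∞) * ENNReal.ofReal (b * Fintype.card J / 2) ≤
      (Fintype.card (J → Bool) : ℝ≥0∞) * R := by
    calc (Fintype.card (J → Bool) : ℝ≥0∞) * ENNReal.ofReal (b * Fintype.card J / 2)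
        = ENNReal.ofReal (b / 2) * ∑ _j : J, (Fintype.card (J → Bool) : ℝ≥0∞) := by
          rw [Finset.sum_const, Finset.card_univ, nsmul_eq_mul,
            show b * Fintype.card J / 2 = b / 2 * Fintype.card J by ring,
            ENNReal.ofReal_mul (by positivity), ENNReal.ofReal_natCast]
          ring
      _ ≤ ENNReal.ofReal (b / 2) * ∑ j : J, (2 * ∑ u, T j u) := by
          gcongr with j; exact hflip j
      _ = ∑ u, ENNReal.ofReal b * ∑ j, T j u := by
          rw [← Finset.mul_sum, ← mul_assoc, Finset.sum_comm, ← Finset.mul_sum]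
          congr 1
          rw [show (2 : ℝ≥0∞) = ENNReal.ofReal 2 by norm_num, ← ENNReal.ofReal_mul (by positivity)]
          congr 1; ring
      _ ≤ ∑ _u : J → Bool, R := Finset.sum_le_sum fun u _ => hlow u
      _ = _ := by simp
  refine (ENNReal.mul_le_mul_iff_right ?_ ?_).1 htot
  · simp
  · exact ENNReal.natCast_ne_top _

lemma finn_kron {K : ℕ} {m p : Fin K → ℕ} (A B : ∀ k, Matrix (Fin (m k)) (Fin (p k)) ℝ) :
    finn (kronFamily A) (kronFamily B) = ∏ k, finn (A k) (B k) := by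
  unfold finn
  rw [Finset.prod_univ_sum, Fintype.piFinset_univ]
  refine Finset.sum_congr rfl fun i _ => ?_
  rw [Finset.prod_univ_sum, Fintype.piFinset_univ]
  refine Finset.sum_congr rfl fun j _ => ?_
  simp only [kronFamily, Matrix.of_apply, Finset.prod_mul_distrib]

lemma finn_kron_update {K : ℕ} {m p : Fin K → ℕ} (D : ∀ k, Matrix (Fin (m k)) (Fin (p k)) ℝ)
    (k : Fin K) (X Y : Matrix (Fin (m k)) (Fin (p k)) ℝ) :
    finn (kronFamily (Function.update D k X)) (kronFamily (Function.update D k Y)) =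
      (∏ l ∈ Finset.univ.erase k, finn (D l) (D l)) * finn X Y := by
  rw [finn_kron, ← Finset.prod_erase_mul _ _ (Finset.mem_univ k)]
  congr 1
  · refine Finset.prod_congr rfl fun l hl => ?_
    rw [Function.update_of_ne (Finset.ne_of_mem_erase hl), Function.update_of_ne (Finset.ne_of_mem_erase hl)]
  · simp

lemma kron_update_apply {K : ℕ} {m p : Fin K → ℕ} (D : ∀ k, Matrix (Fin (m k)) (Fin (p k)) ℝ)
    (k : Fin K) (X : Matrix (Fin (m k)) (Fin (p k)) ℝ) (i : ∀ k, Fin (m k)) (j : ∀ k, Fin (p k)) :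
    kronFamily (Function.update D k X) i j =
      (∏ l ∈ Finset.univ.erase k, D l (i l) (j l)) * X (i k) (j k) := by
  simp only [kronFamily, Matrix.of_apply]
  rw [← Finset.prod_erase_mul _ _ (Finset.mem_univ k)]
  congr 1
  · refine Finset.prod_congr rfl fun l hl => ?_
    rw [Function.update_of_ne (Finset.ne_of_mem_erase hl)]
  · simp

lemma cube_kron {K : ℕ} {m p : Fin K → ℕ} (D : ∀ k, Matrix (Fin (m k)) (Fin (p k)) ℝ)
    (k : Fin K) {J : Type*} [Fintype J] (X : Matrix (Fin (m k)) (Fin (p k)) ℝ)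
    (Y : J → Matrix (Fin (m k)) (Fin (p k)) ℝ) (u : J → Bool) :
    cubeD (kronFamily (Function.update D k X)) (fun j => kronFamily (Function.update D k (Y j))) u =
      kronFamily (Function.update D k (cubeD X Y u)) := by
  ext i j
  rw [kron_update_apply]
  simp only [cubeD, Matrix.add_apply, Matrix.sum_apply, Matrix.smul_apply, smul_eq_mul,
    kron_update_apply, mul_add, Finset.mul_sum]
  congr 1
  refine Finset.sum_congr rfl fun a _ => by ring

lemma kron_sub {K : ℕ} {m p : Fin K → ℕ} (D : ∀ k, Matrix (Fin (m k)) (Fin (p k)) ℝ)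
    (k : Fin K) (X : Matrix (Fin (m k)) (Fin (p k)) ℝ) :
    kronFamily (Function.update D k X) - kronFamily D =
      kronFamily (Function.update D k (X - D k)) := by
  ext i j
  have h : kronFamily D = kronFamily (Function.update D k (D k)) := by simp
  rw [h, Matrix.sub_apply]
  simp only [kron_update_apply, Matrix.sub_apply]
  ring

lemma finn_self_unit {m p : ℕ} (A : Matrix (Fin m) (Fin p) ℝ) (h : hasUnitColumns A) :
    finn A A = p := by
  unfold finn
  rw [Finset.sum_comm]
  have : ∀ j, ∑ i, A i j * A i j = 1 := fun j => by
    rw [← h j]; exact Finset.sum_congr rfl fun i _ => by ring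
  simp [this]

lemma exists_orth (n m : ℕ) (hmn : m = n + 1) (d : Fin m → ℝ) (hd : ∑ x, d x ^ 2 = 1) :
    ∃ V : Fin n → Fin m → ℝ, (∀ a a', ∑ x, V a x * V a' x = if a = a' then 1 else 0) ∧
      ∀ a, ∑ x, d x * V a x = 0 := by
  set e : EuclideanSpace ℝ (Fin m) := WithLp.toLp 2 d with he
  have hne : e ≠ 0 := by
    intro h0
    have : ∀ x, d x = 0 := fun x => by
      have := congrArg (fun f : EuclideanSpace ℝ (Fin m) => f x) h0
      simpa [he] using this
    simp [this] at hd
  have : Fact (Module.finrank ℝ (EuclideanSpace ℝ (Fin m)) = n + 1) := ⟨by simp [hmn]⟩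
  set W := OrthonormalBasis.fromOrthogonalSpanSingleton (𝕜 := ℝ) n hne
  refine ⟨fun a x => (W a : EuclideanSpace ℝ (Fin m)) x, fun a a' => ?_, fun a => ?_⟩
  · have h := (orthonormal_iff_ite.1 W.orthonormal) a a'
    rw [Submodule.coe_inner, PiLp.inner_apply] at h
    rw [← h]
    refine Finset.sum_congr rfl fun x _ => ?_
    simp [mul_comm]
  · have h := Submodule.mem_orthogonal_singleton_iff_inner_right.1 (W a).2
    rw [PiLp.inner_apply] at h
    rw [← h]
    refine Finset.sum_congr rfl fun x _ => ?_
    simp [he, mul_comm]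

lemma col_sq {n m : ℕ} (d : Fin m → ℝ) (hd : ∑ x, d x ^ 2 = 1) (V : Fin n → Fin m → ℝ)
    (hV : ∀ a a', ∑ x, V a x * V a' x = if a = a' then 1 else 0)
    (hdV : ∀ a, ∑ x, d x * V a x = 0) (α τ : ℝ) (ε : Fin n → ℝ) (hε : ∀ a, ε a ^ 2 = 1) :
    ∑ x, (α * d x + τ * ∑ a, ε a * V a x) ^ 2 = α ^ 2 + τ ^ 2 * n := by
  have h1 : ∀ x, (α * d x + τ * ∑ a, ε a * V a x) ^ 2 = α ^ 2 * d x ^ 2 +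
      2 * α * τ * (∑ a, ε a * (d x * V a x)) +
      τ ^ 2 * ∑ a, ∑ a', ε a * ε a' * (V a x * V a' x) := by
    intro x
    have e1 : ∑ a, ε a * (d x * V a x) = d x * ∑ a, ε a * V a x := by
      rw [Finset.mul_sum]; exact Finset.sum_congr rfl fun a _ => by ring
    have e2 : ∑ a, ∑ a', ε a * ε a' * (V a x * V a' x) = (∑ a, ε a * V a x) ^ 2 := by
      rw [sq, Finset.sum_mul_sum]
      exact Finset.sum_congr rfl fun a _ => Finset.sum_congr rfl fun a' _ => by ring
    rw [e1, e2]; ring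
  simp_rw [h1, Finset.sum_add_distrib, ← Finset.mul_sum]
  rw [hd]
  have h2 : ∑ x, ∑ a, ε a * (d x * V a x) = 0 := by
    rw [Finset.sum_comm]
    simp_rw [← Finset.mul_sum, hdV]; simp
  have h3 : ∑ x, ∑ a, ∑ a', ε a * ε a' * (V a x * V a' x) = n := by
    rw [Finset.sum_comm]
    have : ∀ a, ∑ x, ∑ a', ε a * ε a' * (V a x * V a' x) = 1 := by
      intro a
      rw [Finset.sum_comm]
      simp_rw [← Finset.mul_sum, hV]
      simp [← sq, hε]
    simp [this]
  rw [h2, h3]; ring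

lemma sgnB_sq (b : Bool) : sgnB b ^ 2 = 1 := by cases b <;> simp [sgnB]

def BF {n m p : ℕ} (τ : ℝ) (V : Fin p → Fin n → Fin m → ℝ) (q : Fin n × Fin p) :
    Matrix (Fin m) (Fin p) ℝ :=
  Matrix.of fun x y => if y = q.2 then τ * V q.2 q.1 x else 0

lemma cubeBF {n m p : ℕ} (τ : ℝ) (V : Fin p → Fin n → Fin m → ℝ) (X : Matrix (Fin m) (Fin p) ℝ)
    (u : Fin n × Fin p → Bool) (x : Fin m) (y : Fin p) :
    cubeD X (BF τ V) u x y = X x y + τ * ∑ a, sgnB (u (a, y)) * V y a x := by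
  simp only [cubeD, BF, Matrix.add_apply, Matrix.sum_apply, Matrix.smul_apply, smul_eq_mul,
    Matrix.of_apply, Fintype.sum_prod_type]
  congr 1
  rw [Finset.mul_sum]
  refine Finset.sum_congr rfl fun a _ => ?_
  simp
  ring

lemma finn_BF {n m p : ℕ} (τ : ℝ) (V : Fin p → Fin n → Fin m → ℝ)
    (hV : ∀ y a a', ∑ x, V y a x * V y a' x = if a = a' then 1 else 0) (q q' : Fin n × Fin p) :
    finn (BF τ V q) (BF τ V q') = if q = q' then τ ^ 2 else 0 := by
  obtain ⟨a, y⟩ := q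
  obtain ⟨a', y'⟩ := q'
  simp only [finn, BF, Matrix.of_apply]
  by_cases h : y = y'
  · subst h
    have : ∀ x, (∑ j, (if j = y then τ * V y a x else 0) * (if j = y then τ * V y a' x else 0)) =
        τ ^ 2 * (V y a x * V y a' x) := by
      intro x; simp; ring
    simp_rw [this, ← Finset.mul_sum, hV]
    simp
  · have : ∀ x, (∑ j, (if j = y then τ * V y a x else 0) * (if j = y' then τ * V y' a' x else 0)) = 0 := by
      intro x; simp [Ne.symm h]
    simp_rw [this]
    simp [h]

lemma kron_lower {K : ℕ} (N : ℕ) {m p : Fin K → ℕ} (hp : ∀ k, 0 < p k)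
    (σ : ℝ≥0) (hσ : 0 < σ) (r : ℝ) (hr : 0 < r)
    (Dk : ∀ k, Matrix (Fin (m k)) (Fin (p k)) ℝ) (hDk : ∀ k, hasUnitColumns (Dk k))
    (ν : Measure ((∀ k, Fin (p k)) → ℝ)) [IsProbabilityMeasure ν]
    (Sigx : Matrix (∀ k, Fin (p k)) (∀ k, Fin (p k)) ℝ)
    (hint2 : ∀ i j, Integrable (fun x => x i * x j) ν)
    (hcov : ∀ i j, ∫ x, x i * x j ∂ν = Sigx i j)
    (k : Fin K) (n : ℕ) (hn : 0 < n) (hmn : m k = n + 1) (s : ℝ) (hs0 : 0 < s) (hs1 : s < 1)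
    (hsr : 2 * (∏ k, (p k : ℝ)) * s < r ^ 2)
    (hsmall : N * (specNorm Sigx * (4 * ((∏ k, (p k : ℝ)) * s / (n * p k))) / (2 * (σ : ℝ) ^ 2)) ≤ 1) :
    ENNReal.ofReal ((∏ k, (p k : ℝ)) * s / 2) ≤
      minimaxRisk N ν σ (ksBall K m p (kronFamily Dk) r) := by
  refine le_iInf fun est => le_iInf fun hest => ?_
  choose V hV hdV using fun y : Fin (p k) => exists_orth n (m k) hmn (fun x => Dk k x y) (hDk k y)
  set c := Real.sqrt (1 - s) with hc
  set τ := Real.sqrt (s / n) with hτ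
  have hn' : (0 : ℝ) < n := by exact_mod_cast hn
  have hc2 : c ^ 2 = 1 - s := Real.sq_sqrt (by linarith)
  have hc0 : 0 ≤ c := Real.sqrt_nonneg _
  have hτ2 : τ ^ 2 = s / n := Real.sq_sqrt (by positivity)
  have hτn : τ ^ 2 * n = s := by rw [hτ2]; field_simp
  set Pe := ∏ l ∈ Finset.univ.erase k, finn (Dk l) (Dk l) with hPe
  have hPek : Pe * p k = ∏ k, (p k : ℝ) := by
    rw [← Finset.prod_erase_mul _ _ (Finset.mem_univ k), hPe]
    congr 1
    exact Finset.prod_congr rfl fun l _ => finn_self_unit _ (hDk l)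
  have hpk : (0 : ℝ) < p k := by exact_mod_cast hp k
  have hPpos : 0 < ∏ k, (p k : ℝ) := Finset.prod_pos fun l _ => by exact_mod_cast hp l
  have hPe0 : 0 < Pe := by
    by_contra h
    have := mul_nonpos_of_nonpos_of_nonneg (not_lt.1 h) hpk.le
    linarith
  set b := Pe * τ ^ 2 with hb
  have hbe : b = (∏ k, (p k : ℝ)) * s / (n * p k) := by
    rw [hb, hτ2, ← hPek]; field_simp
  set A := kronFamily (Function.update Dk k (c • Dk k)) with hA
  set B : Fin n × Fin (p k) → _ := fun q => kronFamily (Function.update Dk k (BF τ V q)) with hB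
  have hcol : ∀ u y, ∑ x, (cubeD (c • Dk k) (BF τ V) u x y) ^ 2 = 1 := by
    intro u y
    simp_rw [cubeBF, Matrix.smul_apply, smul_eq_mul]
    rw [col_sq (fun x => Dk k x y) (hDk k y) (V y) (hV y) (hdV y) c τ (fun a => sgnB (u (a, y)))
      (fun a => sgnB_sq _), hc2, hτn]
    ring
  have hmem : ∀ u, cubeD A B u ∈ ksBall K m p (kronFamily Dk) r := by
    intro u
    rw [hA, hB, cube_kron]
    refine ⟨⟨_, fun l => ?_, rfl⟩, ?_⟩
    · by_cases hl : l = k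
      · subst hl
        rw [Function.update_self]
        exact hcol u
      · rw [Function.update_of_ne hl]; exact hDk l
    · rw [frobNorm, Real.sqrt_lt' hr, kron_sub, frobNormSq_eq_finn, finn_kron_update]
      have : finn (cubeD (c • Dk k) (BF τ V) u - Dk k) (cubeD (c • Dk k) (BF τ V) u - Dk k) =
          p k * (2 * (1 - c)) := by
        rw [finn, Finset.sum_comm]
        have h1 : ∀ y, ∑ x, (cubeD (c • Dk k) (BF τ V) u - Dk k) x y *
            (cubeD (c • Dk k) (BF τ V) u - Dk k) x y = 2 * (1 - c) := by
          intro y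
          have h2 : ∀ x, (cubeD (c • Dk k) (BF τ V) u - Dk k) x y *
            (cubeD (c • Dk k) (BF τ V) u - Dk k) x y =
            ((c - 1) * Dk k x y + τ * ∑ a, sgnB (u (a, y)) * V y a x) ^ 2 := by
            intro x
            rw [Matrix.sub_apply, cubeBF, Matrix.smul_apply, smul_eq_mul]
            ring
          simp_rw [h2]
          rw [col_sq (fun x => Dk k x y) (hDk k y) (V y) (hV y) (hdV y) (c - 1) τ
            (fun a => sgnB (u (a, y))) (fun a => sgnB_sq _), hτn]
          linarith [hc2, show (c - 1) ^ 2 = c ^ 2 - 2 * c + 1 by ring]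
        rw [Finset.sum_congr rfl fun y _ => h1 y]
        simp
      rw [this, ← hPe, ← mul_assoc, hPek]
      have : 1 - c ≤ s := by
        have : c ≤ 1 := by
          rw [hc]; exact Real.sqrt_le_one.2 (by linarith)
        nlinarith
      nlinarith
  have hBo : ∀ i j, finn (B i) (B j) = if i = j then b else 0 := by
    intro i j
    rw [hB]
    simp only
    rw [finn_kron_update, finn_BF τ V hV, ← hPe, hb]
    split_ifs <;> simp
  have hfin := assouad N A B b (by positivity) hBo ν Sigx hint2 hcov σ hσ (by rw [hbe]; exact hsmall)
    est hest (⨆ D ∈ ksBall K m p (kronFamily Dk) r,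
      ∫⁻ Y, ENNReal.ofReal (frobNormSq (est Y - D)) ∂ obsLaw N D ν σ)
    (fun u => le_iSup₂ (f := fun D (_ : D ∈ ksBall K m p (kronFamily Dk) r) =>
      ∫⁻ Y, ENNReal.ofReal (frobNormSq (est Y - D)) ∂ obsLaw N D ν σ) (cubeD A B u) (hmem u))
  refine le_trans (le_of_eq ?_) hfin
  congr 1
  rw [hbe, Fintype.card_prod, Fintype.card_fin, Fintype.card_fin]
  push_cast
  field_simp

/-- **Theorem 1** (minimax lower bound for KS dictionary learning, general coefficient
distribution). -/
theorem minimax_lower_bound_general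
    (K N : ℕ) (hK : 0 < K) (m p : Fin K → ℕ) (hm : ∀ k, 0 < m k) (hp : ∀ k, 0 < p k)
    (σ : ℝ≥0) (hσ : 0 < σ) (r : ℝ) (hr : 0 < r)
    (D0 : Matrix (∀ k, Fin (m k)) (∀ k, Fin (p k)) ℝ) (hD0 : D0 ∈ ksClass K m p)
    (ν : Measure ((∀ k, Fin (p k)) → ℝ)) [IsProbabilityMeasure ν]
    (Sigx : Matrix (∀ k, Fin (p k)) (∀ k, Fin (p k)) ℝ)
    (hint1 : ∀ i, Integrable (fun x => x i) ν)
    (hmean : ∀ i, ∫ x, x i ∂ν = 0)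
    (hint2 : ∀ i j, Integrable (fun x => x i * x j) ν)
    (hcov : ∀ i j, ∫ x, x i * x j ∂ν = Sigx i j)
    (t c₁ : ℝ) (ht0 : 0 < t) (ht1 : t < 1)
    (hc0 : 0 < c₁) (hc1 : c₁ < (1 - t) / (8 * Real.log 2)) :
    ENNReal.ofReal (t / 4 *
      min (∏ k, (p k : ℝ))
        (min (r ^ 2 / (2 * (K : ℝ)))
          ((σ : ℝ) ^ 2 / (4 * (N : ℝ) * (K : ℝ) * specNorm Sigx) *
            (c₁ * (∑ k, ((m k : ℝ) - 1) * (p k : ℝ)) -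
              (K : ℝ) / 2 * Real.logb 2 (2 * (K : ℝ)) - 2)))) ≤
      minimaxRisk N ν σ (ksBall K m p D0 r) := by
  set Pp := ∏ k, (p k : ℝ) with hPp
  set S := specNorm Sigx with hS
  set Bb := c₁ * (∑ k, ((m k : ℝ) - 1) * (p k : ℝ)) -
              (K : ℝ) / 2 * Real.logb 2 (2 * (K : ℝ)) - 2 with hBb
  set X3 := (σ : ℝ) ^ 2 / (4 * (N : ℝ) * (K : ℝ) * S) * Bb with hX3
  set μ := min Pp (min (r ^ 2 / (2 * (K : ℝ))) X3) with hμ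
  have hμ3 : μ ≤ X3 := (min_le_right _ _).trans (min_le_right _ _)
  have hμ2 : μ ≤ r ^ 2 / (2 * (K : ℝ)) := (min_le_right _ _).trans (min_le_left _ _)
  have hμ1 : μ ≤ Pp := min_le_left _ _
  by_cases hneg : X3 ≤ 0
  · rw [ENNReal.ofReal_of_nonpos
      (mul_nonpos_of_nonneg_of_nonpos (by positivity) (hμ3.trans hneg))]
    exact zero_le
  push Not at hneg
  have hK1 : (1 : ℝ) ≤ K := by exact_mod_cast hK
  have hσ' : (0 : ℝ) < σ := by exact_mod_cast hσ
  have hS0 : 0 ≤ S := by rw [hS, specNorm]; exact norm_nonneg _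
  have hPpos : 0 < Pp := Finset.prod_pos fun l _ => by exact_mod_cast hp l
  have hSpos : 0 < S := by
    rcases hS0.eq_or_lt with h | h
    · rw [hX3, ← h] at hneg; simp at hneg
    · exact h
  have hNpos : (0 : ℝ) < N := by
    rcases (Nat.cast_nonneg (α := ℝ) N).eq_or_lt with h | h
    · rw [hX3, ← h] at hneg; simp at hneg
    · exact h
  have hfac : 0 < (σ : ℝ) ^ 2 / (4 * (N : ℝ) * (K : ℝ) * S) := by positivity
  have hBpos : 0 < Bb := (mul_pos_iff_of_pos_left hfac).1 hneg
  have hμ0 : 0 < μ := lt_min hPpos (lt_min (by positivity) hneg)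
  have hlog : 0 ≤ Real.logb 2 (2 * (K : ℝ)) := Real.logb_nonneg (by norm_num) (by linarith)
  have hBle : Bb ≤ c₁ * (∑ k, ((m k : ℝ) - 1) * (p k : ℝ)) := by
    have : 0 ≤ (K : ℝ) / 2 * Real.logb 2 (2 * (K : ℝ)) := by positivity
    rw [hBb]; linarith
  have : Nonempty (Fin K) := ⟨⟨0, hK⟩⟩
  obtain ⟨k, hk⟩ := Finite.exists_max (fun k => ((m k : ℝ) - 1) * (p k : ℝ))
  have hsum : ∑ k, ((m k : ℝ) - 1) * (p k : ℝ) ≤ K * (((m k : ℝ) - 1) * (p k : ℝ)) := by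
    refine (Finset.sum_le_sum fun l _ => hk l).trans (le_of_eq ?_)
    simp
  obtain ⟨n, hn⟩ : ∃ n, m k = n + 1 := ⟨m k - 1, by have := hm k; omega⟩
  have hmk : (m k : ℝ) - 1 = n := by rw [hn]; push_cast; ring
  rw [hmk] at hsum
  have hpk : (0 : ℝ) < p k := by exact_mod_cast hp k
  have hBk : Bb ≤ c₁ * (K * (n * p k)) := hBle.trans (by gcongr)
  have hn0 : 0 < n := by
    rcases Nat.eq_zero_or_pos n with h | h
    · rw [h] at hBk; simp at hBk; linarith
    · exact h
  have hn' : (0 : ℝ) < n := by exact_mod_cast hn0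
  have hc1' : c₁ ≤ 1 := by
    have hl := Real.log_two_gt_d9
    refine hc1.le.trans ?_
    rw [div_le_one (by positivity)]
    linarith
  obtain ⟨Dk, hDk, rfl⟩ := hD0
  have hPs : Pp * (μ / (2 * Pp)) = μ / 2 := by field_simp
  have hfin := kron_lower N hp σ hσ r hr Dk hDk ν Sigx hint2 hcov k n hn0 hn (μ / (2 * Pp))
    (by positivity) (by rw [div_lt_one (by positivity)]; linarith)
    (by
      rw [← hPp, mul_assoc, hPs]
      have : r ^ 2 / (2 * (K : ℝ)) < r ^ 2 := by
        rw [div_lt_iff₀ (by positivity)]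
        nlinarith [sq_pos_of_pos hr]
      linarith)
    (by
      rw [← hPp, ← hS, hPs]
      have e : (N : ℝ) * (S * (4 * (μ / 2 / (n * p k))) / (2 * (σ : ℝ) ^ 2)) =
        μ * (N * S / (n * p k * (σ : ℝ) ^ 2)) := by
        field_simp; ring
      rw [e]
      calc μ * (N * S / (n * p k * (σ : ℝ) ^ 2))
          ≤ X3 * (N * S / (n * p k * (σ : ℝ) ^ 2)) := by gcongr
        _ = Bb / (4 * (K * (n * p k))) := by rw [hX3]; field_simp
        _ ≤ 1 := by
          rw [div_le_one (by positivity)]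
          have : 0 < (K : ℝ) * (n * p k) := by positivity
          nlinarith)
  refine le_trans (ENNReal.ofReal_le_ofReal ?_) hfin
  rw [← hPp, hPs]
  nlinarith

end
end

section
/- Consider the Kronecker-structured dictionary learning problem with N i.i.d. observations y_n = D x_n + η_n, where the true dictionary D lies in X(D₀,r) for a fixed reference dictionary D₀ in the Kronecker dictionary class, and the coefficient vectors x_n are i.i.d. s-sparse vectors whose support is drawn either uniformly at random over all s-subsets of [p] (random sparsity) or via the separable sparsity model, and whose nonzero entries conditioned on the support S satisfy E[x_S x_Sᵀ | S] = σ_a² I_s (so that the covariance of x is (s/p)σ_a² I_p). Then for every t with 0 < t < 1 and every c₁ with 0 < c₁ < (1−t)/(8 log 2), the minimax risk satisfies ε* ≥ (t/4) · min{ p, r²/(2K), (σ² p/(4 N K s σ_a²)) · ( c₁ · (Σ_{k=1}^K (m_k − 1) p_k) − (K/2) log₂(2K) − 2 ) }. -/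
open MeasureTheory ProbabilityTheory Matrix Real
open scoped NNReal ENNReal

noncomputable section

lemma aux_pi_withDensity {ι : Type*} [Fintype ι] {α : ι → Type*} [∀ i, MeasurableSpace (α i)]
    (μ : ∀ i, Measure (α i)) [∀ i, IsProbabilityMeasure (μ i)] (f : ∀ i, α i → ℝ≥0∞)
    (hf : ∀ i, Measurable (f i)) [∀ i, SigmaFinite ((μ i).withDensity (f i))] :
    Measure.pi (fun i => (μ i).withDensity (f i)) =
      (Measure.pi μ).withDensity (fun x => ∏ i, f i (x i)) := by
  refine Measure.pi_eq fun s hs => ?_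
  rw [withDensity_apply _ (MeasurableSet.univ_pi hs),
    ← lintegral_indicator (MeasurableSet.univ_pi hs)]
  have h1 : ∀ x : ∀ i, α i, (Set.univ.pi s).indicator (fun x => ∏ i, f i (x i)) x
      = ∏ i, (s i).indicator (f i) (x i) := by
    intro x
    by_cases hx : x ∈ Set.univ.pi s
    · rw [Set.indicator_of_mem hx]
      refine Finset.prod_congr rfl fun i _ => ?_
      rw [Set.indicator_of_mem (hx i (Set.mem_univ i))]
    · rw [Set.indicator_of_notMem hx]
      simp only [Set.mem_pi, Set.mem_univ, true_implies, not_forall] at hx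
      obtain ⟨i, hi⟩ := hx
      exact (Finset.prod_eq_zero (Finset.mem_univ i) (Set.indicator_of_notMem hi _)).symm
  simp_rw [h1]
  have hm : ∀ i, Measurable ((s i).indicator (f i)) := fun i => (hf i).indicator (hs i)
  have hind := iIndepFun_pi (μ := μ) (X := fun i => (s i).indicator (f i))
    (fun i => (hm i).aemeasurable)
  have := lintegral_prod_eq_prod_lintegral_of_indepFun (μ := Measure.pi μ) Finset.univ
    (fun i (x : ∀ i, α i) => (s i).indicator (f i) (x i)) hind
    (fun i => (hm i).comp (measurable_pi_apply i))
  rw [this]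
  refine Finset.prod_congr rfl fun i _ => ?_
  rw [withDensity_apply _ (hs i), ← lintegral_indicator (hs i)]
  rw [← (measurePreserving_eval μ i).lintegral_comp (hm i)]

lemma aux_gauss1 (v : ℝ≥0) (hv : v ≠ 0) (h : ℝ) :
    (gaussianReal 0 v).map (fun x => h + x) =
      (gaussianReal 0 v).withDensity
        (fun x => ENNReal.ofReal (Real.exp (x * h / v - h ^ 2 / (2 * v)))) := by
  rw [gaussianReal_map_const_add, zero_add, gaussianReal_of_var_ne_zero _ hv,
    gaussianReal_of_var_ne_zero _ hv, ← withDensity_mul _ (measurable_gaussianPDF _ _)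
      (by fun_prop)]
  congr 1
  ext x
  simp only [gaussianPDF, gaussianPDFReal, Pi.mul_apply]
  rw [← ENNReal.ofReal_mul (by positivity), mul_assoc _ (Real.exp _) (Real.exp _), ← Real.exp_add]
  have : (v : ℝ) ≠ 0 := by exact_mod_cast hv
  congr 3
  field_simp
  ring

lemma aux_gaussPi {ι : Type*} [Fintype ι] (v : ℝ≥0) (hv : v ≠ 0) (h : ι → ℝ) :
    (Measure.pi fun _ : ι => gaussianReal 0 v).map (fun x => h + x) =
      (Measure.pi fun _ : ι => gaussianReal 0 v).withDensity
        (fun x => ENNReal.ofReal (Real.exp (∑ i, (x i * h i / v - h i ^ 2 / (2 * v))))) := by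
  have h1 := Measure.pi_map_pi (μ := fun _ : ι => gaussianReal 0 v)
    (f := fun i x => h i + x) (fun i => by fun_prop)
    (hμ := fun i => by
      have : IsProbabilityMeasure (Measure.map (fun x => h i + x) (gaussianReal 0 v)) :=
        Measure.isProbabilityMeasure_map (by fun_prop)
      infer_instance)
  have h2 : (fun x : ι → ℝ => h + x) = (fun x i => h i + x i) := rfl
  rw [h2, h1]
  simp_rw [aux_gauss1 v hv]
  rw [aux_pi_withDensity]
  · congr 1
    ext x
    rw [Real.exp_sum, ENNReal.ofReal_prod_of_nonneg (fun i _ => (Real.exp_pos _).le)]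
  · intro i; fun_prop

/-- the weight -/
def auxW {I J : Type*} [Fintype I] [Fintype J] (v : ℝ) (H : Matrix I J ℝ)
    (z : (J → ℝ) × (I → ℝ)) : ℝ :=
  ∑ i, (z.2 i * (H.mulVec z.1) i / v - (H.mulVec z.1) i ^ 2 / (2 * v))

lemma aux_meas_mulVec {I J : Type*} [Fintype I] [Fintype J] (H : Matrix I J ℝ) :
    Measurable (fun x : J → ℝ => H.mulVec x) := by
  unfold Matrix.mulVec dotProduct
  fun_prop

lemma aux_measW {I J : Type*} [Fintype I] [Fintype J] (v : ℝ) (H : Matrix I J ℝ) :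
    Measurable (auxW v H) := by
  unfold auxW Matrix.mulVec dotProduct
  fun_prop

lemma aux_shift {I J : Type*} [Fintype I] [Fintype J] (v : ℝ≥0) (hv : v ≠ 0)
    (ν : Measure (J → ℝ)) [IsProbabilityMeasure ν] (H : Matrix I J ℝ) :
    (ν.prod (Measure.pi fun _ : I => gaussianReal 0 v)).map
        (fun z => (z.1, H.mulVec z.1 + z.2)) =
      (ν.prod (Measure.pi fun _ : I => gaussianReal 0 v)).withDensity
        (fun z => ENNReal.ofReal (Real.exp (auxW v H z))) := by
  have hH := aux_meas_mulVec H
  refine Measure.ext_of_lintegral _ fun f hf => ?_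
  have hW : Measurable (fun z : (J → ℝ) × (I → ℝ) => ENNReal.ofReal (Real.exp (auxW v H z))) := by
    have := aux_measW v H
    fun_prop
  rw [lintegral_map hf (by fun_prop), lintegral_withDensity_eq_lintegral_mul _ hW hf,
    lintegral_prod _ (by fun_prop), lintegral_prod _ (by fun_prop)]
  refine lintegral_congr fun x => ?_
  have h3 := aux_gaussPi (ι := I) v hv (H.mulVec x)
  have h4 : Measurable (fun y : I → ℝ => f (x, y)) := by fun_prop
  have h5 : ∫⁻ y, f (x, y) ∂((Measure.pi fun _ : I => gaussianReal 0 v).map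
      (fun y => H.mulVec x + y)) = ∫⁻ y, f (x, H.mulVec x + y) ∂(Measure.pi fun _ : I => gaussianReal 0 v) :=
    lintegral_map h4 (by fun_prop)
  rw [← h5, h3, lintegral_withDensity_eq_lintegral_mul _ (by fun_prop) h4]
  rfl

lemma aux_obs {I J : Type*} [Fintype I] [Fintype J] (N : ℕ) (σ : ℝ≥0) (hσ : σ ≠ 0)
    (ν : Measure (J → ℝ)) [IsProbabilityMeasure ν] (C H : Matrix I J ℝ)
    (f : (Fin N → I → ℝ) → ℝ≥0∞) (hf : Measurable f) :
    ∫⁻ Y, f Y ∂(obsLaw N (C + H) ν σ) =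
      ∫⁻ z, ENNReal.ofReal (Real.exp (∑ n, auxW (σ ^ 2 : ℝ≥0) H (z n))) *
          f (fun n => C.mulVec (z n).1 + (z n).2)
        ∂(Measure.pi fun _ : Fin N => ν.prod (Measure.pi fun _ : I => gaussianReal 0 (σ ^ 2))) := by
  have hv : σ ^ 2 ≠ 0 := pow_ne_zero _ hσ
  have hH := aux_meas_mulVec H
  have hC := aux_meas_mulVec C
  have hW := aux_measW (σ ^ 2 : ℝ≥0) H
  set Q := ν.prod (Measure.pi fun _ : I => gaussianReal 0 (σ ^ 2)) with hQ
  have hsh := aux_shift (σ ^ 2) hv ν H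
  rw [← hQ] at hsh
  have hprob : IsProbabilityMeasure
      (Q.withDensity (fun z => ENNReal.ofReal (Real.exp (auxW (σ ^ 2 : ℝ≥0) H z)))) := by
    rw [← hsh]
    exact Measure.isProbabilityMeasure_map (by fun_prop)
  have hs : sampleLaw (C + H) ν σ =
      (Q.withDensity (fun z => ENNReal.ofReal (Real.exp (auxW (σ ^ 2 : ℝ≥0) H z)))).map
        (fun z => C.mulVec z.1 + z.2) := by
    rw [← hsh, Measure.map_map (by fun_prop) (by fun_prop), sampleLaw]
    congr 1
    ext z i
    simp [Matrix.add_mulVec, add_assoc]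
  have hprob2 : IsProbabilityMeasure
      ((Q.withDensity (fun z => ENNReal.ofReal (Real.exp (auxW (σ ^ 2 : ℝ≥0) H z)))).map
        (fun z => C.mulVec z.1 + z.2)) := Measure.isProbabilityMeasure_map (by fun_prop)
  have ho : obsLaw N (C + H) ν σ =
      ((Measure.pi fun _ : Fin N => Q).withDensity
        (fun z => ENNReal.ofReal (Real.exp (∑ n, auxW (σ ^ 2 : ℝ≥0) H (z n))))).map
        (fun z n => C.mulVec (z n).1 + (z n).2) := by
    unfold obsLaw
    rw [hs]
    rw [← Measure.pi_map_pi (μ := fun _ : Fin N => Q.withDensity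
      (fun z => ENNReal.ofReal (Real.exp (auxW (σ ^ 2 : ℝ≥0) H z))))
      (f := fun _ z => C.mulVec z.1 + z.2) (fun i => by fun_prop)]
    rw [aux_pi_withDensity]
    · congr 2
      ext x
      rw [Real.exp_sum, ENNReal.ofReal_prod_of_nonneg (fun i _ => (Real.exp_pos _).le)]
    · intro i; fun_prop
  rw [ho, lintegral_map hf (by fun_prop), lintegral_withDensity_eq_lintegral_mul _ (by fun_prop)
    (by fun_prop)]
  rfl

lemma aux_moment {I J : Type*} [Fintype I] [Fintype J] [DecidableEq J]
    (ν : Measure (J → ℝ)) (a : ℝ)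
    (hint2 : ∀ i j, Integrable (fun x : J → ℝ => x i * x j) ν)
    (hcov : ∀ i j, ∫ x, x i * x j ∂ν = if i = j then a else 0) (H : Matrix I J ℝ) :
    Integrable (fun x : J → ℝ => ∑ i, (H.mulVec x) i ^ 2) ν ∧
    ∫ x, ∑ i, (H.mulVec x) i ^ 2 ∂ν = a * frobNormSq H := by
  have h1 : ∀ x : J → ℝ, ∑ i, (H.mulVec x) i ^ 2 =
      ∑ i, ∑ j, ∑ k, (H i j * H i k) * (x j * x k) := by
    intro x
    refine Finset.sum_congr rfl fun i _ => ?_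
    rw [Matrix.mulVec, dotProduct, sq, Finset.sum_mul_sum]
    refine Finset.sum_congr rfl fun j _ => Finset.sum_congr rfl fun k _ => ?_
    ring
  simp_rw [h1]
  have hi : ∀ i j k, Integrable (fun x : J → ℝ => (H i j * H i k) * (x j * x k)) ν :=
    fun i j k => (hint2 j k).const_mul _
  refine ⟨integrable_finsetSum _ fun i _ => integrable_finsetSum _ fun j _ =>
    integrable_finsetSum _ fun k _ => hi i j k, ?_⟩
  rw [integral_finsetSum _ fun i _ => integrable_finsetSum _ fun j _ =>
    integrable_finsetSum _ fun k _ => hi i j k, frobNormSq, Finset.mul_sum]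
  refine Finset.sum_congr rfl fun i _ => ?_
  rw [integral_finsetSum _ fun j _ => integrable_finsetSum _ fun k _ => hi i j k, Finset.mul_sum]
  refine Finset.sum_congr rfl fun j _ => ?_
  rw [integral_finsetSum _ fun k _ => hi i j k]
  simp_rw [integral_const_mul, hcov]
  simp
  ring

lemma aux_ineq (A B S : ℝ) (h : A + B = -S) :
    2 ≤ 2 * min (Real.exp A) (Real.exp B) + 1 / 2 * (Real.exp A + Real.exp B) + S := by
  have hA : Real.exp A = Real.exp (A / 2) ^ 2 := by rw [← Real.exp_nat_mul]; congr 1; push_cast; ring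
  have hB : Real.exp B = Real.exp (B / 2) ^ 2 := by rw [← Real.exp_nat_mul]; congr 1; push_cast; ring
  have h1 : -S / 2 + 1 ≤ Real.exp (A / 2) * Real.exp (B / 2) := by
    rw [← Real.exp_add]
    have := Real.add_one_le_exp (A / 2 + B / 2)
    linarith
  rw [hA, hB]
  set x := Real.exp (A / 2)
  set y := Real.exp (B / 2)
  rcases min_choice (x ^ 2) (y ^ 2) with h2 | h2 <;> rw [h2]
  · nlinarith [sq_nonneg (x - y / 2), sq_nonneg x]
  · nlinarith [sq_nonneg (y - x / 2), sq_nonneg y]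

lemma aux_ineq2 (A B S : ℝ) (hS : 0 ≤ S) (h : A + B = -S) (f g : ℝ≥0∞) (hfg : 2 ≤ f + g) :
    2 ≤ ENNReal.ofReal (Real.exp A) * f + ENNReal.ofReal (Real.exp B) * g
      + (1 / 2 * (ENNReal.ofReal (Real.exp A) + ENNReal.ofReal (Real.exp B)) + ENNReal.ofReal S) := by
  have h1 := ENNReal.ofReal_le_ofReal (aux_ineq A B S h)
  have hm : 0 ≤ min (Real.exp A) (Real.exp B) := by positivity
  rw [ENNReal.ofReal_add (by positivity) hS, ENNReal.ofReal_add (by positivity) (by positivity),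
    ENNReal.ofReal_mul (by norm_num), ENNReal.ofReal_mul (by norm_num),
    ENNReal.ofReal_add (Real.exp_pos _).le (Real.exp_pos _).le] at h1
  have e1 : ENNReal.ofReal 2 = 2 := by simp
  have e2 : ENNReal.ofReal (1 / 2) = 1 / 2 := by
    rw [ENNReal.ofReal_div_of_pos (by norm_num)]; simp
  rw [e1, e2] at h1
  refine h1.trans ?_
  rw [add_assoc]
  refine add_le_add ?_ le_rfl
  calc 2 * ENNReal.ofReal (min (Real.exp A) (Real.exp B))
      ≤ (f + g) * ENNReal.ofReal (min (Real.exp A) (Real.exp B)) := by gcongr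
    _ = ENNReal.ofReal (min (Real.exp A) (Real.exp B)) * f
        + ENNReal.ofReal (min (Real.exp A) (Real.exp B)) * g := by ring
    _ ≤ _ := by
      gcongr
      · exact min_le_left _ _
      · exact min_le_right _ _

lemma aux_two {I J : Type*} [Fintype I] [Fintype J] [DecidableEq J] (N : ℕ) (σ : ℝ≥0) (hσ : σ ≠ 0)
    (ν : Measure (J → ℝ)) [IsProbabilityMeasure ν] (a : ℝ)
    (hint2 : ∀ i j, Integrable (fun x : J → ℝ => x i * x j) ν)
    (hcov : ∀ i j, ∫ x, x i * x j ∂ν = if i = j then a else 0) (C H : Matrix I J ℝ)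
    (f g : (Fin N → I → ℝ) → ℝ≥0∞) (hf : Measurable f) (hg : Measurable g)
    (hfg : ∀ Y, 2 ≤ f Y + g Y) :
    ENNReal.ofReal (1 - N * (a * frobNormSq H) / σ ^ 2) ≤
      ∫⁻ Y, f Y ∂(obsLaw N (C + H) ν σ) + ∫⁻ Y, g Y ∂(obsLaw N (C + -H) ν σ) := by
  obtain ⟨hI, hE⟩ := aux_moment ν a hint2 hcov H
  have hprob : ∀ D : Matrix I J ℝ, IsProbabilityMeasure (obsLaw N D ν σ) := by
    intro D
    have hD := aux_meas_mulVec D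
    have : IsProbabilityMeasure (sampleLaw D ν σ) :=
      Measure.isProbabilityMeasure_map (by fun_prop)
    unfold obsLaw
    infer_instance
  have one : ∀ G : Matrix I J ℝ, _ := fun G => aux_obs N σ hσ ν C G (fun _ => 1) measurable_const
  simp only [lintegral_const, measure_univ, mul_one] at one
  rw [aux_obs N σ hσ ν C H f hf, aux_obs N σ hσ ν C (-H) g hg]
  set Q := ν.prod (Measure.pi fun _ : I => gaussianReal 0 (σ ^ 2)) with hQ
  set P := Measure.pi fun _ : Fin N => Q with hP
  have hC := aux_meas_mulVec C
  have hW := aux_measW (σ ^ 2 : ℝ≥0) H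
  have hW' := aux_measW (σ ^ 2 : ℝ≥0) (-H)
  let S1 : (J → ℝ) → ℝ := fun x => ∑ i, (H.mulVec x) i ^ 2
  let S : (Fin N → (J → ℝ) × (I → ℝ)) → ℝ := fun z => (∑ n, S1 (z n).1) / σ ^ 2
  have hσ' : (σ : ℝ) ≠ 0 := by exact_mod_cast hσ
  have hS1 : ∀ x, 0 ≤ S1 x := fun x => Finset.sum_nonneg fun i _ => sq_nonneg _
  have hS0 : ∀ z, 0 ≤ S z := fun z =>
    div_nonneg (Finset.sum_nonneg fun n _ => hS1 _) (sq_nonneg _)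
  have hpt : ∀ z, _ := fun z => aux_ineq2 (∑ n, auxW (σ ^ 2 : ℝ≥0) H (z n))
    (∑ n, auxW (σ ^ 2 : ℝ≥0) (-H) (z n)) (S z) (hS0 z) (by
      simp only [S, S1, auxW]
      rw [← Finset.sum_add_distrib, Finset.sum_div, ← Finset.sum_neg_distrib]
      refine Finset.sum_congr rfl fun n _ => ?_
      rw [← Finset.sum_add_distrib, Finset.sum_div, ← Finset.sum_neg_distrib]
      refine Finset.sum_congr rfl fun i _ => ?_
      simp only [Matrix.neg_mulVec, Pi.neg_apply, NNReal.coe_pow]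
      field_simp
      ring)
    (f (fun n => C.mulVec (z n).1 + (z n).2)) (g (fun n => C.mulVec (z n).1 + (z n).2)) (hfg _)
  have hmp : ∀ n : Fin N, MeasurePreserving (fun z : Fin N → (J → ℝ) × (I → ℝ) => (z n).1) P ν :=
    fun n => measurePreserving_fst.comp (measurePreserving_eval (fun _ : Fin N => Q) n)
  have hSi : ∀ n : Fin N, Integrable (fun z => S1 (z n).1) P := fun n =>
    (hmp n).integrable_comp_of_integrable hI
  have hSint : Integrable S P := (integrable_finsetSum _ fun n _ => hSi n).div_const _
  have hSE : ∫ z, S z ∂P = N * (a * frobNormSq H) / σ ^ 2 := by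
    simp only [S]
    rw [integral_div, integral_finsetSum _ fun n _ => hSi n]
    have : ∀ n : Fin N, ∫ z, S1 (z n).1 ∂P = a * frobNormSq H := by
      intro n
      rw [← hE, ← (hmp n).map_eq, integral_map (hmp n).measurable.aemeasurable]
      rw [(hmp n).map_eq]
      exact hI.aestronglyMeasurable
    simp [this]
  have hSl : ∫⁻ z, ENNReal.ofReal (S z) ∂P = ENNReal.ofReal (N * (a * frobNormSq H) / σ ^ 2) := by
    rw [← hSE, ofReal_integral_eq_lintegral_ofReal hSint (Filter.Eventually.of_forall hS0)]
  have hq0 : 0 ≤ N * (a * frobNormSq H) / σ ^ 2 := by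
    rw [← hSE]; exact integral_nonneg hS0
  set q := N * (a * frobNormSq H) / (σ : ℝ) ^ 2
  have hfin := lintegral_mono (μ := P) hpt
  rw [lintegral_add_left (by fun_prop), lintegral_add_left (by fun_prop),
    lintegral_add_left (by fun_prop), lintegral_const_mul _ (by fun_prop),
    lintegral_add_left (by fun_prop), ← one H, ← one (-H), hSl] at hfin
  simp only [lintegral_const, measure_univ, mul_one] at hfin
  have e : (1 / 2 * (1 + 1) : ℝ≥0∞) = 1 := by
    rw [one_add_one_eq_two]; exact ENNReal.div_mul_cancel (by simp) (by simp)
  rw [e] at hfin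
  have e2 : ENNReal.ofReal (1 - q) = 2 - (1 + ENNReal.ofReal q) := by
    rw [ENNReal.ofReal_sub _ hq0, ← one_add_one_eq_two, ENNReal.ofReal_one,
      ENNReal.add_sub_add_eq_sub_left (by simp)]
  rw [e2]
  exact tsub_le_iff_right.2 hfin

/-- Frobenius inner product -/
def auxIn {I J : Type*} [Fintype I] [Fintype J] (A B : Matrix I J ℝ) : ℝ :=
  ∑ i, ∑ j, A i j * B i j

lemma auxIn_comm {I J : Type*} [Fintype I] [Fintype J] (A B : Matrix I J ℝ) :
    auxIn A B = auxIn B A := by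
  simp [auxIn, mul_comm]

lemma auxIn_self {I J : Type*} [Fintype I] [Fintype J] (A : Matrix I J ℝ) :
    auxIn A A = frobNormSq A := by
  simp [auxIn, frobNormSq, sq]

lemma auxIn_add {I J : Type*} [Fintype I] [Fintype J] (A A' B : Matrix I J ℝ) :
    auxIn (A + A') B = auxIn A B + auxIn A' B := by
  simp [auxIn, add_mul, Finset.sum_add_distrib]

lemma auxIn_sub {I J : Type*} [Fintype I] [Fintype J] (A A' B : Matrix I J ℝ) :
    auxIn (A - A') B = auxIn A B - auxIn A' B := by
  simp [auxIn, sub_mul, Finset.sum_sub_distrib]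

lemma auxIn_smul {I J : Type*} [Fintype I] [Fintype J] (c : ℝ) (A B : Matrix I J ℝ) :
    auxIn (c • A) B = c * auxIn A B := by
  simp [auxIn, Finset.mul_sum, mul_assoc]

lemma auxIn_sum {I J T : Type*} [Fintype I] [Fintype J] (s : Finset T) (A : T → Matrix I J ℝ)
    (B : Matrix I J ℝ) :
    auxIn (∑ t ∈ s, A t) B = ∑ t ∈ s, auxIn (A t) B := by
  classical
  induction s using Finset.induction_on with
  | empty => simp [auxIn]
  | insert t s ht ih => rw [Finset.sum_insert ht, Finset.sum_insert ht, auxIn_add, ih]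

lemma aux_frob_nonneg {I J : Type*} [Fintype I] [Fintype J] (A : Matrix I J ℝ) :
    0 ≤ frobNormSq A :=
  Finset.sum_nonneg fun _ _ => Finset.sum_nonneg fun _ _ => sq_nonneg _

lemma aux_bessel {I J T : Type*} [Fintype I] [Fintype J] [Fintype T] [DecidableEq T]
    (E : T → Matrix I J ℝ) (e : ℝ) (he : 0 < e)
    (hE : ∀ b b', auxIn (E b) (E b') = if b = b' then e else 0) (X : Matrix I J ℝ) :
    ∑ b, auxIn X (E b) ^ 2 ≤ e * frobNormSq X := by
  have h0 := aux_frob_nonneg (e • X - ∑ b, auxIn X (E b) • E b)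
  set V := ∑ b, auxIn X (E b) • E b with hV
  have h1 : auxIn V X = ∑ b, auxIn X (E b) ^ 2 := by
    rw [hV, auxIn_sum]
    refine Finset.sum_congr rfl fun b _ => ?_
    rw [auxIn_smul, auxIn_comm, sq]
  have h2 : ∀ b, auxIn V (E b) = e * auxIn X (E b) := by
    intro b
    rw [hV, auxIn_sum]
    simp_rw [auxIn_smul, hE]
    simp [mul_comm]
  have h3 : auxIn V V = e * ∑ b, auxIn X (E b) ^ 2 := by
    conv_lhs => rw [hV, auxIn_sum]
    rw [Finset.mul_sum]
    refine Finset.sum_congr rfl fun b _ => ?_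
    rw [auxIn_smul, ← hV, auxIn_comm (E b) V, h2]
    ring
  rw [← auxIn_self, auxIn_sub, auxIn_smul, auxIn_comm, auxIn_sub, auxIn_smul,
    auxIn_comm V (e • X - V), auxIn_sub, auxIn_smul, auxIn_comm X V, h1, h3, auxIn_self] at h0
  have : 0 ≤ e * (e * frobNormSq X - ∑ b, auxIn X (E b) ^ 2) := by linarith
  have := nonneg_of_mul_nonneg_right this he
  linarith

/-- sign -/
def auxS (b : Bool) : ℝ := if b then 1 else -1

lemma auxS_sq (b : Bool) : auxS b ^ 2 = 1 := by cases b <;> simp [auxS]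
lemma auxS_not (b : Bool) : auxS (!b) = - auxS b := by cases b <;> simp [auxS]

/-- flip one bit -/
def auxFlip {T : Type*} [DecidableEq T] (b : T) (w : T → Bool) : T → Bool :=
  Function.update w b (!(w b))

lemma auxFlip_flip {T : Type*} [DecidableEq T] (b : T) : Function.Involutive (auxFlip b) := by
  intro w
  simp [auxFlip]

lemma aux_assouad {I J T : Type*} [Fintype I] [Fintype J] [DecidableEq J] [Fintype T] [DecidableEq T]
    (N : ℕ) (σ : ℝ≥0) (hσ : σ ≠ 0)
    (ν : Measure (J → ℝ)) [IsProbabilityMeasure ν] (a : ℝ)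
    (hint2 : ∀ i j, Integrable (fun x : J → ℝ => x i * x j) ν)
    (hcov : ∀ i j, ∫ x, x i * x j ∂ν = if i = j then a else 0)
    (C : Matrix I J ℝ) (E : T → Matrix I J ℝ) (e : ℝ) (he : 0 < e)
    (hE : ∀ b b', auxIn (E b) (E b') = if b = b' then e else 0)
    (𝒟 : Set (Matrix I J ℝ)) (hD : ∀ w : T → Bool, C + ∑ b, auxS (w b) • E b ∈ 𝒟) :
    ENNReal.ofReal ((Fintype.card T : ℝ) * e * (1 - N * (a * e) / σ ^ 2) / 2) ≤
      minimaxRisk N ν σ 𝒟 := by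
  unfold _root_.minimaxRisk
  refine le_iInf fun est => le_iInf fun hest => ?_
  set R := ⨆ D ∈ 𝒟, ∫⁻ Y, ENNReal.ofReal (frobNormSq (est Y - D)) ∂ obsLaw N D ν σ with hR
  set q := N * (a * e) / (σ : ℝ) ^ 2 with hq
  let Dw : (T → Bool) → Matrix I J ℝ := fun w => C + ∑ b, auxS (w b) • E b
  have hent : ∀ i j, Measurable (fun Y => est Y i j) := fun i j =>
    (measurable_pi_apply j).comp ((measurable_pi_apply (X := fun _ : I => J → ℝ) i).comp hest)
  let θ : T → (Fin N → I → ℝ) → ℝ := fun b Y => auxIn (est Y - C) (E b) / e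
  have hθ : ∀ b, Measurable (θ b) := by
    intro b
    simp only [θ, auxIn, Matrix.sub_apply]
    fun_prop
  have hin : ∀ w b Y, auxIn (est Y - Dw w) (E b) = e * (θ b Y - auxS (w b)) := by
    intro w b Y
    simp only [θ, Dw]
    rw [auxIn_sub, auxIn_add, auxIn_sum, auxIn_sub]
    simp_rw [auxIn_smul, hE]
    simp
    field_simp
    ring
  have hbes : ∀ w Y, ∑ b, e * (θ b Y - auxS (w b)) ^ 2 ≤ frobNormSq (est Y - Dw w) := by
    intro w Y
    have h := aux_bessel E e he hE (est Y - Dw w)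
    simp_rw [hin] at h
    have h2 : ∑ b, (e * (θ b Y - auxS (w b))) ^ 2 = e * ∑ b, e * (θ b Y - auxS (w b)) ^ 2 := by
      rw [Finset.mul_sum]
      refine Finset.sum_congr rfl fun b _ => ?_
      ring
    rw [h2] at h
    exact le_of_mul_le_mul_left h he
  let F : T → (T → Bool) → ℝ≥0∞ := fun b w =>
    ∫⁻ Y, ENNReal.ofReal ((θ b Y - auxS (w b)) ^ 2) ∂ obsLaw N (Dw w) ν σ
  have hRw : ∀ w, ENNReal.ofReal e * ∑ b, F b w ≤ R := by
    intro w
    calc ENNReal.ofReal e * ∑ b, F b w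
        = ∫⁻ Y, ENNReal.ofReal (∑ b, e * (θ b Y - auxS (w b)) ^ 2) ∂ obsLaw N (Dw w) ν σ := by
          simp only [F]
          rw [← lintegral_finsetSum _ (fun b _ => by have := hθ b; fun_prop),
            ← lintegral_const_mul _ (by fun_prop)]
          refine lintegral_congr fun Y => ?_
          rw [← Finset.mul_sum, ENNReal.ofReal_mul he.le,
            ENNReal.ofReal_sum_of_nonneg fun b _ => sq_nonneg _]
      _ ≤ ∫⁻ Y, ENNReal.ofReal (frobNormSq (est Y - Dw w)) ∂ obsLaw N (Dw w) ν σ :=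
          lintegral_mono fun Y => ENNReal.ofReal_le_ofReal (hbes w Y)
      _ ≤ R := le_iSup₂ (f := fun D (_ : D ∈ 𝒟) =>
          ∫⁻ Y, ENNReal.ofReal (frobNormSq (est Y - D)) ∂ obsLaw N D ν σ) (Dw w) (hD w)
  have hpair : ∀ b w, ENNReal.ofReal (1 - q) ≤ F b w + F b (auxFlip b w) := by
    intro b w
    have h := aux_two N σ hσ ν a hint2 hcov (Dw w - auxS (w b) • E b) (auxS (w b) • E b)
      (fun Y => ENNReal.ofReal ((θ b Y - auxS (w b)) ^ 2))
      (fun Y => ENNReal.ofReal ((θ b Y - auxS (auxFlip b w b)) ^ 2))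
      (by have := hθ b; fun_prop) (by have := hθ b; fun_prop) (by
        intro Y
        rw [← ENNReal.ofReal_add (sq_nonneg _) (sq_nonneg _)]
        have : (2 : ℝ≥0∞) = ENNReal.ofReal 2 := by simp
        rw [this]
        apply ENNReal.ofReal_le_ofReal
        simp only [auxFlip, Function.update_self, auxS_not]
        nlinarith [auxS_sq (w b), sq_nonneg (θ b Y)])
    have e1 : Dw w - auxS (w b) • E b + auxS (w b) • E b = Dw w := sub_add_cancel _ _
    have e2 : Dw w - auxS (w b) • E b + -(auxS (w b) • E b) = Dw (auxFlip b w) := by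
      simp only [Dw]
      rw [← Finset.add_sum_erase _ _ (Finset.mem_univ b),
        ← Finset.add_sum_erase _ (fun c => auxS (auxFlip b w c) • E c) (Finset.mem_univ b)]
      have : ∑ c ∈ Finset.univ.erase b, auxS (auxFlip b w c) • E c =
          ∑ c ∈ Finset.univ.erase b, auxS (w c) • E c := by
        refine Finset.sum_congr rfl fun c hc => ?_
        rw [auxFlip, Function.update_of_ne (Finset.ne_of_mem_erase hc)]
      rw [this]
      simp only [auxFlip, Function.update_self, auxS_not, neg_smul]
      abel
    have e3 : frobNormSq (auxS (w b) • E b) = e := by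
      rw [← auxIn_self, auxIn_smul, auxIn_comm, auxIn_smul, hE]
      simp only [if_true]
      rw [← mul_assoc, ← sq, auxS_sq, one_mul]
    rw [e1, e2, e3] at h
    exact h
  have hsum : ∀ b, (Fintype.card (T → Bool) : ℝ≥0∞) * ENNReal.ofReal (1 - q) ≤ 2 * ∑ w, F b w := by
    intro b
    have h1 : ∑ w, F b (auxFlip b w) = ∑ w, F b w :=
      Equiv.sum_comp (auxFlip_flip b).toPerm (F b)
    calc (Fintype.card (T → Bool) : ℝ≥0∞) * ENNReal.ofReal (1 - q)
        = ∑ w : T → Bool, ENNReal.ofReal (1 - q) := by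
          rw [Finset.sum_const, nsmul_eq_mul, Finset.card_univ]
      _ ≤ ∑ w, (F b w + F b (auxFlip b w)) := Finset.sum_le_sum fun w _ => hpair b w
      _ = 2 * ∑ w, F b w := by rw [Finset.sum_add_distrib, h1, two_mul]
  have htot : (Fintype.card (T → Bool) : ℝ≥0∞) *
      ((Fintype.card T : ℝ≥0∞) * ENNReal.ofReal e * ENNReal.ofReal (1 - q)) ≤
      (Fintype.card (T → Bool) : ℝ≥0∞) * (2 * R) := by
    calc (Fintype.card (T → Bool) : ℝ≥0∞) *
          ((Fintype.card T : ℝ≥0∞) * ENNReal.ofReal e * ENNReal.ofReal (1 - q))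
        = ENNReal.ofReal e * ∑ b : T, (Fintype.card (T → Bool) : ℝ≥0∞) * ENNReal.ofReal (1 - q) := by
          rw [Finset.sum_const, nsmul_eq_mul, Finset.card_univ]; ring
      _ ≤ ENNReal.ofReal e * ∑ b : T, 2 * ∑ w, F b w := by
          exact mul_le_mul' le_rfl (Finset.sum_le_sum fun b _ => hsum b)
      _ = 2 * ∑ w, ENNReal.ofReal e * ∑ b, F b w := by
          rw [← Finset.mul_sum, ← Finset.mul_sum, Finset.sum_comm]; ring
      _ ≤ 2 * ∑ w : T → Bool, R := by
          gcongr with w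
          exact hRw w
      _ = _ := by rw [Finset.sum_const, nsmul_eq_mul, Finset.card_univ]; ring
  rw [ENNReal.mul_le_mul_iff_right (by simp) (by simp)] at htot
  rw [ENNReal.ofReal_div_of_pos (by norm_num), ENNReal.ofReal_mul (by positivity),
    ENNReal.ofReal_mul (by positivity), ENNReal.ofReal_natCast]
  refine ENNReal.div_le_of_le_mul ?_
  rw [ENNReal.ofReal_ofNat, mul_comm R]
  exact htot

lemma aux_onb {m : ℕ} (b : OrthonormalBasis (Fin m) ℝ (EuclideanSpace ℝ (Fin m))) (l l' : Fin m) :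
    ∑ i, b l i * b l' i = if l = l' then 1 else 0 := by
  have h := orthonormal_iff_ite.1 b.orthonormal l' l
  rw [PiLp.inner_apply] at h
  simp only [RCLike.inner_apply, conj_trivial] at h
  rw [h]
  simp [eq_comm]

lemma aux_coef {m : ℕ} (b : OrthonormalBasis (Fin m) ℝ (EuclideanSpace ℝ (Fin m)))
    (cf : Fin m → ℝ) :
    ∑ i, (∑ l, cf l * b l i) ^ 2 = ∑ l, cf l ^ 2 := by
  simp_rw [sq, Finset.sum_mul_sum]
  rw [Finset.sum_comm]
  refine Finset.sum_congr rfl fun l _ => ?_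
  rw [Finset.sum_comm]
  have : ∀ l', ∑ i, cf l * b l i * (cf l' * b l' i) = cf l * cf l' * (if l = l' then 1 else 0) := by
    intro l'
    rw [← aux_onb b l l', Finset.mul_sum]
    exact Finset.sum_congr rfl fun i _ => by ring
  simp_rw [this]
  simp

lemma aux_col {m : ℕ} (b : OrthonormalBasis (Fin m) ℝ (EuclideanSpace ℝ (Fin m))) (i0 : Fin m)
    (x : ℝ) (y : {l // l ≠ i0} → ℝ) :
    ∑ i, (x * b i0 i + ∑ l : {l // l ≠ i0}, y l * b l i) ^ 2 = x ^ 2 + ∑ l, y l ^ 2 := by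
  have h := aux_coef b (fun l => if h : l = i0 then x else y ⟨l, h⟩)
  rw [Fintype.sum_eq_add_sum_subtype_ne
    (fun l => (if h : l = i0 then x else y ⟨l, h⟩) ^ 2) i0] at h
  simp_rw [fun i : Fin m => Fintype.sum_eq_add_sum_subtype_ne
    (fun l => (if h : l = i0 then x else y ⟨l, h⟩) * b l i) i0] at h
  have h2 : ∀ l : {l // l ≠ i0}, (if h : l.1 = i0 then x else y ⟨l.1, h⟩) = y l := by
    intro l; simp [l.2]
  simpa [h2] using h

lemma aux_exists_onb {m : ℕ} (i0 : Fin m) (v : Fin m → ℝ) (hv : ∑ i, v i ^ 2 = 1) :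
    ∃ b : OrthonormalBasis (Fin m) ℝ (EuclideanSpace ℝ (Fin m)), ∀ i, b i0 i = v i := by
  have hn : ‖(WithLp.toLp 2 v : EuclideanSpace ℝ (Fin m))‖ = 1 := by
    rw [EuclideanSpace.norm_eq]
    simp [hv]
  obtain ⟨b, hb⟩ := Orthonormal.exists_orthonormalBasis_extension_of_card_eq (𝕜 := ℝ)
    (E := EuclideanSpace ℝ (Fin m)) (ι := Fin m) (by simp)
    (v := fun _ => (WithLp.toLp 2 v : EuclideanSpace ℝ (Fin m))) (s := {i0}) (by
      constructor
      · intro i; exact hn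
      · intro i j hij
        exact absurd (Subsingleton.elim i j) hij)
  refine ⟨b, fun i => ?_⟩
  rw [hb i0 rfl]

lemma aux_kron_apply {K : ℕ} {m p : Fin K → ℕ} (Dk : ∀ k, Matrix (Fin (m k)) (Fin (p k)) ℝ)
    (k : Fin K) (A : Matrix (Fin (m k)) (Fin (p k)) ℝ) (i : ∀ k, Fin (m k)) (j : ∀ k, Fin (p k)) :
    kronFamily (Function.update Dk k A) i j =
      A (i k) (j k) * ∏ k' ∈ Finset.univ.erase k, Dk k' (i k') (j k') := by
  rw [kronFamily, Matrix.of_apply, ← Finset.mul_prod_erase _ _ (Finset.mem_univ k),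
    Function.update_self]
  congr 1
  refine Finset.prod_congr rfl fun k' hk' => ?_
  rw [Function.update_of_ne (Finset.ne_of_mem_erase hk')]

/-- Kronecker product as a linear map in slot k -/
def auxL {K : ℕ} {m p : Fin K → ℕ} (Dk : ∀ k, Matrix (Fin (m k)) (Fin (p k)) ℝ)
    (k : Fin K) : Matrix (Fin (m k)) (Fin (p k)) ℝ →ₗ[ℝ]
      Matrix (∀ k, Fin (m k)) (∀ k, Fin (p k)) ℝ where
  toFun A := kronFamily (Function.update Dk k A)
  map_add' A B := by
    ext i j
    rw [Matrix.add_apply, aux_kron_apply, aux_kron_apply, aux_kron_apply, Matrix.add_apply, add_mul]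
  map_smul' c A := by
    ext i j
    rw [RingHom.id_apply, Matrix.smul_apply, aux_kron_apply, aux_kron_apply, Matrix.smul_apply,
      smul_eq_mul, smul_eq_mul, mul_assoc]

lemma aux_kron_in {K : ℕ} {m p : Fin K → ℕ} (A B : ∀ k, Matrix (Fin (m k)) (Fin (p k)) ℝ) :
    auxIn (kronFamily A) (kronFamily B) = ∏ k, auxIn (A k) (B k) := by
  simp only [auxIn, kronFamily, Matrix.of_apply]
  rw [Finset.prod_univ_sum, Fintype.piFinset_univ]
  refine Finset.sum_congr rfl fun i _ => ?_
  rw [Finset.prod_univ_sum, Fintype.piFinset_univ]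
  refine Finset.sum_congr rfl fun j _ => ?_
  rw [Finset.prod_mul_distrib]

lemma aux_unit_frob {m p : ℕ} (A : Matrix (Fin m) (Fin p) ℝ) (h : hasUnitColumns A) :
    auxIn A A = p := by
  rw [auxIn_self, frobNormSq, Finset.sum_comm]
  simp [h _]

lemma aux_L_in {K : ℕ} {m p : Fin K → ℕ} (Dk : ∀ k, Matrix (Fin (m k)) (Fin (p k)) ℝ)
    (hu : ∀ k, hasUnitColumns (Dk k)) (k : Fin K) (A B : Matrix (Fin (m k)) (Fin (p k)) ℝ) :
    auxIn (auxL Dk k A) (auxL Dk k B) = auxIn A B * ∏ k' ∈ Finset.univ.erase k, (p k' : ℝ) := by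
  change auxIn (kronFamily _) (kronFamily _) = _
  rw [aux_kron_in, ← Finset.mul_prod_erase _ _ (Finset.mem_univ k), Function.update_self,
    Function.update_self]
  congr 1
  refine Finset.prod_congr rfl fun k' hk' => ?_
  rw [Function.update_of_ne (Finset.ne_of_mem_erase hk'),
    Function.update_of_ne (Finset.ne_of_mem_erase hk'), aux_unit_frob _ (hu k')]

lemma aux_main {K : ℕ} {m p : Fin K → ℕ} (N : ℕ) (hp : ∀ k, 0 < p k)
    (σ : ℝ≥0) (hσ : σ ≠ 0)
    (Dk : ∀ k, Matrix (Fin (m k)) (Fin (p k)) ℝ) (hu : ∀ k, hasUnitColumns (Dk k))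
    (ν : Measure ((∀ k, Fin (p k)) → ℝ)) [IsProbabilityMeasure ν] (a : ℝ)
    (hint2 : ∀ i j, Integrable (fun x : (∀ k, Fin (p k)) → ℝ => x i * x j) ν)
    (hcov : ∀ i j, ∫ x, x i * x j ∂ν = if i = j then a else 0)
    (r : ℝ) (hr : 0 < r) (k : Fin K) (hk : 2 ≤ m k) (d : ℝ) (hd0 : 0 < d) (hd1 : d ≤ 1)
    (hdr : 2 * (∏ k, (p k : ℝ)) * d < r ^ 2) :
    ENNReal.ofReal ((∏ k, (p k : ℝ)) * d *
      (1 - N * (a * ((∏ k, (p k : ℝ)) * d / (((m k : ℝ) - 1) * p k))) / σ ^ 2) / 2) ≤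
      minimaxRisk N ν σ (ksBall K m p (kronFamily Dk) r) := by
  classical
  have hm1 : (0 : ℝ) < (m k : ℝ) - 1 := by
    have : (2 : ℝ) ≤ m k := by exact_mod_cast hk
    linarith
  have hpk : (0 : ℝ) < p k := by exact_mod_cast hp k
  let i0 : Fin (m k) := ⟨0, by omega⟩
  have hb : ∀ c : Fin (p k), ∃ b : OrthonormalBasis (Fin (m k)) ℝ (EuclideanSpace ℝ (Fin (m k))),
      ∀ i, b i0 i = Dk k i c := fun c => aux_exists_onb i0 (fun i => Dk k i c) (hu k c)
  choose b hb using hb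
  set γ := Real.sqrt (d / ((m k : ℝ) - 1)) with hγ
  have hγ2 : γ ^ 2 = d / ((m k : ℝ) - 1) := Real.sq_sqrt (by positivity)
  set κ := Real.sqrt (1 - d) with hκ
  have hκ2 : κ ^ 2 = 1 - d := Real.sq_sqrt (by linarith)
  have hκ0 : 0 ≤ κ := Real.sqrt_nonneg _
  set P' := ∏ k' ∈ Finset.univ.erase k, (p k' : ℝ) with hP'
  have hP'0 : 0 < P' := Finset.prod_pos fun k' _ => by exact_mod_cast hp k'
  have hP : (∏ k, (p k : ℝ)) = p k * P' := (Finset.mul_prod_erase _ _ (Finset.mem_univ k)).symm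
  let T := {l : Fin (m k) // l ≠ i0} × Fin (p k)
  let F : T → Matrix (Fin (m k)) (Fin (p k)) ℝ := fun t =>
    Matrix.of fun i j => if j = t.2 then γ * b t.2 t.1 i else 0
  have hcard0 : (Fintype.card {l : Fin (m k) // l ≠ i0} : ℝ) = (m k : ℝ) - 1 := by
    rw [Fintype.card_subtype_compl, Fintype.card_fin, Fintype.card_unique, Nat.cast_sub (by omega)]
    simp
  have hcard : (Fintype.card T : ℝ) = ((m k : ℝ) - 1) * p k := by
    rw [Fintype.card_prod, Nat.cast_mul, hcard0, Fintype.card_fin]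
  have hF : ∀ t t', auxIn (F t) (F t') = if t = t' then γ ^ 2 else 0 := by
    rintro ⟨l, c⟩ ⟨l', c'⟩
    simp only [auxIn, F, Matrix.of_apply]
    by_cases hc : c = c'
    · subst hc
      have : ∀ i : Fin (m k), ∑ j, ((if j = c then γ * b c l i else 0) *
          (if j = c then γ * b c l' i else 0)) = γ ^ 2 * (b c l i * b c l' i) := by
        intro i
        rw [Finset.sum_eq_single c]
        · simp; ring
        · intro j _ hj; simp [hj]
        · simp
      simp_rw [this]
      rw [← Finset.mul_sum, aux_onb]
      by_cases hl : l = l'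
      · simp [hl]
      · have : (l : Fin (m k)) ≠ l' := fun h => hl (Subtype.ext h)
        have h3 : ((l, c) : T) ≠ (l', c) := fun h => hl (congrArg Prod.fst h)
        rw [if_neg this, if_neg h3, mul_zero]
    · have h3 : ((l, c) : T) ≠ (l', c') := fun h => hc (congrArg Prod.snd h)
      rw [if_neg h3]
      refine Finset.sum_eq_zero fun i _ => Finset.sum_eq_zero fun j _ => ?_
      by_cases hj : j = c
      · have : j ≠ c' := fun h => hc (hj ▸ h)
        simp [this]
      · simp [hj]
  have hAw : ∀ (w : T → Bool) (x : ℝ) (i : Fin (m k)) (j : Fin (p k)),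
      (x • Dk k + ∑ t, auxS (w t) • F t) i j =
        x * b j i0 i + ∑ l : {l // l ≠ i0}, (auxS (w (l, j)) * γ) * b j l i := by
    intro w x i j
    rw [Matrix.add_apply, Matrix.smul_apply, smul_eq_mul, hb, Matrix.sum_apply]
    congr 1
    rw [Fintype.sum_prod_type]
    refine Finset.sum_congr rfl fun l _ => ?_
    rw [Finset.sum_eq_single j]
    · simp [F, mul_assoc]
    · intro c _ hc
      simp [F, hc.symm]
    · simp
  have hcolsum : ∀ (w : T → Bool) (x : ℝ) (j : Fin (p k)),
      ∑ i, (x • Dk k + ∑ t, auxS (w t) • F t) i j ^ 2 = x ^ 2 + d := by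
    intro w x j
    simp_rw [hAw]
    rw [aux_col]
    simp_rw [mul_pow, auxS_sq, hγ2]
    rw [Finset.sum_const, nsmul_eq_mul, Finset.card_univ, hcard0]
    field_simp
  have key := aux_assouad N σ hσ ν a hint2 hcov (auxL Dk k (κ • Dk k)) (fun t => auxL Dk k (F t))
    (γ ^ 2 * P') (by rw [hγ2]; positivity)
    (by
      intro t t'
      rw [aux_L_in Dk hu, hF]
      split_ifs <;> simp [hP'])
    (ksBall K m p (kronFamily Dk) r)
    (by
      intro w
      have e1 : auxL Dk k (κ • Dk k) + ∑ t, auxS (w t) • auxL Dk k (F t) =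
          auxL Dk k (κ • Dk k + ∑ t, auxS (w t) • F t) := by
        rw [map_add, map_sum]; simp_rw [map_smul]
      rw [e1]
      refine ⟨⟨Function.update Dk k (κ • Dk k + ∑ t, auxS (w t) • F t), ?_, rfl⟩, ?_⟩
      · intro k'
        by_cases hkk : k' = k
        · subst hkk
          rw [Function.update_self]
          intro j
          rw [hcolsum, hκ2]; ring
        · rw [Function.update_of_ne hkk]; exact hu k'
      · have e2 : kronFamily Dk = auxL Dk k (Dk k) := by
          change _ = kronFamily _
          rw [Function.update_eq_self]
        have e3 : κ • Dk k + ∑ t, auxS (w t) • F t - Dk k =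
            (κ - 1) • Dk k + ∑ t, auxS (w t) • F t := by
          rw [sub_smul, one_smul]; abel
        rw [e2, ← map_sub, frobNorm, ← auxIn_self, aux_L_in Dk hu, e3, auxIn_self, frobNormSq,
          Finset.sum_comm]
        simp_rw [hcolsum]
        rw [Real.sqrt_lt' hr]
        refine lt_of_le_of_lt ?_ hdr
        rw [Finset.sum_const, nsmul_eq_mul, Finset.card_univ, Fintype.card_fin, hP]
        have h1 : (κ - 1) ^ 2 + d ≤ 2 * d := by
          have : κ ≤ 1 := by nlinarith
          nlinarith
        have h2 := mul_le_mul_of_nonneg_left h1 (mul_pos hpk hP'0).le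
        calc _ = ↑(p k) * P' * ((κ - 1) ^ 2 + d) := by rw [hP']; ring
          _ ≤ _ := h2
          _ = _ := by ring)
  have e1 : γ ^ 2 * P' = (∏ k, (p k : ℝ)) * d / (((m k : ℝ) - 1) * p k) := by
    rw [hγ2, hP]; field_simp
  have e2 : (Fintype.card T : ℝ) * (γ ^ 2 * P') = (∏ k, (p k : ℝ)) * d := by
    rw [hcard, e1]; field_simp
  rw [e2, e1] at key
  exact key

/-- **Corollary 1** (minimax lower bound for KS dictionary learning with sparse
coefficients, under the random sparsity or the separable sparsity model). -/
theorem minimax_lower_bound_sparse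
    (K N s : ℕ) (hK : 0 < K) (hs : 0 < s) (m p : Fin K → ℕ)
    (hm : ∀ k, 0 < m k) (hp : ∀ k, 0 < p k)
    (σ : ℝ≥0) (hσ : 0 < σ) (σa : ℝ) (hσa : 0 < σa) (r : ℝ) (hr : 0 < r)
    (D0 : Matrix (∀ k, Fin (m k)) (∀ k, Fin (p k)) ℝ) (hD0 : D0 ∈ ksClass K m p)
    (ν : Measure ((∀ k, Fin (p k)) → ℝ)) [IsProbabilityMeasure ν]
    -- the coefficient vectors are `s`-sparse, with conditional second moments
    -- `𝔼[x_S x_Sᵀ | S] = σa² I_s`, and with support drawn either uniformly at random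
    -- over all `s`-subsets of `[p]` or according to the separable sparsity model
    (hmix : ∃ μ : Finset (∀ k, Fin (p k)) → Measure ((∀ k, Fin (p k)) → ℝ),
      (∀ S, IsProbabilityMeasure (μ S)) ∧
      (∀ S : Finset (∀ k, Fin (p k)), S.card = s → ∀ᵐ x ∂ μ S, ∀ i ∉ S, x i = 0) ∧
      (∀ S : Finset (∀ k, Fin (p k)), S.card = s → ∀ i ∈ S, ∀ j ∈ S,
        Integrable (fun x => x i * x j) (μ S) ∧
        ∫ x, x i * x j ∂ μ S = if i = j then σa ^ 2 else 0) ∧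
      (ν = ((Fintype.card (∀ k, Fin (p k))).choose s : ℝ≥0∞)⁻¹ •
            ∑ S ∈ Finset.powersetCard s (Finset.univ : Finset (∀ k, Fin (p k))), μ S ∨
        ∃ s' : Fin K → ℕ, s = ∏ k, s' k ∧
          ν = ((∏ k, (p k).choose (s' k) : ℕ) : ℝ≥0∞)⁻¹ •
            ∑ SS ∈ Finset.univ.filter
                (fun SS : ∀ k, Finset (Fin (p k)) => ∀ k, (SS k).card = s' k),
              μ (Fintype.piFinset SS)))
    -- so that the covariance of `x` is `(s/p) σa² I_p`
    (hint2 : ∀ i j, Integrable (fun x : (∀ k, Fin (p k)) → ℝ => x i * x j) ν)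
    (hcov : ∀ i j, ∫ x, x i * x j ∂ν =
      if i = j then ((s : ℝ) / ∏ k, (p k : ℝ)) * σa ^ 2 else 0)
    (t c₁ : ℝ) (ht0 : 0 < t) (ht1 : t < 1)
    (hc0 : 0 < c₁) (hc1 : c₁ < (1 - t) / (8 * Real.log 2)) :
    ENNReal.ofReal (t / 4 *
      min (∏ k, (p k : ℝ))
        (min (r ^ 2 / (2 * (K : ℝ)))
          ((σ : ℝ) ^ 2 * (∏ k, (p k : ℝ)) / (4 * (N : ℝ) * (K : ℝ) * (s : ℝ) * σa ^ 2) *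
            (c₁ * (∑ k, ((m k : ℝ) - 1) * (p k : ℝ)) -
              (K : ℝ) / 2 * Real.logb 2 (2 * (K : ℝ)) - 2)))) ≤
      minimaxRisk N ν σ (ksBall K m p D0 r) := by
  obtain ⟨Dk, hu, rfl⟩ := hD0
  set P := ∏ k, (p k : ℝ) with hP
  have hP0 : 0 < P := Finset.prod_pos fun k _ => by exact_mod_cast hp k
  set M := ∑ k, ((m k : ℝ) - 1) * (p k : ℝ) with hM
  set G := (K : ℝ) / 2 * Real.logb 2 (2 * (K : ℝ)) with hG
  set Z := (σ : ℝ) ^ 2 * P / (4 * (N : ℝ) * (K : ℝ) * (s : ℝ) * σa ^ 2) * (c₁ * M - G - 2) with hZ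
  set B := min P (min (r ^ 2 / (2 * (K : ℝ))) Z) with hB
  rcases le_or_gt B 0 with hB0 | hB0
  · rw [ENNReal.ofReal_of_nonpos]
    · exact zero_le
    · exact mul_nonpos_of_nonneg_of_nonpos (by positivity) hB0
  have hB1 : B ≤ P := min_le_left _ _
  have hB2 : B ≤ r ^ 2 / (2 * (K : ℝ)) := (min_le_right _ _).trans (min_le_left _ _)
  have hB3 : B ≤ Z := (min_le_right _ _).trans (min_le_right _ _)
  have hZ0 : 0 < Z := hB0.trans_le hB3
  have hK1 : (1 : ℝ) ≤ K := by exact_mod_cast hK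
  have hs0 : (0 : ℝ) < s := by exact_mod_cast hs
  have hσ0 : (0 : ℝ) < σ := by exact_mod_cast hσ
  have hN : (0 : ℝ) < N := by
    rcases Nat.eq_zero_or_pos N with h | h
    · rw [hZ, h] at hZ0
      simp at hZ0
    · exact_mod_cast h
  have hG0 : 0 ≤ G := by
    have : 0 ≤ Real.logb 2 (2 * (K : ℝ)) := Real.logb_nonneg (by norm_num) (by linarith)
    positivity
  have hden : 0 < (σ : ℝ) ^ 2 * P / (4 * (N : ℝ) * (K : ℝ) * (s : ℝ) * σa ^ 2) := by positivity
  have hX0 : 0 < c₁ * M - G - 2 := pos_of_mul_pos_right hZ0 hden.le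
  have hM0 : 0 < M := by
    have : 0 < c₁ * M := by linarith
    exact pos_of_mul_pos_right this hc0.le
  have : Nonempty (Fin K) := ⟨⟨0, hK⟩⟩
  obtain ⟨k, -, hk⟩ := Finset.exists_max_image (Finset.univ : Finset (Fin K))
    (fun k => ((m k : ℝ) - 1) * (p k : ℝ)) Finset.univ_nonempty
  have hMk : M ≤ K * (((m k : ℝ) - 1) * (p k : ℝ)) := by
    have := Finset.sum_le_card_nsmul (Finset.univ : Finset (Fin K))
      (fun k => ((m k : ℝ) - 1) * (p k : ℝ)) _ (fun k' h' => hk k' h')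
    rwa [nsmul_eq_mul, Finset.card_univ, Fintype.card_fin] at this
  have hMk0 : 0 < ((m k : ℝ) - 1) * (p k : ℝ) :=
    pos_of_mul_pos_right (hM0.trans_le hMk) (by linarith)
  have hmk : 2 ≤ m k := by
    have h1 : 0 < (m k : ℝ) - 1 := pos_of_mul_pos_left hMk0 (Nat.cast_nonneg _)
    have h2 : (1 : ℝ) < m k := by linarith
    exact_mod_cast h2
  have key := aux_main N hp σ hσ.ne' Dk hu ν ((s : ℝ) / P * σa ^ 2) hint2 hcov r hr k hmk
    (B / (2 * P)) (by positivity) (by rw [div_le_one (by positivity)]; linarith)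
    (by
      have h1 : 2 * P * (B / (2 * P)) = B := by field_simp
      have h2 : r ^ 2 / (2 * (K : ℝ)) ≤ r ^ 2 / 2 := by
        apply div_le_div_of_nonneg_left (by positivity) (by norm_num); linarith
      have h3 : 0 < r ^ 2 := by positivity
      rw [← hP, h1]
      linarith)
  refine le_trans (ENNReal.ofReal_le_ofReal ?_) key
  rw [← hP]
  set Mk := ((m k : ℝ) - 1) * (p k : ℝ) with hMkdef
  have e1 : P * (B / (2 * P)) = B / 2 := by field_simp
  rw [e1]
  have hZle : Z ≤ (σ : ℝ) ^ 2 * P * c₁ * Mk / (4 * N * s * σa ^ 2) := by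
    calc Z ≤ (σ : ℝ) ^ 2 * P / (4 * (N : ℝ) * (K : ℝ) * (s : ℝ) * σa ^ 2) * (c₁ * (K * Mk)) := by
          rw [hZ]
          apply mul_le_mul_of_nonneg_left _ hden.le
          have := mul_le_mul_of_nonneg_left hMk hc0.le
          linarith
      _ = _ := by field_simp
  have hq : N * ((s : ℝ) / P * σa ^ 2 * (B / 2 / Mk)) / (σ : ℝ) ^ 2 ≤ c₁ / 8 := by
    calc N * ((s : ℝ) / P * σa ^ 2 * (B / 2 / Mk)) / (σ : ℝ) ^ 2
        = N * s * σa ^ 2 / (2 * P * Mk * (σ : ℝ) ^ 2) * B := by field_simp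
      _ ≤ N * s * σa ^ 2 / (2 * P * Mk * (σ : ℝ) ^ 2) *
          ((σ : ℝ) ^ 2 * P * c₁ * Mk / (4 * N * s * σa ^ 2)) := by
          apply mul_le_mul_of_nonneg_left (hB3.trans hZle); positivity
      _ = c₁ / 8 := by field_simp; norm_num
  have hc : c₁ / 8 ≤ 1 - t := by
    have hl := Real.log_two_gt_d9
    have h1 : (1 - t) / (8 * Real.log 2) ≤ (1 - t) / 1 := by
      apply div_le_div_of_nonneg_left (by linarith) (by norm_num); linarith
    rw [div_one] at h1
    linarith
  nlinarith

end
end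

section
/- Let α > 0, β > 0, and let L ≥ 2 and m, p ≥ 1 be integers such that 2 L² exp( − β²/(4 α⁴ m p) ) < 1. Then there exist L matrices A_1, …, A_L ∈ {−α, +α}^{m×p} such that |⟨A_l, A_{l'}⟩| < β for every pair l ≠ l', where ⟨X,Y⟩ = Tr(Xᵀ Y). -/
open Real

noncomputable section

def sgn' (b : Bool) : ℝ := if b then 1 else -1

def ipb {ι : Type} [Fintype ι] (x y : ι → Bool) : ℝ := ∑ i, sgn' (x i) * sgn' (y i)

lemma ipb_comm {ι : Type} [Fintype ι] (x y : ι → Bool) : ipb x y = ipb y x := by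
  unfold ipb
  exact Finset.sum_congr rfl fun i _ => mul_comm _ _

lemma sum_exp_ipb {ι : Type} [Fintype ι] [DecidableEq ι] (x : ι → Bool) (s : ℝ) :
    ∑ y : ι → Bool, Real.exp (s * ipb x y) = (2 * Real.cosh s) ^ Fintype.card ι := by
  have h1 : ∀ y : ι → Bool, Real.exp (s * ipb x y)
      = ∏ i, Real.exp (s * (sgn' (x i) * sgn' (y i))) := by
    intro y
    rw [ipb, Finset.mul_sum, Real.exp_sum]
  simp_rw [h1]
  rw [← Fintype.prod_sum (fun i (b : Bool) => Real.exp (s * (sgn' (x i) * sgn' b)))]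
  have h2 : ∀ i, ∑ b : Bool, Real.exp (s * (sgn' (x i) * sgn' b)) = 2 * Real.cosh s := by
    intro i
    rw [Real.cosh_eq]
    cases x i <;> simp [sgn'] <;> ring
  simp_rw [h2]
  simp

lemma exists_good {ι : Type} [Fintype ι] [DecidableEq ι] (hN : 0 < Fintype.card ι)
    (t : ℝ) (ht : 0 < t) (k : ℕ) (A : ℕ → ι → Bool)
    (hk : 2 * (k : ℝ) < Real.exp (t ^ 2 / (2 * Fintype.card ι))) :
    ∃ y : ι → Bool, ∀ l < k, |ipb (A l) y| < t := by
  by_contra! hcon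
  set N : ℝ := ((Fintype.card ι : ℕ) : ℝ) with hNdef
  have hN' : 0 < N := by simpa [hNdef] using hN
  set s := t / N with hs
  have hs0 : 0 < s := by positivity
  have key : ∀ y : ι → Bool, Real.exp (s * t) ≤
      ∑ l ∈ Finset.range k, (Real.exp (s * ipb (A l) y) + Real.exp (-s * ipb (A l) y)) := by
    intro y
    obtain ⟨l, hl, hy⟩ := hcon y
    refine le_trans ?_ (Finset.single_le_sum (fun i _ => by positivity) (Finset.mem_range.2 hl))
    rcases le_abs.1 hy with h | h
    · have : Real.exp (s * t) ≤ Real.exp (s * ipb (A l) y) := by gcongr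
      linarith [Real.exp_pos (-s * ipb (A l) y)]
    · have : Real.exp (s * t) ≤ Real.exp (-s * ipb (A l) y) := by
        apply Real.exp_le_exp.2; nlinarith
      linarith [Real.exp_pos (s * ipb (A l) y)]
  have h1 := Finset.sum_le_sum (fun y (_ : y ∈ (Finset.univ : Finset (ι → Bool))) => key y)
  rw [Finset.sum_comm] at h1
  simp_rw [Finset.sum_add_distrib, sum_exp_ipb, Real.cosh_neg] at h1
  simp only [Finset.sum_const, Finset.card_univ, Fintype.card_fun, Fintype.card_bool,
    Finset.card_range, nsmul_eq_mul, mul_pow] at h1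
  push_cast at h1
  have h2 : Real.cosh s ^ Fintype.card ι ≤ Real.exp (t ^ 2 / (2 * N)) := by
    calc Real.cosh s ^ Fintype.card ι ≤ Real.exp (s ^ 2 / 2) ^ Fintype.card ι := by
          gcongr
          exact Real.cosh_le_exp_half_sq s
      _ = Real.exp (t ^ 2 / (2 * N)) := by
          rw [← Real.exp_nat_mul, ← hNdef, hs]
          congr 1
          field_simp
  have h3 : Real.exp (s * t) = Real.exp (t ^ 2 / (2 * N)) * Real.exp (t ^ 2 / (2 * N)) := by
    rw [← Real.exp_add, hs]
    congr 1
    field_simp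
    ring
  rw [h3] at h1
  set E := Real.exp (t ^ 2 / (2 * N)) with hE
  have hE0 : 0 < E := Real.exp_pos _
  have h4 : (2:ℝ) ^ Fintype.card ι * (E * E) ≤ 2 ^ Fintype.card ι * (2 * k * E) := by
    refine h1.trans ?_
    have : (k:ℝ) * (2 ^ Fintype.card ι * Real.cosh s ^ Fintype.card ι)
        ≤ k * (2 ^ Fintype.card ι * E) := by gcongr
    linarith
  have h5 := le_of_mul_le_mul_left h4 (by positivity)
  have h6 := le_of_mul_le_mul_right h5 hE0
  linarith

lemma exists_family {ι : Type} [Fintype ι] [DecidableEq ι] (hN : 0 < Fintype.card ι)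
    (t : ℝ) (ht : 0 < t) (L : ℕ)
    (hL : 2 * (L : ℝ) < Real.exp (t ^ 2 / (2 * Fintype.card ι))) :
    ∃ A : ℕ → ι → Bool, ∀ l < L, ∀ l' < l, |ipb (A l') (A l)| < t := by
  induction L with
  | zero => exact ⟨fun _ _ => true, by simp⟩
  | succ k ih =>
    push_cast at hL
    have hk : 2 * (k : ℝ) < Real.exp (t ^ 2 / (2 * Fintype.card ι)) := by linarith
    obtain ⟨A, hA⟩ := ih hk
    obtain ⟨y, hy⟩ := exists_good hN t ht k A hk
    refine ⟨fun l => if l = k then y else A l, fun l hl l' hl' => ?_⟩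
    have h1 : l' ≠ k := by omega
    by_cases h2 : l = k
    · simp only [h1, h2, if_true, if_false]
      exact hy l' (by omega)
    · simp only [h1, h2, if_false]
      exact hA l (by omega) l' hl'

/-- **Existence of well-separated sign matrices**: if `2 L² exp(-β²/(4α⁴ m p)) < 1`,
then there exist `L` matrices with `±α` entries whose pairwise trace inner products are
all smaller than `β` in absolute value. -/
theorem exists_separated_sign_matrices (L m p : ℕ) (hL : 2 ≤ L) (hm : 1 ≤ m) (hp : 1 ≤ p)
    (α β : ℝ) (hα : 0 < α) (hβ : 0 < β)
    (h : 2 * (L : ℝ) ^ 2 * Real.exp (-β ^ 2 / (4 * α ^ 4 * (m : ℝ) * (p : ℝ))) < 1) :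
    ∃ A : Fin L → Matrix (Fin m) (Fin p) ℝ,
      (∀ l i j, A l i j = α ∨ A l i j = -α) ∧
      ∀ l l' : Fin L, l ≠ l' → |∑ i, ∑ j, A l i j * A l' i j| < β := by
  have hm' : (0:ℝ) < m := by exact_mod_cast hm
  have hp' : (0:ℝ) < p := by exact_mod_cast hp
  have hL' : (2:ℝ) ≤ L := by exact_mod_cast hL
  have hcard : Fintype.card (Fin m × Fin p) = m * p := by simp
  have hb : 2 * (L:ℝ) < Real.exp ((β / α ^ 2) ^ 2 / (2 * Fintype.card (Fin m × Fin p))) := by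
    rw [hcard]
    push_cast
    rw [neg_div, Real.exp_neg, ← div_eq_mul_inv, div_lt_one (Real.exp_pos _)] at h
    have h1 : β ^ 2 / (4 * α ^ 4 * (m : ℝ) * (p : ℝ)) ≤ (β / α ^ 2) ^ 2 / (2 * (m * p)) := by
      rw [div_pow, div_div]
      apply div_le_div_of_nonneg_left (by positivity) (by positivity)
      have : 0 < α ^ 4 * m * p := by positivity
      nlinarith
    have h2 := Real.exp_le_exp.2 h1
    nlinarith
  obtain ⟨A, hA⟩ := exists_family (ι := Fin m × Fin p) (by rw [hcard]; positivity)
    (β / α ^ 2) (by positivity) L hb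
  refine ⟨fun l i j => α * sgn' (A l (i, j)), ?_, ?_⟩
  · intro l i j
    cases hh : A l (i, j) <;> simp [sgn', hh]
  · intro l l' hne
    have h1 : ∑ i, ∑ j, (α * sgn' (A l (i, j))) * (α * sgn' (A l' (i, j)))
        = α ^ 2 * ipb (A l) (A l') := by
      rw [ipb, Fintype.sum_prod_type, Finset.mul_sum]
      refine Finset.sum_congr rfl fun i _ => ?_
      rw [Finset.mul_sum]
      refine Finset.sum_congr rfl fun j _ => ?_
      ring
    have h2 : |ipb (A l) (A l')| < β / α ^ 2 := by
      rcases lt_or_gt_of_ne (fun hh => hne (Fin.ext hh) : (l : ℕ) ≠ l') with hlt | hlt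
      · exact hA l' l'.2 l hlt
      · rw [ipb_comm]
        exact hA l l.2 l' hlt
    rw [lt_div_iff₀ (by positivity)] at h2
    rw [h1, abs_mul, abs_of_pos (by positivity : 0 < α ^ 2)]
    linarith

end
end

section
/- Fix r > 0 and a reference dictionary D₀ = D_{0,1} ⊗ ⋯ ⊗ D_{0,K} in the Kronecker dictionary class, and assume m_k ≥ 2 for all k. Then for any t with 0 < t < 1, any c₁ with 0 < c₁ < t²/(8 log 2), and any ε' > 0 satisfying ε' < r² · min{1, r²/(2Kp)}, there exists a set D_L ⊆ X(D₀, r) of cardinality L = 2^{⌊ c₁ (Σ_{k=1}^K (m_k−1) p_k) − (K/2) log₂(2K) ⌋} such that for every pair of distinct dictionaries D_l, D_{l'} ∈ D_L one has (2p/r²)(1 − t) ε' ≤ ‖D_l − D_{l'}‖²_F ≤ (4Kp/r²) ε'. -/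
open MeasureTheory ProbabilityTheory Matrix Real
open scoped NNReal ENNReal

noncomputable section

def sg (b : Bool) : ℝ := if b then 1 else -1

lemma sg_sq (b : Bool) : sg b * sg b = 1 := by cases b <;> simp [sg]

lemma exists_compl {n : ℕ} (v : Fin n → ℝ) (hv : ∑ i, v i ^ 2 = 1) :
    ∃ U : Fin (n - 1) → Fin n → ℝ, (∀ l, ∑ i, v i * U l i = 0) ∧
      ∀ l l', ∑ i, U l i * U l' i = if l = l' then 1 else 0 := by
  set w : EuclideanSpace ℝ (Fin n) := WithLp.toLp 2 v with hw
  have hn : n ≠ 0 := by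
    rintro rfl
    simp at hv
  have hw0 : w ≠ 0 := by
    intro h
    have : ∀ i, v i = 0 := fun i => by
      have := congrArg (fun x : EuclideanSpace ℝ (Fin n) => x i) h
      simpa [hw] using this
    simp [this] at hv
  have hfr : Module.finrank ℝ (Submodule.span ℝ {w})ᗮ = n - 1 := by
    have : Fact (Module.finrank ℝ (EuclideanSpace ℝ (Fin n)) = (n - 1) + 1) :=
      ⟨by simp; omega⟩
    exact Submodule.finrank_orthogonal_span_singleton hw0
  let B := (stdOrthonormalBasis ℝ (Submodule.span ℝ {w})ᗮ).reindex (finCongr hfr)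
  refine ⟨fun l i => (B l : EuclideanSpace ℝ (Fin n)) i, ?_, ?_⟩
  · intro l
    have h := (B l).2
    rw [Submodule.mem_orthogonal_singleton_iff_inner_right] at h
    rw [← h]
    simp [PiLp.inner_apply, hw, mul_comm]
  · intro l l'
    have h := orthonormal_iff_ite.1 B.orthonormal l l'
    rw [← h]
    simp [PiLp.inner_apply, mul_comm]

lemma kron_sum {K : ℕ} {m p : Fin K → ℕ} (f : ∀ k, Fin (m k) → Fin (p k) → ℝ) :
    ∑ i : (∀ k, Fin (m k)), ∑ j : (∀ k, Fin (p k)), ∏ k, f k (i k) (j k)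
      = ∏ k, ∑ i, ∑ j, f k i j := by
  rw [Finset.prod_univ_sum, Fintype.piFinset_univ]
  refine Finset.sum_congr rfl fun i _ => ?_
  rw [Finset.prod_univ_sum, Fintype.piFinset_univ]

lemma frob_kron {K : ℕ} {m p : Fin K → ℕ} (A B : ∀ k, Matrix (Fin (m k)) (Fin (p k)) ℝ)
    (hA : ∀ k, hasUnitColumns (A k)) (hB : ∀ k, hasUnitColumns (B k))
    (a : Fin K → ℝ) (hab : ∀ k, ∑ j, ∑ i, A k i j * B k i j = p k * a k) :
    frobNormSq (kronFamily A - kronFamily B) = 2 * (∏ k, (p k : ℝ)) * (1 - ∏ k, a k) := by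
  have e : ∀ (i : ∀ k, Fin (m k)) (j : ∀ k, Fin (p k)),
      (kronFamily A - kronFamily B) i j ^ 2 =
       (∏ k, A k (i k) (j k) ^ 2) + (∏ k, B k (i k) (j k) ^ 2)
        - 2 * ∏ k, A k (i k) (j k) * B k (i k) (j k) := by
    intro i j
    simp only [kronFamily, Matrix.sub_apply, Matrix.of_apply, Finset.prod_pow,
      Finset.prod_mul_distrib]
    ring
  have one : ∀ C : ∀ k, Matrix (Fin (m k)) (Fin (p k)) ℝ, (∀ k, hasUnitColumns (C k)) →
      ∀ k, ∑ i, ∑ j, C k i j ^ 2 = p k := by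
    intro C hC k
    rw [Finset.sum_comm]
    simp [hC k _]
  unfold frobNormSq
  simp only [e, Finset.sum_add_distrib, Finset.sum_sub_distrib, ← Finset.mul_sum]
  rw [kron_sum (fun k i j => A k i j ^ 2), kron_sum (fun k i j => B k i j ^ 2),
    kron_sum (fun k i j => A k i j * B k i j)]
  simp only [one A hA, one B hB]
  have : ∀ k, ∑ i, ∑ j, A k i j * B k i j = p k * a k := fun k => by
    rw [Finset.sum_comm, hab k]
  simp only [this, Finset.prod_mul_distrib]
  ring

lemma one_sub_prod_le {ι : Type*} (s : Finset ι) (a : ι → ℝ) (h1 : ∀ i, |a i| ≤ 1) (c : ℝ)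
    (hc : ∀ i, 1 - a i ≤ c) : 1 - ∏ i ∈ s, a i ≤ s.card * c := by
  classical
  induction s using Finset.induction_on with
  | empty => simp
  | insert i s hi ih =>
    rw [Finset.prod_insert hi, Finset.card_insert_of_notMem hi]
    push_cast
    have h2 : |∏ i ∈ s, a i| ≤ 1 := by
      rw [Finset.abs_prod]
      exact Finset.prod_le_one (fun _ _ => abs_nonneg _) (fun i _ => h1 i)
    have h3 := (abs_le.1 (h1 i)).2
    have h4 := (abs_le.1 h2).2
    nlinarith [hc i]

lemma le_one_sub_prod {ι : Type*} [Fintype ι] (a : ι → ℝ) (h1 : ∀ i, |a i| ≤ 1) (c : ℝ)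
    (i : ι) (hc : |a i| ≤ 1 - c) : c ≤ 1 - ∏ i, a i := by
  classical
  have : |∏ i, a i| ≤ |a i| := by
    rw [Finset.abs_prod, ← Finset.mul_prod_erase _ _ (Finset.mem_univ i)]
    exact mul_le_of_le_one_right (abs_nonneg _)
      (Finset.prod_le_one (fun _ _ => abs_nonneg _) (fun i _ => h1 i))
  linarith [le_abs_self (∏ i, a i)]

lemma sum_exp {ι : Type*} [Fintype ι] [DecidableEq ι] (a : ι → Bool) (lam : ℝ) :
    ∑ b : ι → Bool, Real.exp (lam * ∑ i, sg (a i) * sg (b i)) ≤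
      2 ^ Fintype.card ι * Real.exp (lam ^ 2 / 2 * Fintype.card ι) := by
  have h : ∀ b : ι → Bool, Real.exp (lam * ∑ i, sg (a i) * sg (b i)) =
      ∏ i, Real.exp (lam * (sg (a i) * sg (b i))) := fun b => by
    rw [Finset.mul_sum, Real.exp_sum]
  simp only [h]
  rw [← Fintype.piFinset_univ, ← Finset.prod_univ_sum (fun _ => (Finset.univ : Finset Bool))
    (fun i c => Real.exp (lam * (sg (a i) * sg c)))]
  have h2 : ∀ i, ∑ c, Real.exp (lam * (sg (a i) * sg c)) = 2 * Real.cosh lam := fun i => by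
    rw [Real.cosh_eq]
    cases a i <;> simp [sg] <;> ring
  simp only [h2, Finset.prod_const, Finset.card_univ]
  rw [mul_pow]
  have h3 := Real.cosh_le_exp_half_sq lam
  calc _ ≤ 2 ^ Fintype.card ι * Real.exp (lam ^ 2 / 2) ^ Fintype.card ι := by
        gcongr
    _ = _ := by rw [← Real.exp_nat_mul]; ring_nf

lemma bad_count {K : ℕ} {ι : Fin K → Type} [∀ k, Fintype (ι k)] [∀ k, DecidableEq (ι k)]
    (t : ℝ) (ht : 0 < t) (a : ∀ k, ι k → Bool) (s : Finset (∀ k, ι k → Bool))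
    (hs : ∀ b ∈ s, ∀ k, t * Fintype.card (ι k) ≤ |∑ i, sg (a k i) * sg (b k i)|) :
    (s.card : ℝ) ≤ Fintype.card (∀ k, ι k → Bool) * (2 ^ K *
      Real.exp (- (t ^ 2 / 2 * ∑ k, (Fintype.card (ι k) : ℝ)))) := by
  set F : ∀ k, (ι k → Bool) → ℝ := fun k b =>
    Real.exp (-(t ^ 2 * Fintype.card (ι k))) * (Real.exp (t * ∑ i, sg (a k i) * sg (b i)) +
      Real.exp (-t * ∑ i, sg (a k i) * sg (b i))) with hF
  have hF0 : ∀ k b, 0 ≤ F k b := fun k b => by simp only [hF]; positivity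
  have hF1 : ∀ b ∈ s, ∀ k, 1 ≤ F k (b k) := by
    intro b hb k
    have h := hs b hb k
    simp only [hF]
    set S := ∑ i, sg (a k i) * sg (b k i)
    rw [mul_add, ← Real.exp_add, ← Real.exp_add]
    rcases le_abs.1 h with h | h
    · have : 1 ≤ Real.exp (-(t ^ 2 * Fintype.card (ι k)) + t * S) := by
        apply Real.one_le_exp; nlinarith
      linarith [Real.exp_pos (-(t ^ 2 * Fintype.card (ι k)) + -t * S)]
    · have : 1 ≤ Real.exp (-(t ^ 2 * Fintype.card (ι k)) + -t * S) := by
        apply Real.one_le_exp; nlinarith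
      linarith [Real.exp_pos (-(t ^ 2 * Fintype.card (ι k)) + t * S)]
  have hFs : ∀ k, ∑ b, F k b ≤ (Fintype.card (ι k → Bool) : ℝ) *
      (2 * Real.exp (-(t ^ 2 / 2 * Fintype.card (ι k)))) := by
    intro k
    simp only [hF, ← Finset.mul_sum, Finset.sum_add_distrib]
    have h1 := sum_exp (a k) t
    have h2 := sum_exp (a k) (-t)
    rw [neg_sq] at h2
    have h3 : Real.exp (-(t ^ 2 / 2 * Fintype.card (ι k))) =
        Real.exp (-(t ^ 2 * Fintype.card (ι k))) * Real.exp (t ^ 2 / 2 * Fintype.card (ι k)) := by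
      rw [← Real.exp_add]; ring_nf
    rw [h3]
    have h4 := Real.exp_pos (-(t ^ 2 * Fintype.card (ι k)))
    simp only [Fintype.card_fun, Fintype.card_bool]
    push_cast
    nlinarith [mul_le_mul_of_nonneg_left (add_le_add h1 h2) h4.le]
  calc (s.card : ℝ) = ∑ b ∈ s, 1 := by simp
    _ ≤ ∑ b ∈ s, ∏ k, F k (b k) := Finset.sum_le_sum fun b hb => by
        rw [← Finset.prod_const_one (s := (Finset.univ : Finset (Fin K)))]
        exact Finset.prod_le_prod (fun _ _ => zero_le_one) (fun k _ => hF1 b hb k)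
    _ ≤ ∑ b : (∀ k, ι k → Bool), ∏ k, F k (b k) :=
        Finset.sum_le_sum_of_subset_of_nonneg (Finset.subset_univ _)
          fun b _ _ => Finset.prod_nonneg fun k _ => hF0 k _
    _ = ∏ k, ∑ b, F k b := by rw [Finset.prod_univ_sum, Fintype.piFinset_univ]
    _ ≤ ∏ k, ((Fintype.card (ι k → Bool) : ℝ) *
      (2 * Real.exp (-(t ^ 2 / 2 * Fintype.card (ι k))))) :=
        Finset.prod_le_prod (fun k _ => Finset.sum_nonneg fun b _ => hF0 k b) fun k _ => hFs k
    _ = _ := by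
        rw [Finset.prod_mul_distrib, Finset.prod_mul_distrib, ← Real.exp_sum]
        simp [Fintype.card_pi, Finset.mul_sum]

lemma greedy {α : Type*} [Fintype α] [DecidableEq α] (R : α → α → Prop)
    (hsymm : ∀ x y, R x y → R y x) (hirr : ∀ x, ¬ R x x) (M : ℝ)
    (hM : ∀ a : α, ∀ s : Finset α, (∀ b ∈ s, ¬ R a b) → (s.card : ℝ) ≤ M) :
    ∃ A : Finset α, (∀ x ∈ A, ∀ y ∈ A, x ≠ y → R x y) ∧ (Fintype.card α : ℝ) ≤ A.card * M := by
  classical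
  obtain ⟨A, hA, hmax⟩ := Finset.exists_max_image
    ((Finset.univ : Finset (Finset α)).filter fun A => ∀ x ∈ A, ∀ y ∈ A, x ≠ y → R x y)
    Finset.card ⟨∅, by simp⟩
  simp only [Finset.mem_filter, Finset.mem_univ, true_and] at hA hmax
  refine ⟨A, hA, ?_⟩
  have hcov : (Finset.univ : Finset α) ⊆ A.biUnion fun a => Finset.univ.filter fun b => ¬ R a b := by
    intro x _
    simp only [Finset.mem_biUnion, Finset.mem_filter, Finset.mem_univ, true_and]
    by_contra! hx
    have hxA : x ∉ A := fun h => hirr x (hx x h)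
    have := hmax (insert x A) (by
      intro y hy z hz hyz
      rw [Finset.mem_insert] at hy hz
      rcases hy with rfl | hy <;> rcases hz with rfl | hz
      · exact absurd rfl hyz
      · exact hsymm _ _ (hx z hz)
      · exact hx y hy
      · exact hA y hy z hz hyz)
    rw [Finset.card_insert_of_notMem hxA] at this
    omega
  calc (Fintype.card α : ℝ) ≤ ((A.biUnion fun a => Finset.univ.filter fun b => ¬ R a b).card : ℝ) := by
        exact_mod_cast Finset.card_le_card hcov
    _ ≤ ∑ a ∈ A, ((Finset.univ.filter fun b => ¬ R a b).card : ℝ) := by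
        exact_mod_cast Finset.card_biUnion_le
    _ ≤ ∑ a ∈ A, M := Finset.sum_le_sum fun a _ => hM a _ (by simp)
    _ = _ := by simp

lemma size_bound (K : ℕ) (hK : 0 < K) (t c N : ℝ) (hN : 0 ≤ N)
    (hc1 : c < t ^ 2 / (8 * Real.log 2)) (A : ℝ)
    (hA1 : 1 ≤ A) (hA : Real.exp (t ^ 2 / 2 * N) ≤ A * 2 ^ K) :
    ((2 ^ ⌊c * N - (K : ℝ) / 2 * Real.logb 2 (2 * (K : ℝ))⌋₊ : ℕ) : ℝ) ≤ A := by
  set q := ⌊c * N - (K : ℝ) / 2 * Real.logb 2 (2 * (K : ℝ))⌋₊ with hq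
  rcases Nat.eq_zero_or_pos q with h | h
  · simpa [h] using hA1
  have hK1 : (1 : ℝ) ≤ K := by exact_mod_cast hK
  have hl : 1 ≤ Real.logb 2 (2 * (K : ℝ)) := by
    rw [Real.le_logb_iff_rpow_le (by norm_num) (by positivity)]
    simpa using hK1
  have h1 : (q : ℝ) ≤ c * N - (K : ℝ) / 2 * Real.logb 2 (2 * (K : ℝ)) := by
    apply Nat.floor_le
    by_contra hneg
    have := Nat.floor_of_nonpos (not_le.1 hneg).le
    omega
  have hlog : 0 < Real.log 2 := Real.log_pos (by norm_num)
  have hcN : c * N * Real.log 2 ≤ t ^ 2 / 8 * N := by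
    have : c * (8 * Real.log 2) ≤ t ^ 2 := by
      rw [lt_div_iff₀ (by positivity)] at hc1; exact hc1.le
    nlinarith
  have h2 : (q : ℝ) + K / 2 ≤ c * N := by nlinarith
  have hq0 : (0 : ℝ) ≤ q := by positivity
  have h3 : ((q : ℝ) + K) * Real.log 2 ≤ t ^ 2 / 2 * N := by nlinarith
  have h4 : (2 : ℝ) ^ (q + K) ≤ A * 2 ^ K := by
    refine le_trans ?_ hA
    rw [← Real.exp_log (show (0 : ℝ) < 2 ^ (q + K) by positivity), Real.log_pow]
    apply Real.exp_le_exp.2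
    push_cast
    exact h3
  rw [pow_add] at h4
  push_cast
  exact le_of_mul_le_mul_right h4 (by positivity)

lemma sum_ortho {n : ℕ} (v : Fin n → ℝ) (hv : ∑ i, v i ^ 2 = 1) (U : Fin (n - 1) → Fin n → ℝ)
    (hU : ∀ l, ∑ i, v i * U l i = 0)
    (hUU : ∀ l l', ∑ i, U l i * U l' i = if l = l' then 1 else 0)
    (x y x' y' : ℝ) (b b' : Fin (n - 1) → ℝ) :
    ∑ i, (x * v i + y * ∑ l, b l * U l i) * (x' * v i + y' * ∑ l, b' l * U l i)
      = x * x' + y * y' * ∑ l, b l * b' l := by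
  have hz : ∀ b : Fin (n - 1) → ℝ, ∑ i, v i * ∑ l, b l * U l i = 0 := by
    intro b
    simp only [Finset.mul_sum]
    rw [Finset.sum_comm]
    refine Finset.sum_eq_zero fun l _ => ?_
    have : ∑ i, v i * (b l * U l i) = b l * ∑ i, v i * U l i := by
      rw [Finset.mul_sum]; exact Finset.sum_congr rfl fun i _ => by ring
    rw [this, hU, mul_zero]
  have hbb : ∑ i, (∑ l, b l * U l i) * (∑ l, b' l * U l i) = ∑ l, b l * b' l := by
    simp only [Finset.sum_mul_sum]
    rw [Finset.sum_comm]
    refine Finset.sum_congr rfl fun l _ => ?_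
    rw [Finset.sum_comm]
    have : ∀ l', ∑ i, b l * U l i * (b' l' * U l' i) = b l * b' l' * (if l = l' then 1 else 0) := by
      intro l'
      rw [← hUU, Finset.mul_sum]; exact Finset.sum_congr rfl fun i _ => by ring
    simp [this]
  have : ∀ i, (x * v i + y * ∑ l, b l * U l i) * (x' * v i + y' * ∑ l, b' l * U l i) =
      x * x' * v i ^ 2 + x * y' * (v i * ∑ l, b' l * U l i) + y * x' * (v i * ∑ l, b l * U l i)
       + y * y' * ((∑ l, b l * U l i) * (∑ l, b' l * U l i)) := fun i => by ring
  simp only [this, Finset.sum_add_distrib, ← Finset.mul_sum, hz, hbb, hv]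
  ring

/-- **Lemma 2** (construction of a packing of the KS dictionary class): there exists a
set of `2^⌊c₁ Σ_k (m_k - 1) p_k - (K/2) log₂(2K)⌋` dictionaries in `X(D₀, r)` whose
pairwise squared Frobenius distances are between `(2p/r²)(1-t)ε'` and `(4Kp/r²)ε'`. -/
theorem ks_dictionary_packing
    (K : ℕ) (hK : 0 < K) (m p : Fin K → ℕ) (hm : ∀ k, 2 ≤ m k) (hp : ∀ k, 0 < p k)
    (r : ℝ) (hr : 0 < r)
    (D0k : ∀ k, Matrix (Fin (m k)) (Fin (p k)) ℝ)
    (hD0k : ∀ k, hasUnitColumns (D0k k))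
    (t c₁ ε' : ℝ) (ht0 : 0 < t) (ht1 : t < 1)
    (hc0 : 0 < c₁) (hc1 : c₁ < t ^ 2 / (8 * Real.log 2))
    (hε0 : 0 < ε')
    (hε : ε' < r ^ 2 * min 1 (r ^ 2 / (2 * (K : ℝ) * ∏ k, (p k : ℝ)))) :
    ∃ DL : Finset (Matrix (∀ k, Fin (m k)) (∀ k, Fin (p k)) ℝ),
      ↑DL ⊆ ksBall K m p (kronFamily D0k) r ∧
      DL.card = 2 ^ ⌊c₁ * (∑ k, ((m k : ℝ) - 1) * (p k : ℝ)) -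
        (K : ℝ) / 2 * Real.logb 2 (2 * (K : ℝ))⌋₊ ∧
      ∀ D₁ ∈ DL, ∀ D₂ ∈ DL, D₁ ≠ D₂ →
        2 * (∏ k, (p k : ℝ)) / r ^ 2 * (1 - t) * ε' ≤ frobNormSq (D₁ - D₂) ∧
        frobNormSq (D₁ - D₂) ≤ 4 * (K : ℝ) * (∏ k, (p k : ℝ)) / r ^ 2 * ε' := by
  have hprod : 0 < ∏ k, (p k : ℝ) := Finset.prod_pos fun k _ => by exact_mod_cast hp k
  have hK1 : (1 : ℝ) ≤ K := by exact_mod_cast hK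
  have hr2 : 0 < r ^ 2 := by positivity
  set P := ∏ k, (p k : ℝ) with hP
  obtain ⟨α, hα⟩ : ∃ α, α = ε' / r ^ 2 := ⟨_, rfl⟩
  have hα0 : 0 < α := by rw [hα]; positivity
  have hαm : α < min 1 (r ^ 2 / (2 * (K : ℝ) * P)) := by
    rw [hα, div_lt_iff₀ hr2]; linarith
  have hα1 : α < 1 := lt_of_lt_of_le hαm (min_le_left _ _)
  have hαr : 2 * K * P * α < r ^ 2 := by
    have := lt_of_lt_of_le hαm (min_le_right _ _)
    rw [lt_div_iff₀ (by positivity)] at this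
    linarith
  have e1 : 2 * P / r ^ 2 * (1 - t) * ε' = 2 * P * (α * (1 - t)) := by rw [hα]; field_simp
  have e2 : 4 * (K : ℝ) * P / r ^ 2 * ε' = 2 * P * (K * (2 * α)) := by rw [hα]; field_simp; ring
  rw [e1, e2]
  choose U hU hUU using fun k j => exists_compl (fun i => D0k k i j) (hD0k k j)
  have hm1 : ∀ k, (0 : ℝ) < (m k : ℝ) - 1 := fun k => by
    have : (2 : ℝ) ≤ m k := by exact_mod_cast hm k
    linarith
  have hmc : ∀ k, ((m k - 1 : ℕ) : ℝ) = (m k : ℝ) - 1 := fun k => by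
    rw [Nat.cast_sub (by have := hm k; omega)]; simp
  have hpk : ∀ k, (0 : ℝ) < p k := fun k => by exact_mod_cast hp k
  let ι : Fin K → Type := fun k => Fin (p k) × Fin (m k - 1)
  have hcard : ∀ k, (Fintype.card (ι k) : ℝ) = ((m k : ℝ) - 1) * p k := fun k => by
    simp only [ι, Fintype.card_prod, Fintype.card_fin]
    push_cast
    rw [hmc, mul_comm]
  have hcard0 : ∀ k, (0 : ℝ) < Fintype.card (ι k) := fun k => by
    rw [hcard]; exact mul_pos (hm1 k) (hpk k)
  let S : (∀ k, ι k → Bool) → (∀ k, ι k → Bool) → Fin K → ℝ :=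
    fun a b k => ∑ i, sg (a k i) * sg (b k i)
  let Dk : (∀ k, ι k → Bool) → ∀ k, Matrix (Fin (m k)) (Fin (p k)) ℝ := fun b k =>
    Matrix.of fun i j => √(1 - α) * D0k k i j +
      √(α / ((m k : ℝ) - 1)) * ∑ l, sg (b k (j, l)) * U k j l i
  have hsq1 : √(1 - α) * √(1 - α) = 1 - α := Real.mul_self_sqrt (by linarith)
  have hsq2 : ∀ k, √(α / ((m k : ℝ) - 1)) * √(α / ((m k : ℝ) - 1)) = α / ((m k : ℝ) - 1) :=
    fun k => Real.mul_self_sqrt (div_nonneg hα0.le (hm1 k).le)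
  have hin : ∀ a b k j, ∑ i, Dk a k i j * Dk b k i j =
      (1 - α) + α / ((m k : ℝ) - 1) * ∑ l, sg (a k (j, l)) * sg (b k (j, l)) := by
    intro a b k j
    have := sum_ortho (fun i => D0k k i j) (hD0k k j) (U k j) (hU k j) (hUU k j)
      (√(1 - α)) (√(α / ((m k : ℝ) - 1))) (√(1 - α)) (√(α / ((m k : ℝ) - 1)))
      (fun l => sg (a k (j, l))) (fun l => sg (b k (j, l)))
    rw [hsq1, hsq2] at this
    exact this
  have hunit : ∀ a k, hasUnitColumns (Dk a k) := by
    intro a k j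
    have h := hin a a k j
    simp only [sg_sq, Finset.sum_const, Finset.card_univ, Fintype.card_fin, nsmul_eq_mul,
      mul_one, hmc] at h
    rw [div_mul_cancel₀ _ (hm1 k).ne'] at h
    simp only [sq]
    rw [h]; ring
  have hD0in : ∀ a k, ∑ j, ∑ i, Dk a k i j * D0k k i j = p k * √(1 - α) := by
    intro a k
    have : ∀ j, ∑ i, Dk a k i j * D0k k i j = √(1 - α) := by
      intro j
      have := sum_ortho (fun i => D0k k i j) (hD0k k j) (U k j) (hU k j) (hUU k j)
        (√(1 - α)) (√(α / ((m k : ℝ) - 1))) 1 0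
        (fun l => sg (a k (j, l))) (fun l => 0)
      simpa [Dk] using this
    simp [this]
  have hDDin : ∀ a b k, ∑ j, ∑ i, Dk a k i j * Dk b k i j =
      p k * (1 - α * (1 - S a b k / Fintype.card (ι k))) := by
    intro a b k
    simp only [hin, Finset.sum_add_distrib, ← Finset.mul_sum]
    have : ∑ j, ∑ l, sg (a k (j, l)) * sg (b k (j, l)) = S a b k := by
      simp only [S, ι]
      rw [Fintype.sum_prod_type]
    rw [this, hcard]
    have := (hm1 k).ne'
    have := (hpk k).ne'
    simp only [Finset.sum_const, Finset.card_univ, Fintype.card_fin, nsmul_eq_mul]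
    field_simp
    ring
  have hS1 : ∀ a b k, |S a b k / Fintype.card (ι k)| ≤ 1 := by
    intro a b k
    rw [abs_div, abs_of_pos (hcard0 k), div_le_one (hcard0 k)]
    refine (Finset.abs_sum_le_sum_abs _ _).trans ?_
    have : ∀ i, |sg (a k i) * sg (b k i)| ≤ 1 := fun i => by
      cases a k i <;> cases b k i <;> simp [sg]
    calc _ ≤ ∑ i : ι k, (1 : ℝ) := Finset.sum_le_sum fun i _ => this i
      _ = _ := by simp
  have hdist := fun a b => frob_kron (Dk a) (Dk b) (hunit a) (hunit b) _ (hDDin a b)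
  have habs : ∀ a b k, |1 - α * (1 - S a b k / Fintype.card (ι k))| ≤ 1 := by
    intro a b k
    obtain ⟨h1, h2⟩ := abs_le.1 (hS1 a b k)
    rw [abs_le]
    constructor <;> nlinarith
  let R : (∀ k, ι k → Bool) → (∀ k, ι k → Bool) → Prop := fun a b =>
    ∃ k, |S a b k| < t * Fintype.card (ι k)
  have hlow : ∀ a b, R a b →
      2 * P * (α * (1 - t)) ≤ frobNormSq (kronFamily (Dk a) - kronFamily (Dk b)) := by
    rintro a b ⟨k, hk⟩
    rw [hdist]
    refine mul_le_mul_of_nonneg_left ?_ (by positivity)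
    refine le_one_sub_prod _ (habs a b) _ k ?_
    have h : |S a b k / Fintype.card (ι k)| ≤ t := by
      rw [abs_div, abs_of_pos (hcard0 k), div_le_iff₀ (hcard0 k)]; exact hk.le
    obtain ⟨h1, h2⟩ := abs_le.1 h
    rw [abs_le]
    constructor <;> nlinarith
  have hup : ∀ a b, 
      frobNormSq (kronFamily (Dk a) - kronFamily (Dk b)) ≤ 2 * P * (K * (2 * α)) := by
    intro a b
    rw [hdist]
    refine mul_le_mul_of_nonneg_left ?_ (by positivity)
    have := one_sub_prod_le Finset.univ _ (habs a b) (2 * α) (fun k => by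
      obtain ⟨h1, h2⟩ := abs_le.1 (hS1 a b k)
      nlinarith)
    simpa using this
  have hball : ∀ a, kronFamily (Dk a) ∈ ksBall K m p (kronFamily D0k) r := by
    intro a
    refine ⟨⟨Dk a, hunit a, rfl⟩, ?_⟩
    unfold frobNorm
    rw [Real.sqrt_lt' hr, frob_kron (Dk a) D0k (hunit a) hD0k (fun _ => √(1 - α)) (hD0in a)]
    have h0 := Real.sqrt_nonneg (1 - α)
    have h1 : √(1 - α) ≤ 1 := Real.sqrt_le_one.2 (by linarith)
    have := one_sub_prod_le (Finset.univ : Finset (Fin K)) (fun _ => √(1 - α))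
      (fun _ => by rw [abs_of_nonneg h0]; exact h1) α (fun _ => by nlinarith)
    simp only [Finset.card_univ, Fintype.card_fin] at this
    have h2 := mul_le_mul_of_nonneg_left this (show 0 ≤ 2 * P by positivity)
    linarith
  obtain ⟨A, hA, hAc⟩ := greedy R (by
      rintro x y ⟨k, hk⟩
      refine ⟨k, ?_⟩
      simpa only [S, mul_comm (sg (y k _))] using hk)
    (by
      rintro x ⟨k, hk⟩
      have : S x x k = Fintype.card (ι k) := by simp [S, sg_sq]
      rw [this, abs_of_pos (hcard0 k)] at hk
      have := hcard0 k
      nlinarith)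
    _ (fun a s hs => bad_count t ht0 a s (fun b hb k => by
      have := hs b hb
      simp only [R, not_exists, not_lt] at this
      exact this k))
  simp only [hcard] at hAc
  set N := ∑ k, ((m k : ℝ) - 1) * (p k : ℝ) with hN
  have hN0 : 0 ≤ N := Finset.sum_nonneg fun k _ => (mul_pos (hm1 k) (hpk k)).le
  have hpos : (0 : ℝ) < Fintype.card (∀ k, ι k → Bool) := by
    exact_mod_cast Fintype.card_pos
  have hA2 : Real.exp (t ^ 2 / 2 * N) ≤ A.card * 2 ^ K := by
    have h1 : (1 : ℝ) ≤ A.card * (2 ^ K * Real.exp (-(t ^ 2 / 2 * N))) := by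
      refine le_of_mul_le_mul_left ?_ hpos
      linarith
    rw [Real.exp_neg] at h1
    have h2 := Real.exp_pos (t ^ 2 / 2 * N)
    rw [← mul_assoc, ← div_eq_mul_inv, le_div_iff₀ h2] at h1
    linarith
  have hA1 : (1 : ℝ) ≤ A.card := by
    have : A.card ≠ 0 := by
      intro h
      rw [h] at hA2
      have := Real.exp_pos (t ^ 2 / 2 * N)
      simp at hA2
      linarith
    exact_mod_cast Nat.one_le_iff_ne_zero.2 this
  have hsz := size_bound K hK t c₁ N hN0 hc1 A.card hA1 hA2
  obtain ⟨B, hBA, hBc⟩ := Finset.exists_subset_card_eq (Nat.cast_le.1 hsz)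
  have hinj : Set.InjOn (fun a => kronFamily (Dk a)) (B : Set (∀ k, ι k → Bool)) := by
    intro a ha b hb hab
    by_contra hne
    have h := hlow a b (hA a (hBA ha) b (hBA hb) hne)
    have h0 : frobNormSq (kronFamily (Dk a) - kronFamily (Dk b)) = 0 := by
      have hab' : kronFamily (Dk a) = kronFamily (Dk b) := hab
      rw [hab']; simp [frobNormSq]
    rw [h0] at h
    have : 0 < 2 * P * (α * (1 - t)) := by
      have : 0 < 1 - t := by linarith
      positivity
    linarith
  classical
  refine ⟨B.image (fun a => kronFamily (Dk a)), ?_, ?_, ?_⟩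
  · intro D hD
    simp only [Finset.coe_image, Set.mem_image] at hD
    obtain ⟨a, _, rfl⟩ := hD
    exact hball a
  · rw [Finset.card_image_of_injOn hinj, hBc]
  · intro D₁ h1 D₂ h2 hne
    simp only [Finset.mem_image] at h1 h2
    obtain ⟨a, ha, rfl⟩ := h1
    obtain ⟨b, hb, rfl⟩ := h2
    refine ⟨hlow a b (hA a (hBA ha) b (hBA hb) ?_), hup a b⟩
    rintro rfl
    exact hne rfl

end
end

section
/- Let K ≥ 1, r > 0, and 0 < ε' < r². For each k ∈ [K] let D_{(k,0)}, D_{(k,1)} ∈ ℝ^{m_k × p_k} be matrices such that every column of D_{(k,0)} has unit ℓ₂ norm, every column of D_{(k,1)} has ℓ₂ norm r^{−1/K}, and for every j the j-th column of D_{(k,0)} is orthogonal to the j-th column of D_{(k,1)}. Set η = √(1 − ε'/r²), ν = √(r^{2/K} ε'/r²), and D_k = η D_{(k,0)} + ν D_{(k,1)}. Then (i) every column of D = D_1 ⊗ ⋯ ⊗ D_K has unit ℓ₂ norm, and (ii) ‖D − D_{(1,0)} ⊗ ⋯ ⊗ D_{(K,0)}‖²_F ≤ 2Kp ε'/r²,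 where p = ∏_{k=1}^K p_k. -/
open Matrix Real

noncomputable section

theorem kron_inner {K : ℕ} {m p : Fin K → ℕ}
    (A B : ∀ k, Matrix (Fin (m k)) (Fin (p k)) ℝ) (j : ∀ k, Fin (p k)) :
    ∑ i, kronFamily A i j * kronFamily B i j
      = ∏ k, ∑ i, A k i (j k) * B k i (j k) := by
  simp only [kronFamily, Matrix.of_apply, ← Finset.prod_mul_distrib]
  rw [Fintype.prod_sum]

theorem kron_unit {K : ℕ} {m p : Fin K → ℕ}
    (A : ∀ k, Matrix (Fin (m k)) (Fin (p k)) ℝ) (h : ∀ k, hasUnitColumns (A k)) :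
    hasUnitColumns (kronFamily A) := by
  intro j
  simp only [sq]
  rw [kron_inner]
  refine Finset.prod_eq_one (fun k _ => ?_)
  simpa only [sq] using h k (j k)

/-- **Perturbed Kronecker dictionaries**: mixing reference factors `D_{(k,0)}` (unit-norm
columns) with column-wise orthogonal perturbation factors `D_{(k,1)}` (columns of norm
`r^{-1/K}`) using weights `η = √(1 - ε'/r²)` and `ν = √(r^{2/K} ε'/r²)` produces a
Kronecker dictionary with unit-norm columns that is within squared Frobenius distance
`2Kp ε'/r²` of the reference Kronecker dictionary. -/
theorem perturbed_kron_dictionary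
    (K : ℕ) (hK : 0 < K) (m p : Fin K → ℕ)
    (r ε' : ℝ) (hr : 0 < r) (hε0 : 0 < ε') (hε : ε' < r ^ 2)
    (D0 D1 : ∀ k, Matrix (Fin (m k)) (Fin (p k)) ℝ)
    (hD0 : ∀ k, hasUnitColumns (D0 k))
    (hD1 : ∀ k j, ∑ i, (D1 k i j) ^ 2 = (r ^ ((2 : ℝ) / (K : ℝ)))⁻¹)
    (horth : ∀ k j, ∑ i, D0 k i j * D1 k i j = 0) :
    hasUnitColumns
      (kronFamily fun k =>
        Real.sqrt (1 - ε' / r ^ 2) • D0 k +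
          Real.sqrt (r ^ ((2 : ℝ) / (K : ℝ)) * ε' / r ^ 2) • D1 k) ∧
    frobNormSq
        (kronFamily (fun k =>
          Real.sqrt (1 - ε' / r ^ 2) • D0 k +
            Real.sqrt (r ^ ((2 : ℝ) / (K : ℝ)) * ε' / r ^ 2) • D1 k) -
          kronFamily D0) ≤
      2 * (K : ℝ) * (∏ k, (p k : ℝ)) * ε' / r ^ 2 := by
  set x : ℝ := ε' / r ^ 2 with hx
  have hr2 : 0 < r ^ 2 := by positivity
  have hx0 : 0 < x := by positivity
  have hx1 : x < 1 := by rw [hx, div_lt_one hr2]; exact hε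
  set c : ℝ := r ^ ((2 : ℝ) / (K : ℝ)) with hc
  have hc0 : 0 < c := Real.rpow_pos_of_pos hr _
  set η : ℝ := Real.sqrt (1 - x) with hη
  set ν : ℝ := Real.sqrt (c * ε' / r ^ 2) with hν
  have hη2 : η ^ 2 = 1 - x := Real.sq_sqrt (by linarith)
  have hν2 : ν ^ 2 = c * x := by
    rw [hν, Real.sq_sqrt (by positivity), hx]; ring
  have hη0 : 0 ≤ η := Real.sqrt_nonneg _
  have hη1 : η ≤ 1 := by nlinarith
  have hcol : ∀ k j, ∑ i, ((η • D0 k + ν • D1 k) i j) ^ 2 = 1 := by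
    intro k j
    have h : ∀ i, ((η • D0 k + ν • D1 k) i j) ^ 2
        = η ^ 2 * (D0 k i j) ^ 2 + 2 * η * ν * (D0 k i j * D1 k i j)
          + ν ^ 2 * (D1 k i j) ^ 2 := by
      intro i
      simp only [Matrix.add_apply, Matrix.smul_apply, smul_eq_mul]
      ring
    simp only [h, Finset.sum_add_distrib, ← Finset.mul_sum]
    rw [hD0 k j, hD1 k j, horth k j, hη2, hν2]
    field_simp
    ring
  have hin : ∀ k j, ∑ i, ((η • D0 k + ν • D1 k) i j) * D0 k i j = η := by
    intro k j
    have h : ∀ i, ((η • D0 k + ν • D1 k) i j) * D0 k i j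
        = η * (D0 k i j) ^ 2 + ν * (D0 k i j * D1 k i j) := by
      intro i
      simp only [Matrix.add_apply, Matrix.smul_apply, smul_eq_mul]
      ring
    simp only [h, Finset.sum_add_distrib, ← Finset.mul_sum]
    rw [hD0 k j, horth k j]
    ring
  have hU := kron_unit (fun k => η • D0 k + ν • D1 k) hcol
  have hU0 := kron_unit D0 hD0
  refine ⟨hU, ?_⟩
  have hI : ∀ j, ∑ i, kronFamily (fun k => η • D0 k + ν • D1 k) i j * kronFamily D0 i j
      = η ^ K := by
    intro j
    rw [kron_inner, Finset.prod_congr rfl (fun k _ => hin k (j k))]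
    simp
  have hb : 1 - K * x ≤ η ^ K := by
    have h1 : 1 + (K : ℝ) * (-x) ≤ (1 + -x) ^ K :=
      one_add_mul_le_pow (by linarith) K
    have h2 : (η ^ 2) ^ K ≤ η ^ K := by
      apply pow_le_pow_left₀ (by positivity)
      nlinarith
    rw [hη2] at h2
    have h3 : (1 + -x) = 1 - x := by ring
    rw [h3] at h1
    linarith
  unfold frobNormSq
  rw [Finset.sum_comm]
  have hd : ∀ j, ∑ i, ((kronFamily (fun k => η • D0 k + ν • D1 k) - kronFamily D0) i j) ^ 2
      ≤ 2 * K * x := by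
    intro j
    have h : ∀ i, ((kronFamily (fun k => η • D0 k + ν • D1 k) - kronFamily D0) i j) ^ 2
        = kronFamily (fun k => η • D0 k + ν • D1 k) i j ^ 2
          - 2 * (kronFamily (fun k => η • D0 k + ν • D1 k) i j * kronFamily D0 i j)
          + kronFamily D0 i j ^ 2 := by
      intro i
      rw [Matrix.sub_apply]
      ring
    simp only [h, Finset.sum_add_distrib, Finset.sum_sub_distrib, ← Finset.mul_sum]
    rw [hU j, hU0 j, hI j]
    linarith
  refine (Finset.sum_le_sum (fun j _ => hd j)).trans (le_of_eq ?_)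
  rw [Finset.sum_const, Finset.card_univ, Fintype.card_pi, nsmul_eq_mul, hx]
  simp only [Fintype.card_fin]
  push_cast
  ring

end
end

section
/- Let K ≥ 1, r > 0, σ_a > 0, σ ≥ 0, s ≥ 1, and 0 < ε' with s ε'/r² ≤ 1. Set η = √(1 − ε'/r²) and ν = √(r^{2/K} ε'/r²). For each k ∈ [K] let D⁰_k, D¹_k, D'¹_k ∈ ℝ^{m_k × s} be matrices with spectral norms ‖D⁰_k‖₂ ≤ √(3/2), ‖D¹_k‖₂ ≤ √(s/r^{2/K}), and ‖D'¹_k‖₂ ≤ √(s/r^{2/K}). Define M = (η D⁰_1 + ν D¹_1) ∗ ⋯ ∗ (η D⁰_K + ν D¹_K) and M' = (η D⁰_1 + ν D'¹_1) ∗ ⋯ ∗ (η D⁰_K + ν D'¹_K) (K-fold Khatri–Rao products, each in ℝ^{(∏_k m_k)×s}), and set Σ = σ_a² M Mᵀ + σ² I and Σ' = σ_a² M' M'ᵀ + σ² I. Then ‖Σ − Σ'‖₂ ≤ 3^{2K+1} σ_a² √(s ε'/r²). -/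
open Matrix Real

noncomputable section

/-- The `K`-fold Khatri–Rao (column-wise Kronecker) product of a family of matrices with
a common column index, realized on pi-type row indices. -/
def khatriRaoFamily {K s : ℕ} {m : Fin K → ℕ} (D : ∀ k, Matrix (Fin (m k)) (Fin s) ℝ) :
    Matrix (∀ k, Fin (m k)) (Fin s) ℝ :=
  Matrix.of fun i j => ∏ k, D k (i k) j


section Helpers
open scoped Matrix.Norms.L2Operator

lemma specNorm_eq {m n : Type*} [Fintype m] [Fintype n] [DecidableEq n] (A : Matrix m n ℝ) :
    specNorm A = ‖A‖ := by
  rw [Matrix.l2_opNorm_def]; rfl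

lemma sum_sq_mulVec_le {m n : Type*} [Fintype m] [Fintype n] [DecidableEq n]
    (A : Matrix m n ℝ) (v : n → ℝ) :
    ∑ i, (∑ j, A i j * v j) ^ 2 ≤ ‖A‖ ^ 2 * ∑ j, v j ^ 2 := by
  have h := Matrix.l2_opNorm_mulVec A (WithLp.toLp 2 v)
  have h2 := pow_le_pow_left₀ (norm_nonneg _) h 2
  rw [mul_pow, EuclideanSpace.norm_sq_eq, EuclideanSpace.norm_sq_eq] at h2
  simpa [Matrix.mulVec, dotProduct] using h2

lemma norm_le_of_sum_sq {m n : Type*} [Fintype m] [Fintype n] [DecidableEq n]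
    (A : Matrix m n ℝ) (c : ℝ) (hc : 0 ≤ c)
    (h : ∀ v : n → ℝ, ∑ i, (∑ j, A i j * v j) ^ 2 ≤ c ^ 2 * ∑ j, v j ^ 2) : ‖A‖ ≤ c := by
  rw [Matrix.l2_opNorm_def]
  refine ContinuousLinearMap.opNorm_le_bound _ hc fun v => ?_
  refine le_of_sq_le_sq ?_ (by positivity)
  rw [mul_pow, EuclideanSpace.norm_sq_eq, EuclideanSpace.norm_sq_eq]
  simpa [Matrix.mulVec, dotProduct] using h v.ofLp

lemma col_sq_le {m n : Type*} [Fintype m] [Fintype n] [DecidableEq n]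
    (A : Matrix m n ℝ) (j : n) : ∑ i, A i j ^ 2 ≤ ‖A‖ ^ 2 := by
  have h := sum_sq_mulVec_le A (Pi.single j 1)
  simpa [Pi.single_apply, Finset.sum_ite_eq] using h

lemma norm_khatriRao_le {n s : ℕ} {m : Fin (n+1) → ℕ}
    (D : ∀ k, Matrix (Fin (m k)) (Fin s) ℝ) :
    ‖khatriRaoFamily D‖ ≤ ∏ k, ‖D k‖ := by
  refine norm_le_of_sum_sq _ _ (Finset.prod_nonneg fun _ _ => norm_nonneg _) fun v => ?_
  rw [← (Fin.consEquiv (fun k => Fin (m k))).sum_comp, Fintype.sum_prod_type, Finset.sum_comm]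
  rw [Fin.prod_univ_succ, mul_pow]
  have key : ∀ i' : (∀ k : Fin n, Fin (m k.succ)),
      ∑ i0 : Fin (m 0), (∑ j, khatriRaoFamily D (Fin.consEquiv (fun k => Fin (m k)) (i0, i')) j * v j) ^ 2
      ≤ ‖D 0‖ ^ 2 * ∑ j, ((∏ k : Fin n, D k.succ (i' k) j) * v j) ^ 2 := by
    intro i'
    refine le_trans (le_of_eq ?_) (sum_sq_mulVec_le (D 0) _)
    simp [khatriRaoFamily, Fin.prod_univ_succ, Fin.consEquiv, mul_assoc]
  refine (Finset.sum_le_sum fun i' _ => key i').trans ?_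
  rw [← Finset.mul_sum, mul_assoc]
  refine mul_le_mul_of_nonneg_left ?_ (by positivity)
  rw [Finset.sum_comm, Finset.mul_sum]
  refine Finset.sum_le_sum fun j _ => ?_
  simp_rw [mul_pow]
  rw [← Finset.sum_mul]
  refine mul_le_mul_of_nonneg_right ?_ (by positivity)
  simp_rw [← Finset.prod_pow]
  rw [← Fintype.prod_sum (fun (k : Fin n) (i : Fin (m k.succ)) => D k.succ i j ^ 2)]
  exact Finset.prod_le_prod (fun k _ => Finset.sum_nonneg fun _ _ => sq_nonneg _)
    fun k _ => col_sq_le _ _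

lemma khatriRao_update_sub {K s : ℕ} {m : Fin K → ℕ}
    (D : ∀ k, Matrix (Fin (m k)) (Fin s) ℝ) (k : Fin K) (X Y : Matrix (Fin (m k)) (Fin s) ℝ) :
    khatriRaoFamily (Function.update D k X) - khatriRaoFamily (Function.update D k Y)
      = khatriRaoFamily (Function.update D k (X - Y)) := by
  have aux : ∀ (Z : Matrix (Fin (m k)) (Fin s) ℝ) (i : ∀ k, Fin (m k)) (j : Fin s),
      khatriRaoFamily (Function.update D k Z) i j
        = Z (i k) j * ∏ l ∈ Finset.univ.erase k, D l (i l) j := by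
    intro Z i j
    simp only [khatriRaoFamily, Matrix.of_apply]
    rw [← Finset.mul_prod_erase _ _ (Finset.mem_univ k), Function.update_self]
    congr 1
    refine Finset.prod_congr rfl fun l hl => ?_
    rw [Function.update_of_ne (Finset.ne_of_mem_erase hl)]
  ext i j
  rw [Matrix.sub_apply, aux, aux, aux, Matrix.sub_apply]
  ring

lemma khatriRao_diff {n s : ℕ} {m : Fin (n+1) → ℕ}
    (A B : ∀ k, Matrix (Fin (m k)) (Fin s) ℝ) (c d : ℝ) (hc : 1 ≤ c) (hd : 0 ≤ d)
    (hA : ∀ k, ‖A k‖ ≤ c) (hB : ∀ k, ‖B k‖ ≤ c) (hAB : ∀ k, ‖A k - B k‖ ≤ d)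
    (S : Finset (Fin (n+1))) :
    ‖khatriRaoFamily (S.piecewise A B) - khatriRaoFamily B‖ ≤ S.card * (d * c ^ (n+1)) := by
  induction S using Finset.induction_on with
  | empty => simp
  | insert k S hk ih =>
    have e : S.piecewise A B = Function.update (S.piecewise A B) k (B k) := by
      rw [eq_comm, Function.update_eq_self_iff, Finset.piecewise_eq_of_notMem _ _ _ hk]
    have h1 : ‖khatriRaoFamily ((insert k S).piecewise A B) - khatriRaoFamily (S.piecewise A B)‖
        ≤ d * c ^ (n+1) := by
      rw [Finset.piecewise_insert]
      conv_lhs => enter [1, 2]; rw [e]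
      rw [khatriRao_update_sub]
      refine (norm_khatriRao_le _).trans ?_
      have : d * c ^ (n+1) = ∏ l : Fin (n+1), ((if l = k then d else 1) * c) := by
        rw [Finset.prod_mul_distrib]; simp
      rw [this]
      refine Finset.prod_le_prod (fun _ _ => norm_nonneg _) fun l _ => ?_
      by_cases hl : l = k
      · subst hl
        rw [Function.update_self, if_pos rfl]
        nlinarith [hAB l]
      · rw [Function.update_of_ne hl, if_neg hl, one_mul]
        by_cases hS : l ∈ S
        · rw [Finset.piecewise_eq_of_mem _ _ _ hS]; exact hA l
        · rw [Finset.piecewise_eq_of_notMem _ _ _ hS]; exact hB l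
    rw [Finset.card_insert_of_notMem hk]
    have := norm_sub_le_norm_sub_add_norm_sub (khatriRaoFamily ((insert k S).piecewise A B))
      (khatriRaoFamily (S.piecewise A B)) (khatriRaoFamily B)
    push_cast
    linarith

lemma cov_aux {n s : ℕ} {m : Fin (n+1) → ℕ}
    (A B : ∀ k, Matrix (Fin (m k)) (Fin s) ℝ) (x : ℝ) (hx : 0 ≤ x)
    (hA : ∀ k, ‖A k‖ ≤ 9/4) (hB : ∀ k, ‖B k‖ ≤ 9/4) (hAB : ∀ k, ‖A k - B k‖ ≤ 2 * x) :
    ‖khatriRaoFamily A * (khatriRaoFamily A)ᵀ - khatriRaoFamily B * (khatriRaoFamily B)ᵀ‖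
      ≤ 3 ^ (2 * (n+1) + 1) * x := by
  have hd := khatriRao_diff A B (9/4) (2*x) (by norm_num) (by positivity) hA hB hAB Finset.univ
  rw [Finset.piecewise_univ, Finset.card_univ, Fintype.card_fin] at hd
  have hM : ∀ C : (∀ k, Matrix (Fin (m k)) (Fin s) ℝ), (∀ k, ‖C k‖ ≤ 9/4) →
      ‖khatriRaoFamily C‖ ≤ (9/4) ^ (n+1) := by
    intro C hC
    refine (norm_khatriRao_le C).trans ?_
    refine (Finset.prod_le_prod (fun _ _ => norm_nonneg _) fun k _ => hC k).trans ?_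
    rw [Finset.prod_const, Finset.card_univ, Fintype.card_fin]
  have hMA := hM A hA
  have hMB := hM B hB
  generalize khatriRaoFamily A = M at *
  generalize khatriRaoFamily B = N at *
  have ht : ∀ X : Matrix (∀ k, Fin (m k)) (Fin s) ℝ, ‖Xᵀ‖ = ‖X‖ := fun X => by
    rw [← Matrix.conjTranspose_eq_transpose_of_trivial, Matrix.l2_opNorm_conjTranspose]
  have e : M * Mᵀ - N * Nᵀ = M * (M - N)ᵀ + (M - N) * Nᵀ := by
    rw [Matrix.transpose_sub, Matrix.mul_sub, Matrix.sub_mul]; abel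
  have h1 := Matrix.l2_opNorm_mul M (M - N)ᵀ
  have h2 := Matrix.l2_opNorm_mul (M - N) Nᵀ
  rw [ht] at h1 h2
  have h3 := norm_add_le (M * (M - N)ᵀ) ((M - N) * Nᵀ)
  rw [← e] at h3
  set p : ℝ := (9/4 : ℝ) ^ (n+1) with hp
  have hp0 : 0 ≤ p := by positivity
  have h4 : ‖M‖ * ‖M - N‖ ≤ p * (((n+1 : ℕ) : ℝ) * (2 * x * p)) :=
    mul_le_mul hMA hd (norm_nonneg _) hp0
  have h5 : ‖M - N‖ * ‖N‖ ≤ (((n+1 : ℕ) : ℝ) * (2 * x * p)) * p :=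
    mul_le_mul hd hMB (norm_nonneg _) (by positivity)
  have hb := one_add_mul_le_pow (a := (1/3 : ℝ)) (by norm_num) (n+1)
  set k : ℝ := ((n+1 : ℕ) : ℝ) with hk
  have hk0 : 0 ≤ k := by positivity
  set q : ℝ := (1 + 1/3 : ℝ) ^ (n+1) with hq
  have hpq : (3 : ℝ) ^ (2 * (n+1) + 1) = 3 * (p * q) ^ 2 := by
    rw [hp, hq, ← mul_pow, ← pow_mul, pow_succ, mul_comm (n+1) 2]; norm_num; ring
  have h6 : 4 * k ≤ 3 * q ^ 2 := by nlinarith [sq_nonneg (1 - k * (1/3))]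
  have h7 : (4 * k) * (p ^ 2 * x) ≤ (3 * q ^ 2) * (p ^ 2 * x) :=
    mul_le_mul_of_nonneg_right h6 (by positivity)
  rw [hpq]
  linarith

lemma mix_aux {m s : ℕ} (X Y : Matrix (Fin m) (Fin s) ℝ) (η ν a x : ℝ) (hη0 : 0 ≤ η) (hη : η ≤ 1)
    (hν : 0 ≤ ν) (hx : ν * a = x) (hx1 : x ≤ 1) (hX : ‖X‖ ≤ √(3/2)) (hY : ‖Y‖ ≤ a) :
    ‖η • X + ν • Y‖ ≤ 9/4 := by
  have h1 := norm_add_le (η • X) (ν • Y)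
  rw [norm_smul, norm_smul, Real.norm_of_nonneg hη0, Real.norm_of_nonneg hν] at h1
  have h2 : √(3/2) ≤ (5/4 : ℝ) := by rw [Real.sqrt_le_left (by norm_num)]; norm_num
  have h3 : ν * ‖Y‖ ≤ ν * a := mul_le_mul_of_nonneg_left hY hν
  have h4 : η * ‖X‖ ≤ 1 * (5/4) := mul_le_mul hη (hX.trans h2) (norm_nonneg _) zero_le_one
  linarith

theorem cov_main
    (K s : ℕ) (hK : 0 < K) (hs : 1 ≤ s) (m : Fin K → ℕ)
    (r σa σ ε' : ℝ) (hr : 0 < r) (hσa : 0 < σa) (hσ : 0 ≤ σ)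
    (hε0 : 0 < ε') (hε : (s : ℝ) * ε' / r ^ 2 ≤ 1)
    (D0 D1 D1' : ∀ k, Matrix (Fin (m k)) (Fin s) ℝ)
    (hD0 : ∀ k, specNorm (D0 k) ≤ Real.sqrt (3 / 2))
    (hD1 : ∀ k, specNorm (D1 k) ≤ Real.sqrt ((s : ℝ) / r ^ ((2 : ℝ) / (K : ℝ))))
    (hD1' : ∀ k, specNorm (D1' k) ≤ Real.sqrt ((s : ℝ) / r ^ ((2 : ℝ) / (K : ℝ)))) :
    specNorm
        ((σa ^ 2 •
            (khatriRaoFamily (fun k =>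
                Real.sqrt (1 - ε' / r ^ 2) • D0 k +
                  Real.sqrt (r ^ ((2 : ℝ) / (K : ℝ)) * ε' / r ^ 2) • D1 k) *
              (khatriRaoFamily (fun k =>
                Real.sqrt (1 - ε' / r ^ 2) • D0 k +
                  Real.sqrt (r ^ ((2 : ℝ) / (K : ℝ)) * ε' / r ^ 2) • D1 k))ᵀ) +
            σ ^ 2 • (1 : Matrix (∀ k, Fin (m k)) (∀ k, Fin (m k)) ℝ)) -
          (σa ^ 2 •
            (khatriRaoFamily (fun k =>
                Real.sqrt (1 - ε' / r ^ 2) • D0 k +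
                  Real.sqrt (r ^ ((2 : ℝ) / (K : ℝ)) * ε' / r ^ 2) • D1' k) *
              (khatriRaoFamily (fun k =>
                Real.sqrt (1 - ε' / r ^ 2) • D0 k +
                  Real.sqrt (r ^ ((2 : ℝ) / (K : ℝ)) * ε' / r ^ 2) • D1' k))ᵀ) +
            σ ^ 2 • (1 : Matrix (∀ k, Fin (m k)) (∀ k, Fin (m k)) ℝ))) ≤
      3 ^ (2 * K + 1) * σa ^ 2 * Real.sqrt ((s : ℝ) * ε' / r ^ 2) := by
  obtain ⟨n, rfl⟩ : ∃ n, K = n + 1 := ⟨K - 1, by omega⟩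
  simp only [specNorm_eq] at *
  set R : ℝ := r ^ ((2 : ℝ) / ((n + 1 : ℕ) : ℝ)) with hR
  have hRpos : 0 < R := Real.rpow_pos_of_pos hr _
  have hx : √(R * ε' / r ^ 2) * √((s : ℝ) / R) = √((s : ℝ) * ε' / r ^ 2) := by
    rw [← Real.sqrt_mul (by positivity)]
    congr 1
    field_simp
  have hx1 : √((s : ℝ) * ε' / r ^ 2) ≤ 1 := by
    rw [Real.sqrt_le_left zero_le_one]; simpa using hε
  have hη : √(1 - ε' / r ^ 2) ≤ 1 := by
    rw [Real.sqrt_le_left zero_le_one]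
    have : 0 ≤ ε' / r ^ 2 := by positivity
    linarith
  have hν := Real.sqrt_nonneg (R * ε' / r ^ 2)
  have hη0 := Real.sqrt_nonneg (1 - ε' / r ^ 2)
  have hxn := Real.sqrt_nonneg ((s : ℝ) * ε' / r ^ 2)
  generalize √((s : ℝ) * ε' / r ^ 2) = x at *
  generalize √(R * ε' / r ^ 2) = ν at *
  generalize √(1 - ε' / r ^ 2) = η at *
  have hA := fun k => mix_aux (D0 k) (D1 k) η ν _ x hη0 hη hν hx hx1 (hD0 k) (hD1 k)
  have hB := fun k => mix_aux (D0 k) (D1' k) η ν _ x hη0 hη hν hx hx1 (hD0 k) (hD1' k)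
  have hAB : ∀ k, ‖(η • D0 k + ν • D1 k) - (η • D0 k + ν • D1' k)‖ ≤ 2 * x := by
    intro k
    rw [add_sub_add_left_eq_sub, ← smul_sub, norm_smul, Real.norm_of_nonneg hν]
    have h1 := norm_sub_le (D1 k) (D1' k)
    have h2 := mul_le_mul_of_nonneg_left (h1.trans (add_le_add (hD1 k) (hD1' k))) hν
    linarith
  have h := cov_aux _ _ x hxn hA hB hAB
  rw [add_sub_add_right_eq_sub, ← smul_sub, norm_smul, Real.norm_of_nonneg (sq_nonneg σa)]
  have h' := mul_le_mul_of_nonneg_left h (sq_nonneg σa)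
  linarith

end Helpers

/-- **Covariance perturbation bound, Khatri–Rao case**: for mixtures
`η D⁰_k + ν D¹_k` with `η = √(1 - ε'/r²)`, `ν = √(r^{2/K} ε'/r²)` and spectral norm
bounds `‖D⁰_k‖₂ ≤ √(3/2)`, `‖D¹_k‖₂, ‖D'¹_k‖₂ ≤ √(s/r^{2/K})`, the covariance matrices
built from the Khatri–Rao products satisfy `‖Σ - Σ'‖₂ ≤ 3^{2K+1} σa² √(s ε'/r²)`. -/
theorem covariance_diff_bound_khatriRao
    (K s : ℕ) (hK : 0 < K) (hs : 1 ≤ s) (m : Fin K → ℕ)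
    (r σa σ ε' : ℝ) (hr : 0 < r) (hσa : 0 < σa) (hσ : 0 ≤ σ)
    (hε0 : 0 < ε') (hε : (s : ℝ) * ε' / r ^ 2 ≤ 1)
    (D0 D1 D1' : ∀ k, Matrix (Fin (m k)) (Fin s) ℝ)
    (hD0 : ∀ k, specNorm (D0 k) ≤ Real.sqrt (3 / 2))
    (hD1 : ∀ k, specNorm (D1 k) ≤ Real.sqrt ((s : ℝ) / r ^ ((2 : ℝ) / (K : ℝ))))
    (hD1' : ∀ k, specNorm (D1' k) ≤ Real.sqrt ((s : ℝ) / r ^ ((2 : ℝ) / (K : ℝ)))) :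
    specNorm
        ((σa ^ 2 •
            (khatriRaoFamily (fun k =>
                Real.sqrt (1 - ε' / r ^ 2) • D0 k +
                  Real.sqrt (r ^ ((2 : ℝ) / (K : ℝ)) * ε' / r ^ 2) • D1 k) *
              (khatriRaoFamily (fun k =>
                Real.sqrt (1 - ε' / r ^ 2) • D0 k +
                  Real.sqrt (r ^ ((2 : ℝ) / (K : ℝ)) * ε' / r ^ 2) • D1 k))ᵀ) +
            σ ^ 2 • (1 : Matrix (∀ k, Fin (m k)) (∀ k, Fin (m k)) ℝ)) -
          (σa ^ 2 •
            (khatriRaoFamily (fun k =>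
                Real.sqrt (1 - ε' / r ^ 2) • D0 k +
                  Real.sqrt (r ^ ((2 : ℝ) / (K : ℝ)) * ε' / r ^ 2) • D1' k) *
              (khatriRaoFamily (fun k =>
                Real.sqrt (1 - ε' / r ^ 2) • D0 k +
                  Real.sqrt (r ^ ((2 : ℝ) / (K : ℝ)) * ε' / r ^ 2) • D1' k))ᵀ) +
            σ ^ 2 • (1 : Matrix (∀ k, Fin (m k)) (∀ k, Fin (m k)) ℝ))) ≤
      3 ^ (2 * K + 1) * σa ^ 2 * Real.sqrt ((s : ℝ) * ε' / r ^ 2) := by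
  exact cov_main K s hK hs m r σa σ ε' hr hσa hσ hε0 hε D0 D1 D1' hD0 hD1 hD1'


end
end

section
/- Let p = p₁p₂, let D = (I_{p₁} + Δ₁) ⊗ (I_{p₂} + Δ₂) with ‖Δ₁‖_F ≤ r₁ and ‖Δ₂‖_F ≤ r₂, and suppose (r₁ + r₂ + r₁r₂)√s ≤ 0.1. Let x ∈ {−1, 0, 1}^p have at most s nonzero entries, let η ∈ ℝ^p satisfy |η_l| < 0.4 for every l ∈ [p], and set y = D x + η. Then for every l ∈ [p]: y_l > 0.5 if x_l = 1, y_l < −0.5 if x_l = −1, and −0.5 < y_l < 0.5 if x_l = 0; consequently the entrywise thresholding rule x̂_l = 1 if y_l > 0.5, x̂_l = −1 if y_l < −0.5, and x̂_l = 0 otherwise recovers x exactly, i.e., x̂ = x. -/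
open Matrix Real

noncomputable section

theorem aux_row {n : ℕ} (A : Matrix (Fin n) (Fin n) ℝ) (r : ℝ) (h : frobNorm A ≤ r) (a : Fin n) :
    0 ≤ r ∧ ∑ j, A a j ^ 2 ≤ r ^ 2 := by
  have h0 : 0 ≤ r := (Real.sqrt_nonneg _).trans h
  refine ⟨h0, ?_⟩
  have h1 : frobNormSq A ≤ r ^ 2 := (Real.sqrt_le_left h0).1 h
  refine le_trans ?_ h1
  exact Finset.single_le_sum (f := fun i => ∑ j, A i j ^ 2)
    (fun i _ => Finset.sum_nonneg fun j _ => sq_nonneg _) (Finset.mem_univ a)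

theorem aux_cs {ι : Type*} [Fintype ι] (f g : ι → ℝ) (r t : ℝ) (hr : 0 ≤ r) (ht : 0 ≤ t)
    (hf : ∑ i, f i ^ 2 ≤ r ^ 2) (hg : ∑ i, g i ^ 2 ≤ t) :
    |∑ i, f i * g i| ≤ r * Real.sqrt t := by
  apply abs_le_of_sq_le_sq _ (by positivity)
  rw [mul_pow, Real.sq_sqrt ht]
  refine (Finset.sum_mul_sq_le_sq_mul_sq _ f g).trans ?_
  exact mul_le_mul hf hg (Finset.sum_nonneg fun j _ => sq_nonneg _) (sq_nonneg _)

/-- **Exact recovery of sparse ternary coefficients by thresholding**: if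
`(r₁ + r₂ + r₁r₂)√s ≤ 0.1` and the noise entries satisfy `|η_l| < 0.4`, then for
`y = ((I + Δ₁) ⊗ (I + Δ₂)) x + η` the entries of `y` lie on the correct side of the
thresholds `±0.5`, and entrywise thresholding recovers `x` exactly. -/
theorem thresholding_recovers_sparse_coefficients
    (p₁ p₂ s : ℕ) (r₁ r₂ : ℝ)
    (Δ₁ : Matrix (Fin p₁) (Fin p₁) ℝ) (Δ₂ : Matrix (Fin p₂) (Fin p₂) ℝ)
    (h₁ : frobNorm Δ₁ ≤ r₁) (h₂ : frobNorm Δ₂ ≤ r₂)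
    (hsmall : (r₁ + r₂ + r₁ * r₂) * Real.sqrt (s : ℝ) ≤ 0.1)
    (x : Fin p₁ × Fin p₂ → ℝ) (hx : ∀ l, x l = 1 ∨ x l = -1 ∨ x l = 0)
    (hxs : (Finset.univ.filter fun l => x l ≠ 0).card ≤ s)
    (η : Fin p₁ × Fin p₂ → ℝ) (hη : ∀ l, |η l| < 0.4)
    (y : Fin p₁ × Fin p₂ → ℝ)
    (hy : y = (Matrix.kroneckerMap (· * ·) (1 + Δ₁) (1 + Δ₂)).mulVec x + η) :
    (∀ l, (x l = 1 → 0.5 < y l) ∧ (x l = -1 → y l < -0.5) ∧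
      (x l = 0 → -0.5 < y l ∧ y l < 0.5)) ∧
    (fun l => if 0.5 < y l then (1 : ℝ) else if y l < -0.5 then -1 else 0) = x := by
  have hxsq : ∑ l, x l ^ 2 ≤ (s : ℝ) := by
    have e : ∑ l, x l ^ 2 = ((Finset.univ.filter fun l => x l ≠ 0).card : ℝ) := by
      rw [Finset.card_filter]
      push_cast
      refine Finset.sum_congr rfl fun l _ => ?_
      rcases hx l with h | h | h <;> simp [h]
    rw [e]
    exact_mod_cast hxs
  have hs0 : (0 : ℝ) ≤ s := Nat.cast_nonneg s
  have key : ∀ l, |y l - x l - η l| ≤ 0.1 := by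
    rintro ⟨a, b⟩
    obtain ⟨hr1, hrow1⟩ := aux_row Δ₁ r₁ h₁ a
    obtain ⟨hr2, hrow2⟩ := aux_row Δ₂ r₂ h₂ b
    have e : y (a, b) - x (a, b) - η (a, b) = ∑ i, Δ₁ a i * x (i, b) + ∑ j, Δ₂ b j * x (a, j)
        + ∑ l : Fin p₁ × Fin p₂, (Δ₁ a l.1 * Δ₂ b l.2) * x l := by
      have e1 : (Matrix.kroneckerMap (· * ·) (1 + Δ₁) (1 + Δ₂)).mulVec x (a, b)
          = x (a, b) + (∑ i, Δ₁ a i * x (i, b) + ∑ j, Δ₂ b j * x (a, j)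
        + ∑ l : Fin p₁ × Fin p₂, (Δ₁ a l.1 * Δ₂ b l.2) * x l) := by
        simp only [Matrix.mulVec, dotProduct, Fintype.sum_prod_type, Matrix.kroneckerMap_apply,
          Matrix.add_apply, Matrix.one_apply, add_mul, mul_add, Finset.sum_add_distrib]
        simp
        ring
      rw [hy, Pi.add_apply, e1]
      ring
    have c1 : |∑ i, Δ₁ a i * x (i, b)| ≤ r₁ * Real.sqrt s := by
      refine aux_cs _ _ _ _ hr1 hs0 hrow1 (le_trans ?_ hxsq)
      rw [Fintype.sum_prod_type]
      exact Finset.sum_le_sum fun i _ => Finset.single_le_sum (f := fun j => x (i, j) ^ 2)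
        (fun j _ => sq_nonneg _) (Finset.mem_univ b)
    have c2 : |∑ j, Δ₂ b j * x (a, j)| ≤ r₂ * Real.sqrt s := by
      refine aux_cs _ _ _ _ hr2 hs0 hrow2 (le_trans ?_ hxsq)
      rw [Fintype.sum_prod_type]
      exact Finset.single_le_sum (f := fun i => ∑ j, x (i, j) ^ 2)
        (fun i _ => Finset.sum_nonneg fun j _ => sq_nonneg _) (Finset.mem_univ a)
    have c3 : |∑ l : Fin p₁ × Fin p₂, (Δ₁ a l.1 * Δ₂ b l.2) * x l| ≤ r₁ * r₂ * Real.sqrt s := by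
      refine aux_cs _ _ _ _ (mul_nonneg hr1 hr2) hs0 ?_ hxsq
      simp only [mul_pow, Fintype.sum_prod_type]
      rw [← Finset.sum_mul_sum]
      exact mul_le_mul hrow1 hrow2 (Finset.sum_nonneg fun j _ => sq_nonneg _) (sq_nonneg _)
    rw [e]
    refine (abs_add_three _ _ _).trans ?_
    linarith
  have main : ∀ l, (x l = 1 → 0.5 < y l) ∧ (x l = -1 → y l < -0.5) ∧
      (x l = 0 → -0.5 < y l ∧ y l < 0.5) := by
    intro l
    obtain ⟨k1, k2⟩ := abs_le.1 (key l)
    obtain ⟨n1, n2⟩ := abs_lt.1 (hη l)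
    norm_num at k1 k2 n1 n2 ⊢
    refine ⟨fun h => ?_, fun h => ?_, fun h => ⟨?_, ?_⟩⟩ <;> rw [h] at k1 k2 <;> linarith
  refine ⟨main, ?_⟩
  funext l
  obtain ⟨m1, m2, m3⟩ := main l
  rcases hx l with h | h | h
  · simp only [h, if_pos (m1 h)]
  · have := m2 h
    have h' : ¬ (0.5 < y l) := by norm_num at this ⊢; linarith
    simp only [h, if_neg h', if_pos this]
  · obtain ⟨q1, q2⟩ := m3 h
    simp only [h, if_neg (not_lt.2 q2.le), if_neg (not_lt.2 q1.le)]

end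
end
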